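/- Let 0 < κ ≤ σ < 1. There exist c, ε, δ₀ ∈ (0,1], depending only on κ and σ, such that for all 0 < δ < δ₀ the following holds. Let A ⊆ ℝ be a finite union of δ-balls with vol(A) ≤ δ^{1−σ} satisfying vol(A ∩ B(x,r)) ≤ δ^{−ε} r^κ vol(A) for all x ∈ A and r ≥ δ. Let μ be a probability measure on [0,1] with μ(B(x,r)) ≤ δ^{−ε} r^κ for all x and r. Then there exists x ∈ supp μ with vol(A + xA) > δ^{−c} vol(A). -/

import Mathlib

open MeasureTheory
open scoped Pointwise ENNReal

/-- The support of a measure: points all of whose open neighbourhoods have positive measure. -/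
def msupport {X : Type*} [TopologicalSpace X] [MeasurableSpace X]
    (μ : Measure X) : Set X :=
  {x | ∀ U : Set X, IsOpen U → x ∈ U → 0 < μ U}

/-!
Suppose that `A + x • A` is not much larger than `A` for any `x` in the support of `μ`. By the
Plünnecke–Ruzsa inequalities every such `x` is an approximate multiplier of `A`: at all scales
above `δ`, replacing `A` by `x • A` in a sumset costs only a small power of `δ⁻¹`. Multipliers are
stable under sums, differences and products, so the elements of bounded ring expressions in the
support of `μ` are multipliers as well.

Since `μ` is non-concentrated, the quotients of such expressions are dense in `[0, 1]` at some
scale: otherwise the quotients could not be closed under `x ↦ x / 2` and `x ↦ (x + 1) / 2`, and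
each failure makes the covering numbers of the ring expressions grow, which cannot go on forever.
Hence `A + t • A` is small for a dense set of slopes `t ∈ [0, 1]`. Counting collisions of
projections of `A × A`, this forces the covering number of `A` to grow at almost the maximal rate
at every scale below one where `A` branches, which contradicts `vol A ≤ δ ^ (1 - σ)`.
-/

theorem card_Icc_floor_le {x y : ℝ} (h : x ≤ y + 1) :
    ((Finset.Icc ⌊x⌋ ⌊y⌋).card : ℝ) ≤ y - x + 2 := by
  have hx := Int.lt_floor_add_one x
  have hy := Int.floor_le y
  have hcard : ((⌊y⌋ + 1 - ⌊x⌋ : ℤ) : ℝ) ≤ y - x + 2 := by push_cast; linarith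
  rw [Int.card_Icc, ← Int.cast_natCast, Int.toNat_eq_max]
  push_cast at hcard ⊢
  exact max_le hcard (by linarith)

/-- The indices `k` of the grid cells `[k * r, (k + 1) * r)` that meet `Y`. -/
noncomputable def cellIndices (r : ℝ) (Y : Finset ℝ) : Finset ℤ := Y.image fun y ↦ ⌊y / r⌋

/-- The number of cells of the grid of side `r` that meet `Y`: up to a constant factor, the
covering number of `Y` at scale `r`. It is real-valued so that it can be compared with powers
of the scale. -/
noncomputable def cellCount (r : ℝ) (Y : Finset ℝ) : ℝ := (cellIndices r Y).card

section CellCount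

variable {r r' : ℝ} {Y Z : Finset ℝ}

theorem floor_mem_cellIndices {y : ℝ} (r : ℝ) (hy : y ∈ Y) : ⌊y / r⌋ ∈ cellIndices r Y :=
  Finset.mem_image_of_mem _ hy

theorem cellCount_nonneg (r : ℝ) (Y : Finset ℝ) : 0 ≤ cellCount r Y := Nat.cast_nonneg _

theorem cellCount_mono (h : Y ⊆ Z) : cellCount r Y ≤ cellCount r Z := by
  unfold cellCount
  exact_mod_cast Finset.card_le_card (Finset.image_subset_image h)

theorem one_le_cellCount (h : Y.Nonempty) : 1 ≤ cellCount r Y := by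
  unfold cellCount
  exact_mod_cast Finset.card_pos.2 (h.image _)

theorem cellCount_pos (h : Y.Nonempty) : 0 < cellCount r Y :=
  zero_lt_one.trans_le (one_le_cellCount h)

theorem cellCount_le_card (r : ℝ) (Y : Finset ℝ) : cellCount r Y ≤ Y.card := by
  unfold cellCount
  exact_mod_cast Finset.card_image_le

theorem cellCount_le_mul_of_cells {m : ℝ} (F : ℤ → Finset ℤ) (hF : ∀ k, ((F k).card : ℝ) ≤ m)
    (h : ∀ y ∈ Y, ∃ z ∈ Z, ⌊y / r⌋ ∈ F ⌊z / r'⌋) : cellCount r Y ≤ m * cellCount r' Z := by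
  have hsub : cellIndices r Y ⊆ (cellIndices r' Z).biUnion F := fun k hk ↦ by
    obtain ⟨y, hy, rfl⟩ := Finset.mem_image.1 hk
    obtain ⟨z, hz, hyz⟩ := h y hy
    exact Finset.mem_biUnion.2 ⟨_, floor_mem_cellIndices r' hz, hyz⟩
  calc cellCount r Y ≤ ((cellIndices r' Z).biUnion F).card := by
        unfold cellCount; exact_mod_cast Finset.card_le_card hsub
    _ ≤ ∑ k ∈ cellIndices r' Z, ((F k).card : ℝ) := by exact_mod_cast Finset.card_biUnion_le
    _ ≤ ∑ _k ∈ cellIndices r' Z, m := Finset.sum_le_sum fun k _ ↦ hF k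
    _ = m * cellCount r' Z := by rw [Finset.sum_const, nsmul_eq_mul, mul_comm, cellCount]

theorem cellCount_le_of_near {c e : ℝ} (hr : 0 < r) (hr' : 0 < r') (he : 0 ≤ e)
    (h : ∀ y ∈ Y, ∃ z ∈ Z, |y - (z + c)| ≤ e) :
    cellCount r Y ≤ ((r' + 2 * e) / r + 2) * cellCount r' Z := by
  refine cellCount_le_mul_of_cells
    (fun k ↦ Finset.Icc ⌊(k * r' + c - e) / r⌋ ⌊((k + 1) * r' + c + e) / r⌋) (fun k ↦ ?_) ?_
  · have hlen : ((k + 1) * r' + c + e) / r - (k * r' + c - e) / r = (r' + 2 * e) / r := by ring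
    have hpos : 0 ≤ (r' + 2 * e) / r := by positivity
    rw [← hlen]
    exact card_Icc_floor_le (by linarith)
  · intro y hy
    obtain ⟨z, hz, hyz⟩ := h y hy
    refine ⟨z, hz, ?_⟩
    have hlo := (le_div_iff₀ hr').1 (Int.floor_le (z / r'))
    have hhi := (div_lt_iff₀ hr').1 (Int.lt_floor_add_one (z / r'))
    rw [abs_le] at hyz
    rw [Finset.mem_Icc]
    constructor <;> gcongr <;> linarith

theorem cellCount_le_ratio_mul (hr : 0 < r) (hr' : 0 < r') (Y : Finset ℝ) :
    cellCount r Y ≤ (r' / r + 2) * cellCount r' Y := by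
  simpa using cellCount_le_of_near (c := 0) (e := 0) (Z := Y) hr hr' le_rfl
    fun y hy ↦ ⟨y, hy, by simp⟩

theorem cellCount_le_three_mul_of_le (hr' : 0 < r') (h : r' ≤ r) (Y : Finset ℝ) :
    cellCount r Y ≤ 3 * cellCount r' Y := by
  have hr : 0 < r := hr'.trans_le h
  refine (cellCount_le_ratio_mul hr hr' Y).trans ?_
  gcongr
  · exact cellCount_nonneg _ _
  · linarith [(div_le_one hr).2 h]

theorem cellCount_le_of_translate (hr : 0 < r) (c : ℝ) (h : ∀ y ∈ Y, y + c ∈ Z) :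
    cellCount r Y ≤ 3 * cellCount r Z := by
  refine (cellCount_le_of_near (c := -c) (e := 0) hr hr le_rfl
    fun y hy ↦ ⟨y + c, h y hy, by simp⟩).trans (le_of_eq ?_)
  field_simp
  ring

theorem cellCount_le_of_abs_le {B : ℝ} (hr : 0 < r) (hB : 0 ≤ B) (h : ∀ y ∈ Y, |y| ≤ B) :
    cellCount r Y ≤ 2 * B / r + 3 := by
  have hnear := cellCount_le_of_near (c := 0) (Z := {0}) hr hr hB
    fun y hy ↦ ⟨0, by simp, by simpa using h y hy⟩
  have hone : cellCount r {0} = 1 := by simp [cellCount, cellIndices]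
  rw [hone, mul_one, add_div, div_self hr.ne'] at hnear
  linarith

theorem cellCount_smul_of_pos {c : ℝ} (hc : 0 < c) (r : ℝ) (Y : Finset ℝ) :
    cellCount (c * r) (c • Y) = cellCount r Y := by
  unfold cellCount cellIndices
  rw [← Finset.image_smul, Finset.image_image]
  simp only [Function.comp_def, smul_eq_mul, mul_div_mul_left _ _ hc.ne']

theorem cellCount_neg_le (r : ℝ) (Y : Finset ℝ) : cellCount r (-Y) ≤ 3 * cellCount r Y := by
  refine cellCount_le_mul_of_cells (fun k ↦ Finset.Icc (-k - 2) (-k)) (fun k ↦ ?_) fun y hy ↦ ?_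
  · rw [Int.card_Icc]
    ring_nf
    norm_num
  · have hlo := Int.floor_le (-y / r)
    have hhi := Int.lt_floor_add_one (-y / r)
    refine ⟨-y, Finset.mem_neg'.1 hy, Finset.mem_Icc.2 ?_⟩
    rw [show y / r = -(-y / r) by ring]
    constructor
    · apply Int.le_floor.2
      push_cast
      linarith
    · apply Int.le_of_lt_add_one
      apply Int.floor_lt.2
      push_cast
      linarith

theorem cellCount_smul_le {c : ℝ} (hc : c ≠ 0) (r : ℝ) (Y : Finset ℝ) :
    cellCount (|c| * r) (c • Y) ≤ 3 * cellCount r Y := by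
  rcases lt_or_gt_of_ne hc with hneg | hpos
  · have hcY : c • Y = (-c) • (-Y) := by
      rw [Finset.smul_finset_neg, Finset.neg_smul_finset, neg_neg]
    rw [hcY, abs_of_neg hneg, cellCount_smul_of_pos (neg_pos.2 hneg)]
    exact cellCount_neg_le r Y
  · rw [abs_of_pos hpos, cellCount_smul_of_pos hpos]
    linarith [cellCount_nonneg r Y]

end CellCount

section SmallDoubling

open scoped Finset

variable {G : Type*} [AddCommGroup G] [DecidableEq G] {A B : Finset G} {K : ℝ}

theorem exists_petridis_subset (hA : A.Nonempty) (h : (#(A + B) : ℝ) ≤ K * #A) :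
    ∃ X ⊆ A, X.Nonempty ∧ ∀ C : Finset G, (#(C + X + B) : ℝ) ≤ K * #(C + X) := by
  have hAmem : A ∈ A.powerset.erase ∅ :=
    Finset.mem_erase_of_ne_of_mem hA.ne_empty (Finset.mem_powerset_self _)
  obtain ⟨X, hX, hmin⟩ := Finset.exists_min_image (A.powerset.erase ∅)
    (fun X : Finset G ↦ (#(X + B) : ℝ) / #X) ⟨A, hAmem⟩
  rw [Finset.mem_erase, Finset.mem_powerset] at hX
  have hXne : X.Nonempty := Finset.nonempty_iff_ne_empty.2 hX.1
  have hXpos : (0 : ℝ) < #X := by exact_mod_cast hXne.card_pos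
  have hApos : (0 : ℝ) < #A := by exact_mod_cast hA.card_pos
  refine ⟨X, hX.2, hXne, fun C ↦ le_of_mul_le_mul_right ?_ hXpos⟩
  have hXmin : ∀ Y ⊆ X, #(X + B) * #Y ≤ #(Y + B) * #X := by
    intro Y hY
    rcases Y.eq_empty_or_nonempty with rfl | hYne
    · simp
    · have hratio := hmin Y (Finset.mem_erase_of_ne_of_mem hYne.ne_empty
        (Finset.mem_powerset.2 (hY.trans hX.2)))
      have hYpos : (0 : ℝ) < #Y := by exact_mod_cast hYne.card_pos
      rw [div_le_div_iff₀ hXpos hYpos] at hratio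
      exact_mod_cast hratio
  have hXB : (#(X + B) : ℝ) ≤ K * #X :=
    (div_le_iff₀ hXpos).1 ((hmin A hAmem).trans ((div_le_iff₀ hApos).2 h))
  calc (#(C + X + B) : ℝ) * #X ≤ #(X + B) * #(C + X) := by
        exact_mod_cast Finset.pluennecke_petridis_inequality_add C hXmin
    _ ≤ K * #X * #(C + X) := by gcongr
    _ = K * #(C + X) * #X := by ring

theorem card_add_le_mul_card_add (hA : A.Nonempty) (hK : 0 ≤ K)
    (h : (#(A + B) : ℝ) ≤ K * #A) (C : Finset G) : (#(B + C) : ℝ) ≤ K * #(A + C) := by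
  obtain ⟨X, hXA, hX, hXC⟩ := exists_petridis_subset hA h
  calc (#(B + C) : ℝ) ≤ #(X + (B + C)) := by exact_mod_cast Finset.card_le_card_add_left hX
    _ = #(C + X + B) := by congr 2; abel
    _ ≤ K * #(C + X) := hXC C
    _ ≤ K * #(A + C) := by rw [add_comm C X]; gcongr

theorem card_add_add_le_sq_mul_card_add (hA : A.Nonempty) (hK : 0 ≤ K)
    (h : (#(A + A) : ℝ) ≤ K * #A) (C : Finset G) : (#(A + A + C) : ℝ) ≤ K ^ 2 * #(A + C) := by
  obtain ⟨X, hXA, hX, hXC⟩ := exists_petridis_subset hA h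
  calc (#(A + A + C) : ℝ) ≤ #(X + (A + A + C)) := by
        exact_mod_cast Finset.card_le_card_add_left hX
    _ = #((A + C) + X + A) := by congr 2; abel
    _ ≤ K * #((A + C) + X) := hXC _
    _ = K * #(C + X + A) := by congr 3; abel
    _ ≤ K * (K * #(C + X)) := by gcongr; exact hXC C
    _ ≤ K * (K * #(A + C)) := by rw [add_comm C X]; gcongr
    _ = K ^ 2 * #(A + C) := by ring

theorem card_add_pair_le (S : Finset G) (a b : G) : (#(S + {a, b}) : ℝ) ≤ 2 * #S := by
  have hcard : #(S + {a, b}) ≤ #S * 2 :=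
    Finset.card_add_le.trans (Nat.mul_le_mul_left _ Finset.card_le_two)
  rw [mul_comm]
  exact_mod_cast hcard

end SmallDoubling

section CellCountSumset

open scoped Finset

theorem floor_add_eq_or (x y : ℝ) : ⌊x + y⌋ = ⌊x⌋ + ⌊y⌋ ∨ ⌊x + y⌋ = ⌊x⌋ + ⌊y⌋ + 1 := by
  have hlo := Int.le_floor_add x y
  have hhi := Int.le_floor_add_floor x y
  lia

theorem cellIndices_add_subset (r : ℝ) (A C : Finset ℝ) :
    cellIndices r (A + C) ⊆ cellIndices r A + cellIndices r C + {0, 1} := by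
  intro k hk
  obtain ⟨y, hy, rfl⟩ := Finset.mem_image.1 hk
  obtain ⟨a, ha, c, hc, rfl⟩ := Finset.mem_add.1 hy
  refine Finset.mem_add.2 ⟨_, Finset.add_mem_add (floor_mem_cellIndices r ha)
    (floor_mem_cellIndices r hc), ⌊(a + c) / r⌋ - (⌊a / r⌋ + ⌊c / r⌋), ?_, by ring⟩
  rw [add_div, Finset.mem_insert, Finset.mem_singleton]
  have := floor_add_eq_or (a / r) (c / r)
  lia

theorem cellIndices_add_cellIndices_subset (r : ℝ) (A C : Finset ℝ) :
    cellIndices r A + cellIndices r C ⊆ cellIndices r (A + C) + {0, -1} := by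
  intro k hk
  obtain ⟨i, hi, j, hj, rfl⟩ := Finset.mem_add.1 hk
  obtain ⟨a, ha, rfl⟩ := Finset.mem_image.1 hi
  obtain ⟨c, hc, rfl⟩ := Finset.mem_image.1 hj
  refine Finset.mem_add.2 ⟨_, floor_mem_cellIndices r (Finset.add_mem_add ha hc),
    ⌊a / r⌋ + ⌊c / r⌋ - ⌊(a + c) / r⌋, ?_, by ring⟩
  rw [add_div, Finset.mem_insert, Finset.mem_singleton]
  have := floor_add_eq_or (a / r) (c / r)
  lia

theorem cellIndices_sub_subset (r : ℝ) (A C : Finset ℝ) :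
    cellIndices r (A - C) ⊆ cellIndices r A - cellIndices r C + {0, -1} := by
  intro k hk
  obtain ⟨y, hy, rfl⟩ := Finset.mem_image.1 hk
  obtain ⟨a, ha, c, hc, rfl⟩ := Finset.mem_sub.1 hy
  refine Finset.mem_add.2 ⟨_, Finset.sub_mem_sub (floor_mem_cellIndices r ha)
    (floor_mem_cellIndices r hc), ⌊(a - c) / r⌋ - (⌊a / r⌋ - ⌊c / r⌋), ?_, by ring⟩
  rw [Finset.mem_insert, Finset.mem_singleton]
  have := floor_add_eq_or ((a - c) / r) (c / r)
  rw [← add_div, sub_add_cancel] at this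
  lia

variable {r K : ℝ} {A B : Finset ℝ}

theorem cellCount_add_le (r : ℝ) (A C : Finset ℝ) :
    cellCount r (A + C) ≤ 2 * #(cellIndices r A + cellIndices r C) :=
  (Nat.cast_le.2 (Finset.card_le_card (cellIndices_add_subset r A C))).trans
    (card_add_pair_le _ _ _)

theorem card_cellIndices_add_le (r : ℝ) (A C : Finset ℝ) :
    (#(cellIndices r A + cellIndices r C) : ℝ) ≤ 2 * cellCount r (A + C) :=
  (Nat.cast_le.2 (Finset.card_le_card (cellIndices_add_cellIndices_subset r A C))).trans
    (card_add_pair_le _ _ _)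

theorem cellCount_sub_le (r : ℝ) (A C : Finset ℝ) :
    cellCount r (A - C) ≤ 2 * #(cellIndices r A - cellIndices r C) :=
  (Nat.cast_le.2 (Finset.card_le_card (cellIndices_sub_subset r A C))).trans
    (card_add_pair_le _ _ _)

theorem cellCount_add_le_mul_of_small (hA : A.Nonempty) (hK : 0 ≤ K)
    (h : cellCount r (A + B) ≤ K * cellCount r A) (C : Finset ℝ) :
    cellCount r (B + C) ≤ 8 * K * cellCount r (A + C) := by
  have hsmall : (#(cellIndices r A + cellIndices r B) : ℝ) ≤ 2 * K * #(cellIndices r A) := by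
    have := card_cellIndices_add_le r A B
    unfold cellCount at *
    linarith
  calc cellCount r (B + C) ≤ 2 * #(cellIndices r B + cellIndices r C) := cellCount_add_le r B C
    _ ≤ 2 * (2 * K * #(cellIndices r A + cellIndices r C)) := by
        gcongr
        exact card_add_le_mul_card_add (hA.image _) (by positivity) hsmall _
    _ ≤ 2 * (2 * K * (2 * cellCount r (A + C))) := by
        gcongr
        exact card_cellIndices_add_le r A C
    _ = 8 * K * cellCount r (A + C) := by ring

theorem cellCount_add_add_le_of_doubling (hA : A.Nonempty) (hK : 0 ≤ K)
    (h : cellCount r (A + A) ≤ K * cellCount r A) (C : Finset ℝ) :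
    cellCount r (A + A + C) ≤ 32 * K ^ 2 * cellCount r (A + C) := by
  have hsmall : (#(cellIndices r A + cellIndices r A) : ℝ) ≤ 2 * K * #(cellIndices r A) := by
    have := card_cellIndices_add_le r A A
    unfold cellCount at *
    linarith
  have hsub : cellIndices r A + cellIndices r (A + C)
      ⊆ cellIndices r A + cellIndices r A + (cellIndices r C + {0, 1}) :=
    (Finset.add_subset_add_left (cellIndices_add_subset r A C)).trans
      (by simp only [add_assoc, subset_refl])
  calc cellCount r (A + A + C) = cellCount r (A + (A + C)) := by rw [add_assoc]
    _ ≤ 2 * #(cellIndices r A + cellIndices r (A + C)) := cellCount_add_le r A (A + C)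
    _ ≤ 2 * #(cellIndices r A + cellIndices r A + (cellIndices r C + {0, 1})) := by gcongr
    _ ≤ 2 * ((2 * K) ^ 2 * #(cellIndices r A + (cellIndices r C + {0, 1}))) := by
        gcongr
        exact card_add_add_le_sq_mul_card_add (hA.image _) (by positivity) hsmall _
    _ ≤ 2 * ((2 * K) ^ 2 * (2 * #(cellIndices r A + cellIndices r C))) := by
        rw [← add_assoc]
        gcongr
        exact card_add_pair_le _ _ _
    _ ≤ 2 * ((2 * K) ^ 2 * (2 * (2 * cellCount r (A + C)))) := by
        gcongr
        exact card_cellIndices_add_le r A C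
    _ = 32 * K ^ 2 * cellCount r (A + C) := by ring

theorem cellCount_ruzsa_triangle (r : ℝ) (A B C : Finset ℝ) :
    cellCount r (A + C) * cellCount r B ≤ 8 * (cellCount r (A + B) * cellCount r (B + C)) := by
  calc cellCount r (A + C) * cellCount r B
      ≤ 2 * #(cellIndices r A + cellIndices r C) * #(cellIndices r B) := by
        rw [cellCount.eq_1 r B]
        gcongr
        exact cellCount_add_le r A C
    _ = 2 * (#(cellIndices r A + cellIndices r C) * #(cellIndices r B)) := by ring
    _ ≤ 2 * (#(cellIndices r A + cellIndices r B) * #(cellIndices r B + cellIndices r C)) := by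
        refine mul_le_mul_of_nonneg_left ?_ zero_le_two
        exact_mod_cast Finset.ruzsa_triangle_inequality_add_add_add _ _ _
    _ ≤ 2 * (2 * cellCount r (A + B) * (2 * cellCount r (B + C))) := by
        have := cellCount_nonneg r (A + B)
        gcongr <;> exact card_cellIndices_add_le r _ _
    _ = 8 * (cellCount r (A + B) * cellCount r (B + C)) := by ring

theorem cellCount_sub_self_le (r : ℝ) (A : Finset ℝ) :
    cellCount r (A - A) * cellCount r A ≤ 8 * cellCount r (A + A) ^ 2 := by
  calc cellCount r (A - A) * cellCount r A
      ≤ 2 * #(cellIndices r A - cellIndices r A) * #(cellIndices r A) := by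
        rw [cellCount.eq_1 r A]
        gcongr
        exact cellCount_sub_le r A A
    _ = 2 * (#(cellIndices r A - cellIndices r A) * #(cellIndices r A)) := by ring
    _ ≤ 2 * (#(cellIndices r A + cellIndices r A) * #(cellIndices r A + cellIndices r A)) := by
        refine mul_le_mul_of_nonneg_left ?_ zero_le_two
        exact_mod_cast Finset.ruzsa_triangle_inequality_sub_add_add _ _ _
    _ ≤ 2 * (2 * cellCount r (A + A) * (2 * cellCount r (A + A))) := by
        have := cellCount_nonneg r (A + A)
        gcongr <;> exact card_cellIndices_add_le r _ _
    _ = 8 * cellCount r (A + A) ^ 2 := by ring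

end CellCountSumset

section Separation

open scoped Finset

variable {r q : ℝ}

theorem abs_sub_lt_of_floor_div_eq {x y : ℝ} (hq : 0 < q) (h : ⌊x / q⌋ = ⌊y / q⌋) :
    |x - y| < q := by
  have hlt := Int.abs_sub_lt_one_of_floor_eq_floor h
  rwa [← sub_div, abs_div, abs_of_pos hq, div_lt_one hq] at hlt

theorem mul_le_abs_sub_of_le_abs_floor_sub {x y : ℝ} {m : ℤ} (hq : 0 < q)
    (h : m ≤ |⌊x / q⌋ - ⌊y / q⌋|) : (m - 1) * q ≤ |x - y| := by
  have hx := Int.floor_le (x / q)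
  have hx' := Int.lt_floor_add_one (x / q)
  have hy := Int.floor_le (y / q)
  have hy' := Int.lt_floor_add_one (y / q)
  have hm : (m : ℝ) ≤ |(⌊x / q⌋ : ℝ) - ⌊y / q⌋| := by exact_mod_cast h
  have hdiv : (m : ℝ) - 1 ≤ |x / q - y / q| := by
    rcases le_abs.1 hm with hpos | hneg
    · exact le_abs.2 (Or.inl (by linarith))
    · exact le_abs.2 (Or.inr (by linarith))
  rwa [← sub_div, abs_div, abs_of_pos hq, le_div_iff₀ hq] at hdiv

theorem cellCount_eq_card_of_injOn {Y : Finset ℝ} (h : Set.InjOn (fun y ↦ ⌊y / r⌋) (Y : Set ℝ)) :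
    cellCount r Y = #Y := by
  rw [cellCount, cellIndices, Finset.card_image_of_injOn h]

theorem exists_cell_transversal (r : ℝ) (Y : Finset ℝ) :
    ∃ P ⊆ Y, cellIndices r P = cellIndices r Y ∧ cellCount r Y = #P ∧
      Set.InjOn (fun y ↦ ⌊y / r⌋) (P : Set ℝ) := by
  obtain ⟨S, hSY, hS⟩ := (Y : Set ℝ).exists_subset_bijOn fun y ↦ ⌊y / r⌋
  lift S to Finset ℝ using Y.finite_toSet.subset hSY
  have hcells : cellIndices r S = cellIndices r Y :=
    Finset.coe_inj.1 ((Finset.coe_image.trans hS.image_eq).trans Finset.coe_image.symm)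
  refine ⟨S, by exact_mod_cast hSY, hcells, ?_, hS.injOn⟩
  rw [← cellCount_eq_card_of_injOn hS.injOn, cellCount, cellCount, hcells]

theorem exists_separated_subset (hq : 0 < q) (Y : Finset ℝ) {m : ℕ} (hm : 1 ≤ m) :
    ∃ P ⊆ Y, cellCount q Y ≤ m * #P ∧
      ∀ p ∈ P, ∀ p' ∈ P, p ≠ p' → ((m : ℝ) - 1) * q ≤ |p - p'| := by
  obtain ⟨P, hPY, -, hcard, hinj⟩ := exists_cell_transversal q Y
  have hm0 : (0 : ℤ) < m := by exact_mod_cast hm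
  obtain ⟨c, -, hc⟩ := Finset.exists_le_card_fiber_of_nsmul_le_card_of_maps_to
    (s := P) (t := Finset.Ico (0 : ℤ) m) (f := fun y ↦ ⌊y / q⌋ % (m : ℤ)) (b := (#P : ℝ) / m)
    (fun _ _ ↦ Finset.mem_Ico.2 ⟨Int.emod_nonneg _ hm0.ne', Int.emod_lt_of_pos _ hm0⟩)
    ⟨0, Finset.mem_Ico.2 ⟨le_rfl, hm0⟩⟩
    (by rw [Int.card_Ico, nsmul_eq_mul]; simp; field_simp; rfl)
  refine ⟨{p ∈ P | ⌊p / q⌋ % (m : ℤ) = c}, (Finset.filter_subset _ _).trans hPY, ?_, ?_⟩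
  · rw [hcard, mul_comm, ← div_le_iff₀ (by exact_mod_cast hm)]
    exact hc
  · intro p hp p' hp' hne
    obtain ⟨hpP, hpc⟩ := Finset.mem_filter.1 hp
    obtain ⟨hpP', hpc'⟩ := Finset.mem_filter.1 hp'
    have hdvd : (m : ℤ) ∣ ⌊p / q⌋ - ⌊p' / q⌋ := Int.ModEq.dvd (hpc'.trans hpc.symm)
    have hcell : ⌊p / q⌋ - ⌊p' / q⌋ ≠ 0 := sub_ne_zero.2 fun heq ↦ hne (hinj hpP hpP' heq)
    exact_mod_cast mul_le_abs_sub_of_le_abs_floor_sub hq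
      (Int.le_of_dvd (abs_pos.2 hcell) ((dvd_abs _ _).2 hdvd))

theorem card_mul_cellCount_le_of_separated (hr : 0 < r) (P Z : Finset ℝ)
    (h : ∀ p ∈ P, ∀ p' ∈ P, p ≠ p' → ∀ z ∈ Z, ∀ z' ∈ Z, r ≤ |p + z - (p' + z')|) :
    #P * cellCount r Z ≤ 3 * cellCount r (P + Z) := by
  have hsub : P.biUnion (fun p ↦ cellIndices r ({p} + Z)) ⊆ cellIndices r (P + Z) :=
    Finset.biUnion_subset.2 fun p hp ↦ Finset.image_subset_image
      (Finset.add_subset_add_right (Finset.singleton_subset_iff.2 hp))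
  have hdisj : (P : Set ℝ).PairwiseDisjoint (fun p ↦ cellIndices r ({p} + Z)) := by
    intro p hp p' hp' hne
    rw [Function.onFun, Finset.disjoint_left]
    intro k hk hk'
    simp only [cellIndices, Finset.singleton_add, Finset.mem_image, Finset.mem_vadd_finset,
      exists_exists_and_eq_and, vadd_eq_add] at hk hk'
    obtain ⟨z, hz, rfl⟩ := hk
    obtain ⟨z', hz', heq⟩ := hk'
    exact (h p hp p' hp' hne z hz z' hz').not_gt (abs_sub_lt_of_floor_div_eq hr heq.symm)
  have htranslate (p : ℝ) : cellCount r Z ≤ 3 * cellCount r ({p} + Z) :=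
    cellCount_le_of_translate hr p fun z hz ↦ by
      rw [add_comm z p]
      exact Finset.add_mem_add (Finset.mem_singleton_self p) hz
  calc #P * cellCount r Z = ∑ _p ∈ P, cellCount r Z := by rw [Finset.sum_const, nsmul_eq_mul]
    _ ≤ ∑ p ∈ P, 3 * cellCount r ({p} + Z) := Finset.sum_le_sum fun p _ ↦ htranslate p
    _ = 3 * #(P.biUnion fun p ↦ cellIndices r ({p} + Z)) := by
        rw [← Finset.mul_sum, Finset.card_biUnion hdisj]
        simp only [cellCount, Nat.cast_sum]
    _ ≤ 3 * cellCount r (P + Z) := by unfold cellCount; gcongr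

theorem cellCount_mul_cellCount_le {l : ℝ} (hr : 0 < r) (hq : 0 < q) (Y Z : Finset ℝ) {m : ℕ}
    (hm : 1 ≤ m) (hZ : ∀ z ∈ Z, ∀ z' ∈ Z, |z - z'| ≤ l) (hl : l + r ≤ ((m : ℝ) - 1) * q) :
    cellCount q Y * cellCount r Z ≤ 3 * m * cellCount r (Y + Z) := by
  obtain ⟨P, hPY, hcard, hsep⟩ := exists_separated_subset hq Y hm
  have hPZ : #P * cellCount r Z ≤ 3 * cellCount r (P + Z) := by
    refine card_mul_cellCount_le_of_separated hr P Z fun p hp p' hp' hne z hz z' hz' ↦ ?_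
    have htri : |p - p'| ≤ |p + z - (p' + z')| + |z - z'| := by
      rw [show p - p' = p + z - (p' + z') - (z - z') by ring]
      exact abs_sub _ _
    linarith [hsep p hp p' hp' hne, hZ z hz z' hz']
  have hZ0 := cellCount_nonneg r Z
  calc cellCount q Y * cellCount r Z ≤ m * #P * cellCount r Z := by gcongr
    _ = m * (#P * cellCount r Z) := by ring
    _ ≤ m * (3 * cellCount r (P + Z)) := by gcongr
    _ ≤ m * (3 * cellCount r (Y + Z)) := by
        gcongr
        exact cellCount_mono (Finset.add_subset_add_right hPY)
    _ = 3 * m * cellCount r (Y + Z) := by ring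

theorem exists_subset_cell (r : ℝ) (hq : 0 < q) {A : Finset ℝ} (hA : A.Nonempty) :
    ∃ A' ⊆ A, A'.Nonempty ∧ (∀ a ∈ A', ∀ a' ∈ A', |a - a'| ≤ q) ∧
      cellCount r A ≤ cellCount q A * cellCount r A' := by
  let fiber (k : ℤ) : Finset ℝ := {a ∈ A | ⌊a / q⌋ = k}
  obtain ⟨k, hk, hmax⟩ := Finset.exists_max_image (cellIndices q A)
    (fun k ↦ cellCount r (fiber k)) (hA.image _)
  refine ⟨fiber k, Finset.filter_subset _ _, ?_, fun a ha a' ha' ↦ ?_, ?_⟩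
  · obtain ⟨a, ha, rfl⟩ := Finset.mem_image.1 hk
    exact ⟨a, Finset.mem_filter.2 ⟨ha, rfl⟩⟩
  · exact (abs_sub_lt_of_floor_div_eq hq
      ((Finset.mem_filter.1 ha).2.trans (Finset.mem_filter.1 ha').2.symm)).le
  · have hsub : cellIndices r A ⊆ (cellIndices q A).biUnion fun k ↦ cellIndices r (fiber k) := by
      intro j hj
      obtain ⟨a, ha, rfl⟩ := Finset.mem_image.1 hj
      exact Finset.mem_biUnion.2 ⟨⌊a / q⌋, floor_mem_cellIndices q ha,
        floor_mem_cellIndices r (Finset.mem_filter.2 ⟨ha, rfl⟩)⟩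
    calc cellCount r A ≤ ∑ k ∈ cellIndices q A, cellCount r (fiber k) := by
          unfold cellCount
          exact_mod_cast (Finset.card_le_card hsub).trans Finset.card_biUnion_le
      _ ≤ ∑ _k ∈ cellIndices q A, cellCount r (fiber k) := Finset.sum_le_sum hmax
      _ = cellCount q A * cellCount r (fiber k) := by
          rw [Finset.sum_const, nsmul_eq_mul, cellCount.eq_1 q]

end Separation

section Multiplier

/-- `x` multiplies `A` with constant `K` down to scale `D`: at all scales `r ≥ D`, replacing the
summand `A` by its dilate `x • A` increases the cell count of any sumset `A + C` by a factor of at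
most `K`. -/
def IsMultiplier (A : Finset ℝ) (D K x : ℝ) : Prop :=
  ∀ r, D ≤ r → ∀ C : Finset ℝ, cellCount r (x • A + C) ≤ K * cellCount r (A + C)

variable {A B : Finset ℝ} {δ D K x y : ℝ}

theorem IsMultiplier.mono {D' K' : ℝ} (h : IsMultiplier A D K x) (hD : D ≤ D') (hK : K ≤ K') :
    IsMultiplier A D' K' x := fun r hr C ↦
  (h r (hD.trans hr) C).trans (mul_le_mul_of_nonneg_right hK (cellCount_nonneg _ _))

theorem isMultiplier_one (A : Finset ℝ) (D : ℝ) : IsMultiplier A D 1 1 := fun r _ C ↦ by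
  rw [one_smul, one_mul]

theorem isMultiplier_zero (hA : A.Nonempty) (hD : 0 < D) : IsMultiplier A D 3 0 := by
  intro r hr C
  obtain ⟨a, ha⟩ := hA
  refine cellCount_le_of_translate (hD.trans_le hr) a fun y hy ↦ ?_
  obtain ⟨z, hz, c, hc, rfl⟩ := Finset.mem_add.1 hy
  obtain ⟨a', _, rfl⟩ := Finset.mem_smul_finset.1 hz
  rw [zero_smul, zero_add, add_comm c a]
  exact Finset.add_mem_add ha hc

theorem IsMultiplier.add {K' L : ℝ} (hK : 0 ≤ K) (hK' : 0 ≤ K')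
    (hA : ∀ r, D ≤ r → ∀ C, cellCount r (A + A + C) ≤ L * cellCount r (A + C))
    (hx : IsMultiplier A D K x) (hy : IsMultiplier A D K' y) :
    IsMultiplier A D (K * K' * L) (x + y) := by
  intro r hr C
  have hsub : (x + y) • A + C ⊆ x • A + (y • A + C) := by
    intro z hz
    obtain ⟨u, hu, c, hc, rfl⟩ := Finset.mem_add.1 hz
    obtain ⟨a, ha, rfl⟩ := Finset.mem_smul_finset.1 hu
    rw [add_smul, add_assoc]
    exact Finset.add_mem_add (Finset.smul_mem_smul_finset ha)
      (Finset.add_mem_add (Finset.smul_mem_smul_finset ha) hc)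
  calc cellCount r ((x + y) • A + C) ≤ cellCount r (x • A + (y • A + C)) := cellCount_mono hsub
    _ ≤ K * cellCount r (A + (y • A + C)) := hx r hr _
    _ = K * cellCount r (y • A + (A + C)) := by rw [add_left_comm]
    _ ≤ K * (K' * cellCount r (A + (A + C))) := by gcongr; exact hy r hr _
    _ ≤ K * (K' * (L * cellCount r (A + C))) := by
        gcongr
        rw [← add_assoc]
        exact hA r hr C
    _ = K * K' * L * cellCount r (A + C) := by ring

theorem cellCount_add_smul_le (hx : x ≠ 0) (r : ℝ) (B C : Finset ℝ) :
    cellCount r (x • B + C) ≤ 3 * cellCount (r / |x|) (B + x⁻¹ • C) := by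
  have hsum : x • B + C = x • (B + x⁻¹ • C) := by
    rw [smul_add, smul_smul, mul_inv_cancel₀ hx, one_smul]
  rw [hsum]
  convert cellCount_smul_le hx (r / |x|) (B + x⁻¹ • C)
  field_simp

theorem IsMultiplier.mul {K' b : ℝ} (hA : A.Nonempty) (hD : 0 < D) (hb : 1 ≤ b) (hxb : |x| ≤ b)
    (hK : 1 ≤ K) (hK' : 1 ≤ K') (hx : IsMultiplier A D K x) (hy : IsMultiplier A D K' y) :
    IsMultiplier A (b * D) (9 * K * K') (x * y) := by
  have hDb : D ≤ b * D := le_mul_of_one_le_left hD.le hb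
  rcases eq_or_ne x 0 with rfl | hx0
  · rw [zero_mul]
    exact (isMultiplier_zero hA hD).mono hDb (by nlinarith)
  intro r hr C
  have hxpos : 0 < |x| := abs_pos.2 hx0
  have hDr : D ≤ r / |x| := by
    rw [le_div_iff₀ hxpos]
    nlinarith
  have hback : cellCount (r / |x|) (A + x⁻¹ • C) ≤ 3 * cellCount r (x • A + C) := by
    rw [add_comm, add_comm (x • A)]
    simpa [div_div_eq_mul_div, hxpos.ne'] using
      cellCount_add_smul_le (inv_ne_zero hx0) (r / |x|) C A
  calc cellCount r ((x * y) • A + C) = cellCount r (x • (y • A) + C) := by rw [mul_smul]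
    _ ≤ 3 * cellCount (r / |x|) (y • A + x⁻¹ • C) := cellCount_add_smul_le hx0 r _ C
    _ ≤ 3 * (K' * cellCount (r / |x|) (A + x⁻¹ • C)) := by gcongr; exact hy _ hDr _
    _ ≤ 3 * (K' * (3 * cellCount r (x • A + C))) := by gcongr
    _ ≤ 3 * (K' * (3 * (K * cellCount r (A + C)))) := by gcongr; exact hx r (hDb.trans hr) C
    _ = 9 * K * K' * cellCount r (A + C) := by ring

theorem cellCount_add_le_of_finer_scale (hδ : 0 < δ) (hA : A.Nonempty)
    (h : cellCount δ (A + B + A) ≤ K * cellCount δ A) {r : ℝ} (hr : δ ≤ r) :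
    cellCount r (A + B) ≤ 9 * K * cellCount r A := by
  have hr0 : 0 < r := hδ.trans_le hr
  obtain ⟨A', hA', hne, hdiam, hmax⟩ := exists_subset_cell δ hr0 hA
  have hsep := cellCount_mul_cellCount_le (l := r) hδ hr0 (A + B) A' (m := 3) (by norm_num) hdiam
    (by push_cast; linarith)
  have hK : 0 ≤ K := nonneg_of_mul_nonneg_left ((cellCount_nonneg _ _).trans h) (cellCount_pos hA)
  refine le_of_mul_le_mul_right ?_ (cellCount_pos (r := δ) hne)
  calc cellCount r (A + B) * cellCount δ A' ≤ 3 * (3 : ℕ) * cellCount δ (A + B + A') := hsep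
    _ ≤ 3 * (3 : ℕ) * cellCount δ (A + B + A) := by
        gcongr
        exact cellCount_mono (Finset.add_subset_add_left hA')
    _ ≤ 3 * (3 : ℕ) * (K * (cellCount r A * cellCount δ A')) := by
        gcongr
        exact h.trans (mul_le_mul_of_nonneg_left hmax hK)
    _ = 9 * K * cellCount r A * cellCount δ A' := by push_cast; ring

theorem cellCount_add_self_le_of_add_smul {x₀ : ℝ} (hδ : 0 < δ) (hK : 100 ≤ K) (hA : A.Nonempty)
    (hx₀ : 1 / K ≤ x₀) (h : cellCount δ (A + x₀ • A) ≤ K * cellCount δ A) :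
    cellCount δ (A + A) ≤ K ^ 4 * cellCount δ A := by
  have hK0 : 0 < K := by linarith
  have hx₀pos : 0 < x₀ := lt_of_lt_of_le (by positivity) hx₀
  have hNA : 0 < cellCount δ A := cellCount_pos hA
  have hdil : cellCount δ A ≤ 3 * K * cellCount δ (x₀ • A) := by
    have hfine := cellCount_le_ratio_mul (r := x₀ * δ) (r' := δ) (by positivity) hδ (x₀ • A)
    rw [cellCount_smul_of_pos hx₀pos] at hfine
    have hratio : δ / (x₀ * δ) ≤ K := by
      rw [div_le_iff₀ (by positivity)]
      rw [div_le_iff₀ hK0] at hx₀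
      nlinarith
    refine hfine.trans ?_
    gcongr
    · exact cellCount_nonneg _ _
    · linarith
  have hruzsa := cellCount_ruzsa_triangle δ A (x₀ • A) A
  rw [add_comm (x₀ • A) A] at hruzsa
  refine le_of_mul_le_mul_right (?_ : _ ≤ K ^ 4 * cellCount δ A * cellCount δ A) hNA
  calc cellCount δ (A + A) * cellCount δ A
      ≤ cellCount δ (A + A) * (3 * K * cellCount δ (x₀ • A)) := by
        gcongr
        exact cellCount_nonneg _ _
    _ = 3 * K * (cellCount δ (A + A) * cellCount δ (x₀ • A)) := by ring
    _ ≤ 3 * K * (8 * (cellCount δ (A + x₀ • A) * cellCount δ (A + x₀ • A))) := by gcongr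
    _ ≤ 3 * K * (8 * ((K * cellCount δ A) * (K * cellCount δ A))) := by
        have := cellCount_nonneg δ (A + x₀ • A)
        gcongr
    _ = 24 * K ^ 3 * cellCount δ A * cellCount δ A := by ring
    _ ≤ K * K ^ 3 * cellCount δ A * cellCount δ A := by gcongr; linarith
    _ = K ^ 4 * cellCount δ A * cellCount δ A := by ring

end Multiplier

/-- The situation of an `A` on which all dilations by elements of `X ⊆ [0, 1]` act with a constant
controlled by `K`, at all scales from `δ` on. The exponent `30` is the one produced by
`MultiplierSystem.of_cellCount_add_smul_le`. -/
structure MultiplierSystem (A : Finset ℝ) (δ K : ℝ) (X : Finset ℝ) : Prop where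
  nonempty : A.Nonempty
  scale_pos : 0 < δ
  hundred_le : 100 ≤ K
  mem_Icc : ∀ x ∈ X, x ∈ Set.Icc (0 : ℝ) 1
  cellCount_add_add_le :
    ∀ r, δ ≤ r → ∀ C, cellCount r (A + A + C) ≤ K ^ 30 * cellCount r (A + C)
  isMultiplier : ∀ x ∈ X, IsMultiplier A δ (K ^ 30) x

namespace MultiplierSystem

variable {A X : Finset ℝ} {δ K : ℝ}

theorem of_cellCount_add_smul_le {x₀ : ℝ} (hA : A.Nonempty) (hδ : 0 < δ) (hK : 100 ≤ K)
    (hX : ∀ x ∈ X, x ∈ Set.Icc (0 : ℝ) 1) (hx₀ : x₀ ∈ X) (hx₀K : 1 / K ≤ x₀)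
    (h : ∀ x ∈ X, cellCount δ (A + x • A) ≤ K * cellCount δ A) : MultiplierSystem A δ K X := by
  have hpow4 : (100000000 : ℝ) ≤ K ^ 4 :=
    le_trans (by norm_num) (pow_le_pow_left₀ (by norm_num) hK 4)
  have hK1 : 1 ≤ K := by linarith
  have hdouble := cellCount_add_self_le_of_add_smul hδ hK hA hx₀K (h x₀ hx₀)
  have habsorb (C : Finset ℝ) : cellCount δ (A + A + C) ≤ 32 * (K ^ 4) ^ 2 * cellCount δ (A + C) :=
    cellCount_add_add_le_of_doubling hA (by positivity) hdouble C
  refine ⟨hA, hδ, hK, hX, fun r hr C ↦ ?_, fun x hx r hr C ↦ ?_⟩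
  · have htriple : cellCount δ (A + A + A) ≤ 32 * K ^ 12 * cellCount δ A :=
      calc cellCount δ (A + A + A) ≤ 32 * (K ^ 4) ^ 2 * cellCount δ (A + A) := habsorb A
        _ ≤ 32 * (K ^ 4) ^ 2 * (K ^ 4 * cellCount δ A) := by gcongr
        _ = 32 * K ^ 12 * cellCount δ A := by ring
    refine (cellCount_add_add_le_of_doubling hA (by positivity)
      (cellCount_add_le_of_finer_scale hδ hA htriple hr) C).trans ?_
    gcongr
    · exact cellCount_nonneg _ _
    calc 32 * (9 * (32 * K ^ 12)) ^ 2 = 2654208 * K ^ 24 := by ring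
      _ ≤ K ^ 4 * K ^ 26 := by gcongr <;> linarith
      _ = K ^ 30 := by ring
  · have htriple : cellCount δ (A + x • A + A) ≤ 32 * K ^ 9 * cellCount δ A :=
      calc cellCount δ (A + x • A + A) = cellCount δ (A + A + x • A) := by rw [add_right_comm]
        _ ≤ 32 * (K ^ 4) ^ 2 * cellCount δ (A + x • A) := habsorb _
        _ ≤ 32 * (K ^ 4) ^ 2 * (K * cellCount δ A) := by gcongr; exact h x hx
        _ = 32 * K ^ 9 * cellCount δ A := by ring
    refine (cellCount_add_le_mul_of_small hA (by positivity)
      (cellCount_add_le_of_finer_scale hδ hA htriple hr) C).trans ?_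
    gcongr
    · exact cellCount_nonneg _ _
    calc 8 * (9 * (32 * K ^ 9)) = 2304 * K ^ 9 := by ring
      _ ≤ K ^ 4 * K ^ 26 := by gcongr <;> linarith
      _ = K ^ 30 := by ring

theorem isMultiplier_neg_one (h : MultiplierSystem A δ K X) : IsMultiplier A δ (K ^ 61) (-1) := by
  intro r hr C
  have hK := h.hundred_le
  have hdouble : cellCount r (A + A) ≤ K ^ 30 * cellCount r A := by
    simpa using h.cellCount_add_add_le r hr 0
  have hsub : cellCount r (A + (-1 : ℝ) • A) ≤ 8 * K ^ 60 * cellCount r A := by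
    rw [Finset.neg_smul_finset, one_smul, ← sub_eq_add_neg]
    refine le_of_mul_le_mul_right ?_ (cellCount_pos (r := r) h.nonempty)
    calc cellCount r (A - A) * cellCount r A ≤ 8 * cellCount r (A + A) ^ 2 :=
          cellCount_sub_self_le r A
      _ ≤ 8 * (K ^ 30 * cellCount r A) ^ 2 := by
          have := cellCount_nonneg r (A + A)
          gcongr
      _ = 8 * K ^ 60 * cellCount r A * cellCount r A := by ring
  refine (cellCount_add_le_mul_of_small h.nonempty (by positivity) hsub C).trans ?_
  gcongr
  · exact cellCount_nonneg _ _
  calc 8 * (8 * K ^ 60) = 64 * K ^ 60 := by ring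
    _ ≤ K * K ^ 60 := by gcongr; linarith
    _ = K ^ 61 := by ring

end MultiplierSystem

section RingIterate

/-- Finite approximations to the ring generated by `X`: starting from `X ∪ {0, 1}`, each step
`T ↦ T + T * T - T * T` performs one addition, one multiplication and one subtraction. -/
noncomputable def ringIterate (X : Finset ℝ) : ℕ → Finset ℝ
  | 0 => X ∪ {0, 1}
  | k + 1 => ringIterate X k + ringIterate X k * ringIterate X k -
      ringIterate X k * ringIterate X k

/-- A bound for the absolute values of the elements of `ringIterate X k` when `X ⊆ [0, 1]`. -/
def ringIterateBound : ℕ → ℝ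
  | 0 => 1
  | k + 1 => 3 * ringIterateBound k ^ 2

theorem one_le_ringIterateBound : ∀ k, 1 ≤ ringIterateBound k
  | 0 => le_rfl
  | k + 1 => by
    have := one_le_ringIterateBound k
    simp only [ringIterateBound]
    nlinarith

variable {A X : Finset ℝ} {δ K : ℝ} {k : ℕ}

theorem mem_ringIterate_succ {a b c d e : ℝ} (ha : a ∈ ringIterate X k) (hb : b ∈ ringIterate X k)
    (hc : c ∈ ringIterate X k) (hd : d ∈ ringIterate X k) (he : e ∈ ringIterate X k) :
    a + b * c - d * e ∈ ringIterate X (k + 1) :=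
  Finset.sub_mem_sub (Finset.add_mem_add ha (Finset.mul_mem_mul hb hc)) (Finset.mul_mem_mul hd he)

theorem exists_of_mem_ringIterate_succ {x : ℝ} (h : x ∈ ringIterate X (k + 1)) :
    ∃ a ∈ ringIterate X k, ∃ b ∈ ringIterate X k, ∃ c ∈ ringIterate X k, ∃ d ∈ ringIterate X k,
      ∃ e ∈ ringIterate X k, x = a + b * c - d * e := by
  obtain ⟨u, hu, v, hv, rfl⟩ := Finset.mem_sub.1 h
  obtain ⟨a, ha, w, hw, rfl⟩ := Finset.mem_add.1 hu
  obtain ⟨b, hb, c, hc, rfl⟩ := Finset.mem_mul.1 hw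
  obtain ⟨d, hd, e, he, rfl⟩ := Finset.mem_mul.1 hv
  exact ⟨a, ha, b, hb, c, hc, d, hd, e, he, rfl⟩

theorem zero_mem_ringIterate (X : Finset ℝ) : ∀ k, (0 : ℝ) ∈ ringIterate X k
  | 0 => by simp [ringIterate]
  | k + 1 => by
    have h := zero_mem_ringIterate X k
    simpa using mem_ringIterate_succ h h h h h

theorem ringIterate_subset_succ (X : Finset ℝ) (k : ℕ) :
    ringIterate X k ⊆ ringIterate X (k + 1) := fun x hx ↦ by
  have h := zero_mem_ringIterate X k
  simpa using mem_ringIterate_succ hx h h h h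

theorem ringIterate_mono (X : Finset ℝ) : Monotone (ringIterate X) :=
  monotone_nat_of_le_succ (ringIterate_subset_succ X)

theorem one_mem_ringIterate (X : Finset ℝ) (k : ℕ) : (1 : ℝ) ∈ ringIterate X k :=
  ringIterate_mono X k.zero_le (by simp [ringIterate])

theorem abs_le_ringIterateBound (hX : ∀ x ∈ X, x ∈ Set.Icc (0 : ℝ) 1) :
    ∀ k, ∀ x ∈ ringIterate X k, |x| ≤ ringIterateBound k
  | 0 => fun x hx ↦ by
    simp only [ringIterate, Finset.mem_union, Finset.mem_insert, Finset.mem_singleton] at hx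
    simp only [ringIterateBound]
    rcases hx with hx | rfl | rfl
    · rw [abs_of_nonneg (hX x hx).1]
      exact (hX x hx).2
    · simp
    · simp
  | k + 1 => fun x hx ↦ by
    have ih := abs_le_ringIterateBound hX k
    have hone := one_le_ringIterateBound k
    have hmul : ∀ b ∈ ringIterate X k, ∀ c ∈ ringIterate X k,
        |b * c| ≤ ringIterateBound k * ringIterateBound k := fun b hb c hc ↦ by
      rw [abs_mul]
      gcongr
      exacts [ih b hb, ih c hc]
    obtain ⟨a, ha, b, hb, c, hc, d, hd, e, he, rfl⟩ := exists_of_mem_ringIterate_succ hx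
    calc |a + b * c - d * e| ≤ |a| + |b * c| + |d * e| :=
          (abs_sub _ _).trans (by gcongr; exact abs_add_le _ _)
      _ ≤ ringIterateBound k + ringIterateBound k * ringIterateBound k +
          ringIterateBound k * ringIterateBound k :=
        add_le_add_three (ih a ha) (hmul b hb c hc) (hmul d hd e he)
      _ ≤ 3 * ringIterateBound k ^ 2 := by nlinarith

theorem MultiplierSystem.isMultiplier_of_mem_zero (h : MultiplierSystem A δ K X) :
    ∀ x ∈ ringIterate X 0, IsMultiplier A δ (K ^ 30) x := by
  intro x hx
  have hK := h.hundred_le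
  have hpow : 3 ≤ K ^ 30 :=
    (by linarith : 3 ≤ K).trans (le_self_pow₀ (by linarith) (by norm_num))
  simp only [ringIterate, Finset.mem_union, Finset.mem_insert, Finset.mem_singleton] at hx
  rcases hx with hx | rfl | rfl
  · exact h.isMultiplier x hx
  · exact (isMultiplier_zero h.nonempty h.scale_pos).mono le_rfl hpow
  · exact (isMultiplier_one A δ).mono le_rfl (by linarith)

theorem MultiplierSystem.isMultiplier_mul (h : MultiplierSystem A δ K X) {D b x y : ℝ} {m n : ℕ}
    (hD : 0 < D) (hb : 1 ≤ b) (hxb : |x| ≤ b) (hx : IsMultiplier A D (K ^ m) x)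
    (hy : IsMultiplier A D (K ^ n) y) : IsMultiplier A (b * D) (K ^ (m + n + 1)) (x * y) := by
  have hK := h.hundred_le
  have hpow (n : ℕ) : 1 ≤ K ^ n := one_le_pow₀ (by linarith)
  refine (hx.mul h.nonempty hD hb hxb (hpow m) (hpow n) hy).mono le_rfl ?_
  calc 9 * K ^ m * K ^ n = 9 * K ^ (m + n) := by ring
    _ ≤ K * K ^ (m + n) := by gcongr; linarith
    _ = K ^ (m + n + 1) := by ring

theorem MultiplierSystem.isMultiplier_add (h : MultiplierSystem A δ K X) {D x y : ℝ} {m n : ℕ}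
    (hD : δ ≤ D) (hx : IsMultiplier A D (K ^ m) x) (hy : IsMultiplier A D (K ^ n) y) :
    IsMultiplier A D (K ^ (m + n + 30)) (x + y) := by
  have hK := h.hundred_le
  rw [pow_add, pow_add]
  exact IsMultiplier.add (by positivity) (by positivity)
    (fun r hr ↦ h.cellCount_add_add_le r (hD.trans hr)) hx hy

theorem MultiplierSystem.isMultiplier_of_mem_succ (h : MultiplierSystem A δ K X) {D : ℝ} {E : ℕ}
    (hD : δ ≤ D) (ih : ∀ x ∈ ringIterate X k, IsMultiplier A D (K ^ E) x) :
    ∀ x ∈ ringIterate X (k + 1),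
      IsMultiplier A (ringIterateBound k * D) (K ^ (5 * E + 125)) x := by
  intro x hx
  have hb := one_le_ringIterateBound k
  have hD0 : 0 < D := h.scale_pos.trans_le hD
  have hDb : D ≤ ringIterateBound k * D := le_mul_of_one_le_left hD0.le hb
  obtain ⟨a, ha, b, hb', c, hc, d, hd, e, he, rfl⟩ := exists_of_mem_ringIterate_succ hx
  have hmul : ∀ b ∈ ringIterate X k, ∀ c ∈ ringIterate X k,
      IsMultiplier A (ringIterateBound k * D) (K ^ (E + E + 1)) (b * c) := fun b hb' c hc ↦
    h.isMultiplier_mul hD0 hb (abs_le_ringIterateBound h.mem_Icc k b hb') (ih b hb') (ih c hc)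
  have hneg : IsMultiplier A (ringIterateBound k * D) (K ^ (61 + (E + E + 1) + 1))
      (-1 * (d * e)) := by
    simpa only [one_mul] using h.isMultiplier_mul (hD0.trans_le hDb) le_rfl (by simp)
      (h.isMultiplier_neg_one.mono (hD.trans hDb) le_rfl) (hmul d hd e he)
  have hsum := h.isMultiplier_add (hD.trans hDb) (h.isMultiplier_add (hD.trans hDb)
    ((ih a ha).mono hDb le_rfl) (hmul b hb' c hc)) hneg
  rw [neg_one_mul, ← sub_eq_add_neg] at hsum
  exact hsum.mono le_rfl (pow_le_pow_right₀ (by linarith [h.hundred_le]) (by lia))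

theorem exists_isMultiplier_of_mem_ringIterate (k : ℕ) :
    ∃ E : ℕ, ∃ D : ℝ, 1 ≤ D ∧ ∀ (A X : Finset ℝ) (δ K : ℝ), MultiplierSystem A δ K X →
      ∀ x ∈ ringIterate X k, IsMultiplier A (D * δ) (K ^ E) x := by
  induction k with
  | zero =>
    refine ⟨30, 1, le_rfl, fun A X δ K h x hx ↦ ?_⟩
    rw [one_mul]
    exact h.isMultiplier_of_mem_zero x hx
  | succ k ih =>
    obtain ⟨E, D, hD, ih⟩ := ih
    refine ⟨5 * E + 125, ringIterateBound k * D,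
      one_le_mul_of_one_le_of_one_le (one_le_ringIterateBound k) hD, fun A X δ K h x hx ↦ ?_⟩
    rw [mul_assoc]
    exact h.isMultiplier_of_mem_succ (le_mul_of_one_le_left h.scale_pos.le hD)
      (ih A X δ K h) x hx

end RingIterate

section ScaleSelection

theorem exists_mul_sub_le_of_increments {f : ℕ → ℝ} {θ : ℝ} {m N w : ℕ} (hm : 0 ≤ f m)
    (h : ∀ y, m ≤ y → y ≤ m + N → ∃ v, 1 ≤ v ∧ v ≤ w ∧ f y + θ * v ≤ f (v + y)) {n : ℕ}
    (hn : n ≤ N) : ∃ y, m + n ≤ y ∧ y ≤ m + n + w ∧ θ * (y - m) ≤ f y := by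
  induction n with
  | zero => exact ⟨m, by lia, by lia, by simpa using hm⟩
  | succ n ih =>
    obtain ⟨y, hlo, hhi, hy⟩ := ih (by lia)
    rcases Nat.lt_or_ge (m + n) y with hlt | hle
    · exact ⟨y, by lia, by lia, hy⟩
    · obtain ⟨v, hv, hvw, hstep⟩ := h y (by lia) (by lia)
      refine ⟨v + y, by lia, by lia, ?_⟩
      push_cast
      linarith

variable {κ C : ℝ} {J L U w : ℕ} {f : ℕ → ℝ}

theorem exists_increment_of_superadditive {g : ℝ} (h0 : ∀ n, 0 ≤ f n)
    (hlow : ∀ n ≤ w, κ * n - 1 ≤ f n) (hw : 2 * (C + 2) ≤ κ * w) (hgκ : κ / 2 ≤ g)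
    (hg : g * w ≤ f w) {y : ℕ} (hy : ∃ v ≤ w, f w + f y + f v ≤ f (v + y) + C) :
    ∃ v, 1 ≤ v ∧ v ≤ w ∧ f y + (g + κ / 2) * v ≤ f (v + y) := by
  obtain ⟨v, hvw, hv⟩ := hy
  have hvw' : (v : ℝ) ≤ w := by exact_mod_cast hvw
  have hslope : κ / 2 * ((w : ℝ) - v) ≤ g * (w - v) :=
    mul_le_mul_of_nonneg_right hgκ (by linarith)
  refine ⟨v, Nat.one_le_iff_ne_zero.2 ?_, hvw, by linarith [hlow v hvw]⟩
  rintro rfl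
  rw [zero_add] at hv
  linarith [h0 0, hlow w le_rfl]

theorem exists_steeper_point {g : ℝ} (hκ : 0 < κ) (hκ1 : κ ≤ 1) (hC : 0 ≤ C) (hJ : 1 ≤ J)
    (hL : 8 * (J : ℝ) ≤ κ * L) (h0 : ∀ n, 0 ≤ f n) (hup : ∀ n ≤ 2 * U, f n ≤ n + 2)
    (hlow : ∀ n ≤ 2 * U, κ * n - 1 ≤ f n)
    (hgap : ∀ y, J * w ≤ y → y ≤ U → ∃ v ≤ w, f w + f y + f v ≤ f (v + y) + C)
    (hw : 2 * (C + 2) ≤ κ * w) (hw1 : 1 ≤ w) (hwU : (J + L + 1) * w ≤ U) (hg : g * w ≤ f w) :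
    ∃ y, w ≤ y ∧ y ≤ (J + L + 1) * w ∧ (g + κ / 16) * y ≤ f y := by
  have hwr : (1 : ℝ) ≤ w := by exact_mod_cast hw1
  obtain ⟨G, hG, hgG⟩ : ∃ G, G * w = f w ∧ g ≤ G :=
    ⟨f w / w, by field_simp, (le_div_iff₀ (by linarith)).2 hg⟩
  have hGκ : κ / 2 ≤ G := by
    have := hlow w (by lia)
    exact le_of_mul_le_mul_right (by linarith : κ / 2 * w ≤ G * w) (by linarith)
  have hG3 : G ≤ 3 := by
    have := hup w (by lia)
    exact le_of_mul_le_mul_right (by linarith : G * w ≤ 3 * w) (by linarith)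
  obtain ⟨y, hylo, hyhi, hy⟩ := exists_mul_sub_le_of_increments (N := L * w) (h0 (J * w))
    (fun y hy hy' ↦ exists_increment_of_superadditive h0 (fun n hn ↦ hlow n (by lia)) hw hGκ
      hG.le (hgap y hy (by lia))) le_rfl
  refine ⟨y, (Nat.le_mul_of_pos_left w hJ).trans (by lia), by lia, ?_⟩
  have hJw0 : 0 ≤ (J : ℝ) * w := by positivity
  have hyr : (J : ℝ) * w + L * w ≤ y := by exact_mod_cast hylo
  have hJy : 8 * ((J : ℝ) * w) ≤ κ * y := by
    have hκL : κ * (L * w) ≤ κ * y := by gcongr; linarith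
    nlinarith
  calc (g + κ / 16) * y ≤ (G + κ / 16) * y := by gcongr
    _ ≤ (G + κ / 2) * y - J * w * (7 / 2) := by linarith
    _ ≤ (G + κ / 2) * y - J * w * (G + κ / 2) := by gcongr; linarith
    _ ≤ f y := by push_cast at hy; linarith

theorem exists_subadditive_scale (hκ : 0 < κ) (hκ1 : κ ≤ 1) (hC : 0 ≤ C) (hJ : 1 ≤ J) :
    ∃ U : ℕ, ∀ f : ℕ → ℝ, (∀ n, 0 ≤ f n) → (∀ n ≤ 2 * U, f n ≤ n + 2) →
      (∀ n ≤ 2 * U, κ * n - 1 ≤ f n) →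
      ∃ w y : ℕ, 1 ≤ w ∧ J * w ≤ y ∧ y ≤ U ∧ ∀ v ≤ w, f (v + y) + C < f w + f y + f v := by
  obtain ⟨L, hL⟩ := exists_nat_ge (8 * (J : ℝ) / κ)
  obtain ⟨w₀, hw₀⟩ := exists_nat_ge (2 * (C + 2) / κ)
  obtain ⟨I, hI⟩ := exists_nat_ge (64 / κ)
  rw [div_le_iff₀' hκ] at hL hw₀ hI
  have hw₀1 : 1 ≤ w₀ := Nat.one_le_iff_ne_zero.2 fun h ↦ by
    rw [h, Nat.cast_zero, mul_zero] at hw₀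
    linarith
  set M := J + L + 1
  refine ⟨w₀ * M ^ I, fun f h0 hup hlow ↦ ?_⟩
  by_contra! hcon
  have key : ∀ i ≤ I, ∃ w, w₀ ≤ w ∧ w ≤ w₀ * M ^ i ∧ i * (κ / 16) * w ≤ f w := by
    intro i
    induction i with
    | zero => exact fun _ ↦ ⟨w₀, le_rfl, by simp, by simpa using h0 w₀⟩
    | succ i ih =>
      intro hi
      obtain ⟨w, hwlo, hwhi, hw⟩ := ih (by lia)
      have hMw : M * w ≤ w₀ * M ^ (i + 1) :=
        calc M * w ≤ M * (w₀ * M ^ i) := Nat.mul_le_mul_left _ hwhi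
          _ = w₀ * M ^ (i + 1) := by ring
      have hMI : w₀ * M ^ (i + 1) ≤ w₀ * M ^ I := by gcongr; lia
      obtain ⟨y, hylo, hyhi, hy⟩ := exists_steeper_point hκ hκ1 hC hJ hL h0 hup hlow
        (hcon w · (by lia)) (hw₀.trans (by gcongr)) (by lia) (hMw.trans hMI) hw
      refine ⟨y, by lia, hyhi.trans hMw, ?_⟩
      push_cast
      linarith
  obtain ⟨w, hwlo, hwhi, hw⟩ := key I le_rfl
  have hwr : (1 : ℝ) ≤ w := by exact_mod_cast hw₀1.trans hwlo
  have hslope : 4 * (w : ℝ) ≤ I * (κ / 16) * w := by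
    gcongr
    linarith
  linarith [hup w (by lia)]

end ScaleSelection

section Quotients

theorem sub_mem_ringIterate_succ {X : Finset ℝ} {j : ℕ} {a c : ℝ} (ha : a ∈ ringIterate X j)
    (hc : c ∈ ringIterate X j) : a - c ∈ ringIterate X (j + 1) := by
  have h0 := zero_mem_ringIterate X j
  simpa using mem_ringIterate_succ ha h0 h0 (one_mem_ringIterate X j) hc

/-- Up to an error `ρ₁`, the quotients `u / s` of elements of `T - T` with denominator `s ≥ ρ₂` are
closed under the maps `x ↦ x / 2` and `x ↦ (x + 1) / 2`. -/
def NearlyClosedQuotients (T : Finset ℝ) (ρ₁ ρ₂ : ℝ) : Prop :=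
  ∀ u ∈ T - T, ∀ s ∈ T - T, ρ₂ ≤ s → |u / s| ≤ 2 → ∀ e : ℝ, e = 0 ∨ e = 1 →
    ∃ u' ∈ T - T, ∃ s' ∈ T - T, ρ₂ ≤ s' ∧ |(u / s + e) / 2 - u' / s'| ≤ ρ₁

variable {T : Finset ℝ} {ρ₁ ρ₂ t : ℝ}

theorem exists_quotient_near_dyadic (h0 : (0 : ℝ) ∈ T) (h1 : (1 : ℝ) ∈ T) (hρ₁ : 0 < ρ₁)
    (hρ₁' : ρ₁ ≤ 1 / 2) (hρ₂ : ρ₂ ≤ 1)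
    (hcl : NearlyClosedQuotients T ρ₁ ρ₂) (n : ℕ) :
    ∀ k : ℕ, k ≤ 2 ^ n →
      ∃ u ∈ T - T, ∃ s ∈ T - T, ρ₂ ≤ s ∧ |(k : ℝ) / 2 ^ n - u / s| ≤ 2 * ρ₁ := by
  have hzero : (0 : ℝ) ∈ T - T := by simpa using Finset.sub_mem_sub h0 h0
  have hone : (1 : ℝ) ∈ T - T := by simpa using Finset.sub_mem_sub h1 h0
  induction n with
  | zero =>
    intro k hk
    obtain rfl | rfl : k = 0 ∨ k = 1 := by
      rw [pow_zero] at hk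
      lia
    · exact ⟨0, hzero, 1, hone, hρ₂, by simpa using hρ₁.le⟩
    · exact ⟨1, hone, 1, hone, hρ₂, by simpa using hρ₁.le⟩
  | succ n ih =>
    intro k hk
    obtain ⟨k', e, hk', he, rfl⟩ : ∃ k' e : ℕ, k' ≤ 2 ^ n ∧ (e = 0 ∨ e = 1) ∧
        k = k' + e * 2 ^ n := by
      rw [pow_succ] at hk
      rcases Nat.lt_or_ge k (2 ^ n) with hlt | hge
      · exact ⟨k, 0, hlt.le, Or.inl rfl, by simp⟩
      · exact ⟨k - 2 ^ n, 1, by lia, Or.inr rfl, by lia⟩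
    obtain ⟨u, hu, s, hs, hρs, hus⟩ := ih k' hk'
    have hbound : |u / s| ≤ 2 := by
      have hle : (k' : ℝ) / 2 ^ n ≤ 1 := (div_le_one (by positivity)).2 (by exact_mod_cast hk')
      have hge : 0 ≤ (k' : ℝ) / 2 ^ n := by positivity
      rw [abs_le] at hus ⊢
      constructor <;> linarith
    obtain ⟨u', hu', s', hs', hρs', hus'⟩ := hcl u hu s hs hρs hbound e
      (by rcases he with rfl | rfl <;> simp)
    refine ⟨u', hu', s', hs', hρs', ?_⟩
    have hsplit : ((k' + e * 2 ^ n : ℕ) : ℝ) / 2 ^ (n + 1) - u' / s'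
        = (k' / 2 ^ n - u / s) / 2 + ((u / s + e) / 2 - u' / s') := by
      push_cast
      field_simp
      ring
    calc |((k' + e * 2 ^ n : ℕ) : ℝ) / 2 ^ (n + 1) - u' / s'|
        ≤ |(k' / 2 ^ n - u / s) / 2| + |(u / s + e) / 2 - u' / s'| := by
          rw [hsplit]
          exact abs_add_le _ _
      _ = |k' / 2 ^ n - u / s| / 2 + |(u / s + e) / 2 - u' / s'| := by rw [abs_div, abs_two]
      _ ≤ 2 * ρ₁ := by linarith

theorem exists_dyadic_near {ε : ℝ} (hε : 0 < ε) (ht : t ∈ Set.Icc (0 : ℝ) 1) :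
    ∃ n k : ℕ, k ≤ 2 ^ n ∧ |t - k / 2 ^ n| ≤ ε := by
  obtain ⟨n, hn⟩ := exists_pow_lt_of_lt_one hε (by norm_num : (1 / 2 : ℝ) < 1)
  have hpos : (0 : ℝ) < 2 ^ n := by positivity
  have hlo := Nat.floor_le (mul_nonneg ht.1 hpos.le)
  have hhi := Nat.lt_floor_add_one (t * 2 ^ n)
  refine ⟨n, ⌊t * 2 ^ n⌋₊, Nat.floor_le_of_le ?_, ?_⟩
  · push_cast
    exact mul_le_of_le_one_left hpos.le ht.2
  · have hscale : t - (⌊t * 2 ^ n⌋₊ : ℝ) / 2 ^ n = (t * 2 ^ n - ⌊t * 2 ^ n⌋₊) * (1 / 2) ^ n := by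
      rw [one_div, inv_pow]
      field_simp
    calc |t - (⌊t * 2 ^ n⌋₊ : ℝ) / 2 ^ n| = (t * 2 ^ n - ⌊t * 2 ^ n⌋₊) * (1 / 2) ^ n := by
          rw [hscale, abs_of_nonneg (mul_nonneg (by linarith) (by positivity))]
      _ ≤ 1 * (1 / 2) ^ n := by gcongr; linarith
      _ ≤ ε := by linarith

-- Every dyadic rational in `[0, 1]` arises from `0` or `1` by iterating `x ↦ x / 2` and
-- `x ↦ (x + 1) / 2`; the errors `ρ₁` made at each step add up to a geometric series.
theorem exists_quotient_near (h0 : (0 : ℝ) ∈ T) (h1 : (1 : ℝ) ∈ T) (hρ₁ : 0 < ρ₁)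
    (hρ₁' : ρ₁ ≤ 1 / 2) (hρ₂ : ρ₂ ≤ 1) (hρ₂' : 0 < ρ₂)
    (hcl : NearlyClosedQuotients T ρ₁ ρ₂) (ht : t ∈ Set.Icc (0 : ℝ) 1) :
    ∃ u ∈ T - T, ∃ s ∈ T - T, ρ₂ ≤ s ∧ |u - t * s| ≤ 4 * ρ₁ * s := by
  obtain ⟨n, k, hk, hkt⟩ := exists_dyadic_near hρ₁ ht
  obtain ⟨u, hu, s, hs, hρs, hus⟩ := exists_quotient_near_dyadic h0 h1 hρ₁ hρ₁' hρ₂ hcl n k hk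
  have hs0 : 0 < s := hρ₂'.trans_le hρs
  have htri := abs_sub_le t (k / 2 ^ n) (u / s)
  rw [abs_sub_comm t (u / s)] at htri
  have hscale : u - t * s = (u / s - t) * s := by field_simp
  refine ⟨u, hu, s, hs, hρs, ?_⟩
  rw [hscale, abs_mul, abs_of_pos hs0]
  gcongr
  linarith

theorem cellCount_mul_le_of_quotient_gap (hρ₁ : 0 < ρ₁) (hρ₂ : 0 < ρ₂) (ht : t ≠ 0)
    (hgap : ∀ u ∈ T - T, ∀ s ∈ T - T, ρ₂ ≤ s → ρ₁ < |t - u / s|) :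
    cellCount ρ₂ T * cellCount (ρ₁ * ρ₂) T ≤ 6 * cellCount (ρ₁ * ρ₂) (t • T + T) := by
  obtain ⟨P, hP, hcard, hsep⟩ := exists_separated_subset hρ₂ T (m := 2) (by norm_num)
  have hfar : ∀ a ∈ T, ∀ a' ∈ T, ∀ z ∈ T, ∀ z' ∈ T, ρ₂ ≤ a - a' →
      ρ₁ * ρ₂ ≤ |t * a + z - (t * a' + z')| := by
    intro a ha a' ha' z hz z' hz' h
    have hquot := hgap (z' - z) (Finset.sub_mem_sub hz' hz) (a - a') (Finset.sub_mem_sub ha ha') h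
    have hpos : 0 < a - a' := hρ₂.trans_le h
    have hfactor : t * a + z - (t * a' + z') = (t - (z' - z) / (a - a')) * (a - a') := by
      field_simp
      ring
    rw [hfactor, abs_mul, abs_of_pos hpos]
    gcongr
  have hprod : (t • P).card * cellCount (ρ₁ * ρ₂) T ≤ 3 * cellCount (ρ₁ * ρ₂) (t • P + T) := by
    refine card_mul_cellCount_le_of_separated (by positivity) _ _
      fun p hp p' hp' hne z hz z' hz' ↦ ?_
    obtain ⟨a, ha, rfl⟩ := Finset.mem_smul_finset.1 hp
    obtain ⟨a', ha', rfl⟩ := Finset.mem_smul_finset.1 hp'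
    have haa' := hsep a ha a' ha' fun h ↦ hne (by rw [h])
    push_cast at haa'
    rcases le_abs.1 (show ρ₂ ≤ |a - a'| by linarith) with h | h
    · exact hfar a (hP ha) a' (hP ha') z hz z' hz' h
    · rw [abs_sub_comm]
      exact hfar a' (hP ha') a (hP ha) z' hz' z hz (by linarith)
  rw [Finset.card_smul_finset₀ ht P] at hprod
  calc cellCount ρ₂ T * cellCount (ρ₁ * ρ₂) T
      ≤ (2 : ℕ) * P.card * cellCount (ρ₁ * ρ₂) T := by
        gcongr
        exact cellCount_nonneg _ _
    _ ≤ 2 * (3 * cellCount (ρ₁ * ρ₂) (t • P + T)) := by push_cast; linarith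
    _ ≤ 2 * (3 * cellCount (ρ₁ * ρ₂) (t • T + T)) := by
        gcongr
        exact cellCount_mono
          (Finset.add_subset_add_right (Finset.smul_finset_subset_smul_finset hP))
    _ = 6 * cellCount (ρ₁ * ρ₂) (t • T + T) := by ring

theorem dilate_add_subset_ringIterate {X : Finset ℝ} {j : ℕ} {u s e : ℝ}
    (hu : u ∈ ringIterate X j - ringIterate X j) (hs : s ∈ ringIterate X j - ringIterate X j)
    (he : e = 0 ∨ e = 1) (hs0 : s ≠ 0) :
    ringIterate X j + (2 * s) • (((u / s + e) / 2) • ringIterate X j + ringIterate X j) ⊆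
      ringIterate X (j + 3) := by
  intro x hx
  obtain ⟨c', hc', y, hy, rfl⟩ := Finset.mem_add.1 hx
  obtain ⟨x', hx', rfl⟩ := Finset.mem_smul_finset.1 hy
  obtain ⟨ta, hta, c, hc, rfl⟩ := Finset.mem_add.1 hx'
  obtain ⟨a, ha, rfl⟩ := Finset.mem_smul_finset.1 hta
  have h0 (k : ℕ) := zero_mem_ringIterate X k
  have h1 (k : ℕ) := one_mem_ringIterate X k
  have hsucc {k : ℕ} {z : ℝ} (hz : z ∈ ringIterate X k) : z ∈ ringIterate X (k + 1) :=
    ringIterate_subset_succ X k hz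
  have hdiff : ∀ z ∈ ringIterate X j - ringIterate X j, z ∈ ringIterate X (j + 1) := fun z hz ↦ by
    obtain ⟨a, ha, c, hc, rfl⟩ := Finset.mem_sub.1 hz
    exact sub_mem_ringIterate_succ ha hc
  have hcua : c' + u * a ∈ ringIterate X (j + 2) := by
    simpa using mem_ringIterate_succ (hsucc hc') (hdiff u hu) (hsucc ha) (h0 _) (h0 _)
  have heac : e * a + c ∈ ringIterate X (j + 1) := by
    rcases he with rfl | rfl
    · simpa using hsucc hc
    · simpa using mem_ringIterate_succ ha hc (h1 j) (h0 j) (h0 j)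
  have heacc : e * a + c + c * 1 - 0 * 0 ∈ ringIterate X (j + 2) :=
    mem_ringIterate_succ heac (hsucc hc) (h1 _) (h0 _) (h0 _)
  convert mem_ringIterate_succ hcua (hsucc (hdiff s hs)) heacc (h0 _) (h0 _) using 1
  simp only [smul_eq_mul]
  field_simp
  ring

theorem abs_le_of_mem_smul_add {B c y : ℝ} (hT : ∀ x ∈ T, |x| ≤ B)
    (hy : y ∈ c • (t • T + T)) : |y| ≤ |c| * ((|t| + 1) * B) := by
  obtain ⟨x, hx, rfl⟩ := Finset.mem_smul_finset.1 hy
  obtain ⟨ta, hta, d, hd, rfl⟩ := Finset.mem_add.1 hx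
  obtain ⟨a, ha, rfl⟩ := Finset.mem_smul_finset.1 hta
  rw [smul_eq_mul, smul_eq_mul, abs_mul, add_one_mul]
  gcongr
  calc |t * a + d| ≤ |t * a| + |d| := abs_add_le _ _
    _ ≤ |t| * B + B := by
      rw [abs_mul]
      gcongr
      exacts [hT a ha, hT d hd]

theorem cellCount_mul_le_ringIterate {X : Finset ℝ} (hX : ∀ x ∈ X, x ∈ Set.Icc (0 : ℝ) 1)
    {j b : ℕ} {u s e β r : ℝ} (hr : 0 < r) (hr1 : r ≤ 1) (hb : 10 * ringIterateBound j + 2 ≤ b)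
    (hu : u ∈ ringIterate X j - ringIterate X j) (hs : s ∈ ringIterate X j - ringIterate X j)
    (he : e = 0 ∨ e = 1) (hβ : 0 < β) (hβs : β ≤ s) (hsβ : s ≤ b * β) (hus : |u / s| ≤ 2) :
    cellCount β (ringIterate X j) *
        cellCount r (((u / s + e) / 2) • ringIterate X j + ringIterate X j) ≤
      18 * (b : ℝ) ^ 2 * cellCount (β * r) (ringIterate X (j + 3)) := by
  set T := ringIterate X j
  have hB := one_le_ringIterateBound j
  have hb1 : (1 : ℝ) ≤ b := by linarith
  have hs0 : 0 < s := hβ.trans_le hβs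
  have ht : |(u / s + e) / 2| ≤ 3 / 2 := by
    have he1 : |e| ≤ 1 := by rcases he with rfl | rfl <;> simp
    rw [abs_div, abs_two]
    linarith [abs_add_le (u / s) e]
  set Y := (2 * s) • (((u / s + e) / 2) • T + T)
  have hYabs : ∀ y ∈ Y, |y| ≤ 5 * s * ringIterateBound j := fun y hy ↦
    calc |y| ≤ |2 * s| * ((|(u / s + e) / 2| + 1) * ringIterateBound j) :=
          abs_le_of_mem_smul_add (abs_le_ringIterateBound hX j) hy
      _ ≤ 2 * s * ((3 / 2 + 1) * ringIterateBound j) := by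
          rw [abs_of_pos (by positivity)]
          gcongr
      _ = 5 * s * ringIterateBound j := by ring
  have hsep : 10 * s * ringIterateBound j + 2 * s * r ≤ (((b ^ 2 + 1 : ℕ) : ℝ) - 1) * β :=
    calc 10 * s * ringIterateBound j + 2 * s * r
        ≤ (10 * ringIterateBound j + 2) * s := by nlinarith
      _ ≤ b * (b * β) := by gcongr
      _ = (((b ^ 2 + 1 : ℕ) : ℝ) - 1) * β := by push_cast; ring
  have hprod := cellCount_mul_cellCount_le (r := 2 * s * r) (by positivity) hβ T Y (by lia)
    (fun z hz z' hz' ↦ by linarith [abs_sub z z', hYabs z hz, hYabs z' hz']) hsep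
  rw [cellCount_smul_of_pos (by positivity)] at hprod
  calc cellCount β T * cellCount r (((u / s + e) / 2) • T + T)
      ≤ 3 * (b ^ 2 + 1 : ℕ) * cellCount (2 * s * r) (T + Y) := hprod
    _ ≤ 3 * ((b : ℝ) ^ 2 + b ^ 2) * (3 * cellCount (β * r) (ringIterate X (j + 3))) := by
        push_cast
        gcongr
        · exact cellCount_nonneg _ _
        · exact one_le_pow₀ hb1
        · exact (cellCount_mono (dilate_add_subset_ringIterate hu hs he hs0.ne')).trans
            (cellCount_le_three_mul_of_le (by positivity) (by gcongr; linarith) _)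
    _ = 18 * (b : ℝ) ^ 2 * cellCount (β * r) (ringIterate X (j + 3)) := by ring

end Quotients

section DenseQuotients

/-- The logarithm in base `b` of the cell count of `Y` at scale `b⁻ⁿ`. -/
noncomputable def logCellCount (b : ℝ) (Y : Finset ℝ) (n : ℕ) : ℝ :=
  Real.logb b (cellCount (b ^ n)⁻¹ Y)

variable {X Y Z : Finset ℝ} {b : ℝ}

theorem logCellCount_nonneg (hb : 1 < b) (hY : Y.Nonempty) (n : ℕ) : 0 ≤ logCellCount b Y n :=
  Real.logb_nonneg hb (one_le_cellCount hY)

theorem logCellCount_mono (hb : 1 < b) (hY : Y.Nonempty) (h : Y ⊆ Z) (n : ℕ) :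
    logCellCount b Y n ≤ logCellCount b Z n :=
  Real.logb_le_logb_of_le hb (cellCount_pos hY) (cellCount_mono h)

theorem logCellCount_le_of_abs_le {B : ℝ} (hY : Y.Nonempty) (hB : 0 ≤ B) (hb : 2 * B + 3 ≤ b)
    (h : ∀ y ∈ Y, |y| ≤ B) (n : ℕ) : logCellCount b Y n ≤ n + 1 := by
  have hb1 : 1 < b := by linarith
  have hpow : 1 ≤ b ^ n := one_le_pow₀ hb1.le
  have hcount : cellCount (b ^ n)⁻¹ Y ≤ b ^ (n + 1) :=
    calc cellCount (b ^ n)⁻¹ Y ≤ 2 * B / (b ^ n)⁻¹ + 3 :=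
          cellCount_le_of_abs_le (by positivity) hB h
      _ = 2 * B * b ^ n + 3 * 1 := by rw [div_inv_eq_mul, mul_one]
      _ ≤ 2 * B * b ^ n + 3 * b ^ n := by gcongr
      _ ≤ b ^ (n + 1) := by
          rw [← add_mul, pow_succ']
          gcongr
  calc logCellCount b Y n ≤ Real.logb b (b ^ (n + 1)) :=
        Real.logb_le_logb_of_le hb1 (cellCount_pos hY) hcount
    _ = n + 1 := by
        rw [Real.logb_pow, Real.logb_self_eq_one hb1]
        push_cast
        ring

theorem exists_inv_pow_near {s : ℝ} (hsb : s ≤ b) {w : ℕ} (hs : (b ^ w)⁻¹ ≤ s)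
    (hb : 0 < b) : ∃ v ≤ w, (b ^ v)⁻¹ ≤ s ∧ s ≤ b * (b ^ v)⁻¹ := by
  induction w with
  | zero => exact ⟨0, le_rfl, hs, by simpa using hsb⟩
  | succ w ih =>
    rcases le_or_gt (b ^ w)⁻¹ s with hw | hw
    · obtain ⟨v, hv, hvs⟩ := ih hw
      exact ⟨v, hv.trans w.le_succ, hvs⟩
    · refine ⟨w + 1, le_rfl, hs, hw.le.trans (le_of_eq ?_)⟩
      rw [pow_succ]
      field_simp

theorem logCellCount_add_add_le {v w y n m : ℕ} (hb : 1 < b) (hY : Y.Nonempty) (hZ : Z.Nonempty)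
    (h : cellCount (b ^ w)⁻¹ Y * cellCount (b ^ y)⁻¹ Y * cellCount (b ^ v)⁻¹ Y ≤
      b ^ m * cellCount (b ^ n)⁻¹ Z) :
    logCellCount b Y w + logCellCount b Y y + logCellCount b Y v ≤ logCellCount b Z n + m := by
  have hYpos (k : ℕ) : 0 < cellCount (b ^ k)⁻¹ Y := cellCount_pos hY
  have hZpos : 0 < cellCount (b ^ n)⁻¹ Z := cellCount_pos hZ
  have hlog := Real.logb_le_logb_of_le hb
    (mul_pos (mul_pos (hYpos w) (hYpos y)) (hYpos v)) h
  rw [Real.logb_mul (mul_pos (hYpos w) (hYpos y)).ne' (hYpos v).ne',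
    Real.logb_mul (hYpos w).ne' (hYpos y).ne', Real.logb_mul (by positivity) hZpos.ne',
    Real.logb_pow, Real.logb_self_eq_one hb, mul_one, add_comm (m : ℝ)] at hlog
  exact hlog

-- A gap in the quotients makes `t • T + T` large for a suitable `t = (u / s + e) / 2`, while
-- a dilate of `t • T + T` lies in the next iterates.
theorem exists_logCellCount_superadditive (hX : ∀ x ∈ X, x ∈ Set.Icc (0 : ℝ) 1) {j b w y : ℕ}
    (hb : 10 * ringIterateBound j + 200 ≤ b) (hwy : w ≤ y)
    (h : ¬ NearlyClosedQuotients (ringIterate X j) ((b : ℝ) ^ (y - w))⁻¹ ((b : ℝ) ^ w)⁻¹) :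
    ∃ v ≤ w, logCellCount b (ringIterate X j) w + logCellCount b (ringIterate X j) y +
      logCellCount b (ringIterate X j) v ≤
        logCellCount b (ringIterate X (j + 3)) (v + y) + 3 := by
  have hB := one_le_ringIterateBound j
  have hb1 : (1 : ℝ) < b := by linarith
  have hbw : ((b : ℝ) ^ w)⁻¹ ≤ 1 := inv_le_one_of_one_le₀ (one_le_pow₀ hb1.le)
  have hby : ((b : ℝ) ^ y)⁻¹ ≤ 1 := inv_le_one_of_one_le₀ (one_le_pow₀ hb1.le)
  have hpos (i n : ℕ) : 0 < cellCount ((b : ℝ) ^ n)⁻¹ (ringIterate X i) :=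
    cellCount_pos ⟨0, zero_mem_ringIterate X i⟩
  have h0 := zero_mem_ringIterate X j
  have h1 := one_mem_ringIterate X j
  unfold NearlyClosedQuotients at h
  push Not at h
  obtain ⟨u, hu, s, hs, hws, hus, e, he, hgap⟩ := h
  have ht : (u / s + e) / 2 ≠ 0 := fun ht ↦ by
    have hlt := hgap 0 (by simpa using Finset.sub_mem_sub h0 h0) 1
      (by simpa using Finset.sub_mem_sub h1 h0) hbw
    rw [ht, zero_div, sub_zero, abs_zero] at hlt
    exact hlt.not_ge (by positivity)
  have hlow := cellCount_mul_le_of_quotient_gap (by positivity) (by positivity) ht hgap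
  rw [← mul_inv, ← pow_add, Nat.sub_add_cancel hwy] at hlow
  have hsb : s ≤ b := by
    obtain ⟨a, ha, c, hc, rfl⟩ := Finset.mem_sub.1 hs
    have := abs_le.1 (abs_le_ringIterateBound hX j a ha)
    have := abs_le.1 (abs_le_ringIterateBound hX j c hc)
    linarith
  obtain ⟨v, hvw, hvs, hsv⟩ := exists_inv_pow_near hsb hws (by linarith)
  have hup := cellCount_mul_le_ringIterate hX (r := ((b : ℝ) ^ y)⁻¹) (by positivity) hby
    (by linarith) hu hs he (by positivity) hvs hsv hus
  rw [← mul_inv, ← pow_add] at hup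
  have hprod : cellCount ((b : ℝ) ^ w)⁻¹ (ringIterate X j) *
      cellCount ((b : ℝ) ^ y)⁻¹ (ringIterate X j) * cellCount ((b : ℝ) ^ v)⁻¹ (ringIterate X j) ≤
        (b : ℝ) ^ 3 * cellCount ((b : ℝ) ^ (v + y))⁻¹ (ringIterate X (j + 3)) := by
    have hlow' := mul_le_mul_of_nonneg_right hlow (hpos j v).le
    have hconst : 108 * (b : ℝ) ^ 2 * cellCount ((b : ℝ) ^ (v + y))⁻¹ (ringIterate X (j + 3)) ≤
        b * (b : ℝ) ^ 2 * cellCount ((b : ℝ) ^ (v + y))⁻¹ (ringIterate X (j + 3)) := by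
      have := (hpos (j + 3) (v + y)).le
      gcongr
      linarith
    linarith
  exact ⟨v, hvw, logCellCount_add_add_le hb1 ⟨0, h0⟩ ⟨0, zero_mem_ringIterate X _⟩ hprod⟩

theorem ringIterateBound_mono : Monotone ringIterateBound :=
  monotone_nat_of_le_succ fun k ↦ by
    have := one_le_ringIterateBound k
    simp only [ringIterateBound]
    nlinarith

theorem exists_stage_increment_lt_one {F : ℕ → ℕ → ℝ} {N I : ℕ} (h0 : ∀ n, 0 ≤ F 0 n)
    (hmono : ∀ i n, F i n ≤ F (i + 1) n) (hub : ∀ n < N, F I n ≤ N) (hI : N ^ 2 < I) :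
    ∃ i < I, ∀ n < N, F (i + 1) n < F i n + 1 := by
  have htele : ∑ i ∈ Finset.range I, (∑ n ∈ Finset.range N, F (i + 1) n -
      ∑ n ∈ Finset.range N, F i n) < ∑ _i ∈ Finset.range I, (1 : ℝ) := by
    rw [Finset.sum_range_sub fun i ↦ ∑ n ∈ Finset.range N, F i n]
    calc ∑ n ∈ Finset.range N, F I n - ∑ n ∈ Finset.range N, F 0 n
        ≤ ∑ n ∈ Finset.range N, F I n := sub_le_self _ (Finset.sum_nonneg fun n _ ↦ h0 n)
      _ ≤ ∑ _n ∈ Finset.range N, (N : ℝ) :=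
          Finset.sum_le_sum fun n hn ↦ hub n (Finset.mem_range.1 hn)
      _ = (N : ℝ) ^ 2 := by simp [sq]
      _ < I := by exact_mod_cast hI
      _ = ∑ _i ∈ Finset.range I, (1 : ℝ) := by simp
  obtain ⟨i, hi, hlt⟩ := Finset.exists_lt_of_sum_lt htele
  rw [← Finset.sum_sub_distrib] at hlt
  refine ⟨i, Finset.mem_range.1 hi, fun n hn ↦ ?_⟩
  have hle := Finset.single_le_sum (f := fun n ↦ F (i + 1) n - F i n)
    (fun n _ ↦ sub_nonneg.2 (hmono i n)) (Finset.mem_range.2 hn)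
  linarith

theorem exists_nearlyClosedQuotients {κ : ℝ} (hκ : 0 < κ) (hκ1 : κ ≤ 1) {J : ℕ} (hJ : 2 ≤ J) :
    ∃ U k b₀ : ℕ, ∀ b : ℕ, b₀ ≤ b → ∀ X : Finset ℝ, (∀ x ∈ X, x ∈ Set.Icc (0 : ℝ) 1) →
      (∀ n : ℕ, n ≤ 2 * U → (b : ℝ) ^ (κ * n - 1) ≤ cellCount ((b : ℝ) ^ n)⁻¹ X) →
      ∃ j < k, ∃ w y : ℕ, 1 ≤ w ∧ J * w ≤ y ∧ y ≤ U ∧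
        NearlyClosedQuotients (ringIterate X j) ((b : ℝ) ^ (y - w))⁻¹ ((b : ℝ) ^ w)⁻¹ := by
  obtain ⟨U, hU⟩ := exists_subadditive_scale hκ hκ1 (C := 4) (by norm_num) (by lia : 1 ≤ J)
  set I := (2 * U + 1) ^ 2 + 1
  refine ⟨U, 5 * I, ⌈10 * ringIterateBound (5 * I) + 200⌉₊, fun b hb X hX hcount ↦ ?_⟩
  have hbB : 10 * ringIterateBound (5 * I) + 200 ≤ (b : ℝ) := Nat.ceil_le.1 hb
  have hB := one_le_ringIterateBound (5 * I)
  have hb1 : (1 : ℝ) < b := by linarith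
  have hne (j : ℕ) : (ringIterate X j).Nonempty := ⟨0, zero_mem_ringIterate X j⟩
  set F : ℕ → ℕ → ℝ := fun j n ↦ logCellCount b (ringIterate X j) n
  have hF0 (j n : ℕ) : 0 ≤ F j n := logCellCount_nonneg hb1 (hne j) n
  have hFmono (n : ℕ) {i j : ℕ} (h : i ≤ j) : F i n ≤ F j n :=
    logCellCount_mono hb1 (hne i) (ringIterate_mono X h) n
  have hFub {j : ℕ} (hj : j ≤ 5 * I) (n : ℕ) : F j n ≤ n + 1 := (hFmono n hj).trans
    (logCellCount_le_of_abs_le (hne _) (by linarith) (by linarith)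
      (abs_le_ringIterateBound hX _) n)
  have hFlow (j n : ℕ) (hn : n ≤ 2 * U) : κ * n - 1 ≤ F j n := by
    have hXj : X ⊆ ringIterate X j :=
      Finset.subset_union_left.trans (ringIterate_mono X (Nat.zero_le j))
    exact (Real.le_logb_iff_rpow_le hb1 (cellCount_pos (hne j))).2
      ((hcount n hn).trans (cellCount_mono hXj))
  obtain ⟨i, hi, hstage⟩ := exists_stage_increment_lt_one (F := fun i ↦ F (5 * i))
    (N := 2 * U + 1) (hF0 _) (fun i n ↦ hFmono n (by lia))
    (fun n hn ↦ (hFub le_rfl n).trans (by exact_mod_cast hn)) (by lia)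
  obtain ⟨w, y, hw, hwy, hyU, hsub⟩ := hU (F (5 * i)) (hF0 _)
    (fun n _ ↦ (hFub (by lia) n).trans (by linarith)) (hFlow _)
  have hlt : w < y := by nlinarith
  have hBi := ringIterateBound_mono (by lia : 5 * i ≤ 5 * I)
  refine ⟨5 * i, by lia, w, y, hw, hwy, hyU, ?_⟩
  by_contra hgap
  obtain ⟨v, hvw, hv⟩ := exists_logCellCount_superadditive hX (by linarith) hlt.le hgap
  have hnext := (hFmono (v + y) (by lia : 5 * i + 3 ≤ 5 * (i + 1))).trans
    (hstage (v + y) (by lia)).le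
  linarith [hsub v hvw]

theorem exists_scale_quotients_dense {κ : ℝ} (hκ : 0 < κ) (hκ1 : κ ≤ 1) {J : ℕ} (hJ : 2 ≤ J) :
    ∃ U k b₀ : ℕ, ∀ b : ℕ, b₀ ≤ b → ∀ X : Finset ℝ, (∀ x ∈ X, x ∈ Set.Icc (0 : ℝ) 1) →
      (∀ n : ℕ, n ≤ 2 * U → (b : ℝ) ^ (κ * n - 1) ≤ cellCount ((b : ℝ) ^ n)⁻¹ X) →
      ∃ w y : ℕ, 1 ≤ w ∧ J * w ≤ y ∧ y ≤ U ∧ ∀ t ∈ Set.Icc (0 : ℝ) 1,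
        ∃ u ∈ ringIterate X k, ∃ s ∈ ringIterate X k, ((b : ℝ) ^ w)⁻¹ ≤ s ∧
          |u - t * s| ≤ 4 * ((b : ℝ) ^ (y - w))⁻¹ * s := by
  obtain ⟨U, k, b₀, hclosed⟩ := exists_nearlyClosedQuotients hκ hκ1 hJ
  refine ⟨U, k, max b₀ 2, fun b hb X hX hcount ↦ ?_⟩
  obtain ⟨j, hj, w, y, hw, hwy, hyU, hclosed⟩ := hclosed b (le_of_max_le_left hb) X hX hcount
  have hb2 : (2 : ℝ) ≤ b := by exact_mod_cast le_of_max_le_right hb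
  have hb1 : (1 : ℝ) ≤ b := by linarith
  have hlt : w < y := by nlinarith
  have hρ : ((b : ℝ) ^ (y - w))⁻¹ ≤ 1 / 2 := by
    rw [one_div]
    exact inv_anti₀ two_pos (hb2.trans (le_self_pow₀ hb1 (by lia)))
  have hdiff : ∀ u ∈ ringIterate X j - ringIterate X j, u ∈ ringIterate X k := by
    intro u hu
    obtain ⟨a, ha, c, hc, rfl⟩ := Finset.mem_sub.1 hu
    exact ringIterate_mono X (by lia) (sub_mem_ringIterate_succ ha hc)
  refine ⟨w, y, hw, hwy, hyU, fun t ht ↦ ?_⟩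
  obtain ⟨u, hu, s, hs, hws, hut⟩ := exists_quotient_near (zero_mem_ringIterate X _)
    (one_mem_ringIterate X _) (by positivity) hρ (inv_le_one_of_one_le₀ (one_le_pow₀ hb1))
    (by positivity) hclosed ht
  exact ⟨u, hdiff u hu, s, hdiff s hs, hws, hut⟩

end DenseQuotients

section ProjectionEnergy

open scoped Finset

theorem sq_card_le_card_image_mul_sum_card_fiber {α β : Type*} [DecidableEq β] (Ω : Finset α)
    (φ : α → β) : (#Ω : ℝ) ^ 2 ≤ #(Ω.image φ) * ∑ p ∈ Ω, (#{p' ∈ Ω | φ p' = φ p} : ℝ) := by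
  have hcard : (#Ω : ℝ) = ∑ k ∈ Ω.image φ, (#{p ∈ Ω | φ p = k} : ℝ) := by
    exact_mod_cast Finset.card_eq_sum_card_image φ Ω
  have hsum : ∑ p ∈ Ω, (#{p' ∈ Ω | φ p' = φ p} : ℝ) =
      ∑ k ∈ Ω.image φ, (#{p ∈ Ω | φ p = k} : ℝ) ^ 2 := by
    rw [← Finset.sum_fiberwise_of_maps_to (fun p hp ↦ Finset.mem_image_of_mem φ hp)]
    refine Finset.sum_congr rfl fun k _ ↦ ?_
    rw [Finset.sum_congr rfl fun p hp ↦ by rw [(Finset.mem_filter.1 hp).2], Finset.sum_const,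
      nsmul_eq_mul, sq]
  rw [hsum, hcard]
  exact sq_sum_le_card_mul_sum_sq

theorem card_mul_sq_card_le_of_collisions {ι α β : Type*} [DecidableEq β] {J : Finset ι}
    {Ω : Finset α} {φ : ι → α → β} {I C : ℝ} (hI : 0 ≤ I)
    (himage : ∀ j ∈ J, (#(Ω.image (φ j)) : ℝ) ≤ I)
    (hcoll : ∀ p ∈ Ω, ∑ j ∈ J, (#{p' ∈ Ω | φ j p' = φ j p} : ℝ) ≤ C) :
    (#J : ℝ) * (#Ω : ℝ) ^ 2 ≤ I * (#Ω * C) :=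
  calc (#J : ℝ) * (#Ω : ℝ) ^ 2 = ∑ _ ∈ J, (#Ω : ℝ) ^ 2 := by rw [Finset.sum_const, nsmul_eq_mul]
    _ ≤ ∑ j ∈ J, I * ∑ p ∈ Ω, (#{p' ∈ Ω | φ j p' = φ j p} : ℝ) :=
        Finset.sum_le_sum fun j hj ↦ (sq_card_le_card_image_mul_sum_card_fiber Ω (φ j)).trans
          (mul_le_mul_of_nonneg_right (himage j hj) (Finset.sum_nonneg fun _ _ ↦ Nat.cast_nonneg _))
    _ = I * ∑ p ∈ Ω, ∑ j ∈ J, (#{p' ∈ Ω | φ j p' = φ j p} : ℝ) := by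
        rw [← Finset.mul_sum, Finset.sum_comm]
    _ ≤ I * ∑ _ ∈ Ω, C := mul_le_mul_of_nonneg_left (Finset.sum_le_sum hcoll) hI
    _ = I * (#Ω * C) := by rw [Finset.sum_const, nsmul_eq_mul]

theorem sum_le_card_filter_mul_add_card_mul {ι : Type*} (s : Finset ι) (P : ι → Prop)
    [DecidablePred P] {f : ι → ℝ} {a b : ℝ} (hb : 0 ≤ b) (hP : ∀ i ∈ s, P i → f i ≤ a)
    (hnP : ∀ i ∈ s, ¬ P i → f i ≤ b) : ∑ i ∈ s, f i ≤ #{i ∈ s | P i} * a + #s * b := by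
  rw [← Finset.sum_filter_add_sum_filter_not s P]
  refine add_le_add ?_ (le_trans ?_ (mul_le_mul_of_nonneg_right
    (Nat.cast_le.2 (Finset.card_le_card (Finset.filter_subset (fun i ↦ ¬ P i) s))) hb))
  · exact (Finset.sum_le_card_nsmul _ _ a fun i hi ↦
      hP i (Finset.mem_filter.1 hi).1 (Finset.mem_filter.1 hi).2).trans_eq (nsmul_eq_mul _ _)
  · exact (Finset.sum_le_card_nsmul _ _ b fun i hi ↦
      hnP i (Finset.mem_filter.1 hi).1 (Finset.mem_filter.1 hi).2).trans_eq (nsmul_eq_mul _ _)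

theorem card_filter_abs_add_mul_lt_le {M : ℕ} {e d r L : ℝ} (hM : 0 < M) (hd : 0 < |d|)
    (hL0 : 0 ≤ L) (hL : 2 * r * M ≤ L * |d|) :
    (#{j ∈ Finset.range M | |e + ((j : ℕ) : ℝ) / M * d| < r} : ℝ) ≤ L + 1 := by
  set S := {j ∈ Finset.range M | |e + ((j : ℕ) : ℝ) / M * d| < r}
  have hM0 : (0 : ℝ) < M := Nat.cast_pos.2 hM
  rcases S.eq_empty_or_nonempty with h | h
  · rw [h, Finset.card_empty, Nat.cast_zero]
    linarith
  have hsub : S ⊆ Finset.Icc (S.min' h) (S.min' h + ⌊L⌋₊) := fun j hj ↦ by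
    have hle : S.min' h ≤ j := S.min'_le j hj
    have hleR : (S.min' h : ℝ) ≤ j := Nat.cast_le.2 hle
    have hdiff : |((j : ℝ) - S.min' h) / M * d| < 2 * r := by
      have hsplit : ((j : ℝ) - S.min' h) / M * d =
          (e + (j : ℝ) / M * d) - (e + (S.min' h : ℝ) / M * d) := by ring
      rw [hsplit]
      linarith [abs_sub (e + (j : ℝ) / M * d) (e + (S.min' h : ℝ) / M * d),
        (Finset.mem_filter.1 hj).2, (Finset.mem_filter.1 (S.min'_mem h)).2]
    rw [abs_mul, abs_of_nonneg (div_nonneg (sub_nonneg.2 hleR) hM0.le), div_mul_eq_mul_div,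
      div_lt_iff₀ hM0] at hdiff
    have hlt : (j : ℝ) - S.min' h < L := lt_of_mul_lt_mul_right (hdiff.trans_le hL) hd.le
    have hfloor : j - S.min' h ≤ ⌊L⌋₊ := Nat.le_floor (by rw [Nat.cast_sub hle]; exact hlt.le)
    exact Finset.mem_Icc.2 ⟨hle, by lia⟩
  have hcard : #S ≤ ⌊L⌋₊ + 1 :=
    (Finset.card_le_card hsub).trans (by rw [Nat.card_Icc]; lia)
  calc (#S : ℝ) ≤ ⌊L⌋₊ + 1 := by exact_mod_cast hcard
    _ ≤ L + 1 := by gcongr; exact Nat.floor_le hL0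

variable {A S T : Finset ℝ} {r q R K : ℝ}

theorem cellCount_mul_card_filter_abs_sub_le {l : ℝ} {m : ℕ} (hr : 0 < r) (hq : 0 < q)
    (hSA : S ⊆ A) (hS : Set.InjOn (fun y ↦ ⌊y / r⌋) (S : Set ℝ))
    (hK : cellCount r (A + A) ≤ K * cellCount r A) (hm : 1 ≤ m)
    (hl : 2 * l + r ≤ ((m : ℝ) - 1) * q) (x : ℝ) :
    cellCount q A * #{p ∈ S | |x - p| ≤ l} ≤ 3 * m * (K * cellCount r A) := by
  have hfilter : {p ∈ S | |x - p| ≤ l} ⊆ S := Finset.filter_subset _ _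
  have hdiam : ∀ z ∈ {p ∈ S | |x - p| ≤ l}, ∀ z' ∈ {p ∈ S | |x - p| ≤ l}, |z - z'| ≤ 2 * l :=
    fun z hz z' hz' ↦ by
      linarith [abs_sub_le z x z', abs_sub_comm z x, (Finset.mem_filter.1 hz).2,
        (Finset.mem_filter.1 hz').2]
  calc cellCount q A * #{p ∈ S | |x - p| ≤ l}
      = cellCount q A * cellCount r {p ∈ S | |x - p| ≤ l} := by
        rw [cellCount_eq_card_of_injOn (hS.mono (Finset.coe_subset.2 hfilter))]
    _ ≤ 3 * m * cellCount r (A + {p ∈ S | |x - p| ≤ l}) :=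
        cellCount_mul_cellCount_le hr hq A _ hm hdiam hl
    _ ≤ 3 * m * (K * cellCount r A) := mul_le_mul_of_nonneg_left
        ((cellCount_mono (Finset.add_subset_add_left (hfilter.trans hSA))).trans hK) (by positivity)

theorem card_filter_abs_sub_lt_le_five (hr : 0 < r)
    (hS : Set.InjOn (fun y ↦ ⌊y / r⌋) (S : Set ℝ)) (c : ℝ) :
    (#{p ∈ S | |p - c| < r} : ℝ) ≤ 5 := by
  have hcover : cellCount r {p ∈ S | |p - c| < r} ≤ ((r + 2 * r) / r + 2) * cellCount r {c} :=
    cellCount_le_of_near (c := 0) hr hr hr.le fun y hy ↦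
      ⟨c, Finset.mem_singleton_self c, by simpa using (Finset.mem_filter.1 hy).2.le⟩
  have hone : cellCount r {c} ≤ 1 := by simpa using cellCount_le_card r {c}
  rw [← cellCount_eq_card_of_injOn (hS.mono (Finset.coe_subset.2 (Finset.filter_subset _ _)))]
  refine hcover.trans ((mul_le_of_le_one_right (by positivity) hone).trans (le_of_eq ?_))
  field_simp
  norm_num

theorem sum_card_filter_abs_add_lt_le_of_far {M : ℕ} {a d L k : ℝ} (hM : 0 < M) (hrR : r ≤ R)
    (hd : 0 < |d|) (hdR : |d| ≤ R) (hL0 : 0 ≤ L) (hL : 2 * r * M ≤ L * |d|)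
    (hk : (#{p ∈ S | |a - p| ≤ 2 * R} : ℝ) ≤ k) :
    ∑ j ∈ Finset.range M, (#{p ∈ S | |a - p + ((j : ℕ) : ℝ) / M * d| < r} : ℝ) ≤
      k * (L + 1) := by
  have hcount : ∀ p ∈ S, (∑ j ∈ Finset.range M,
      if |a - p + ((j : ℕ) : ℝ) / M * d| < r then (1 : ℝ) else 0) ≤
      if |a - p| ≤ 2 * R then L + 1 else 0 := fun p _ ↦ by
    split_ifs with hnear
    · rw [Finset.sum_boole]
      exact card_filter_abs_add_mul_lt_le hM hd hL0 hL
    · refine (Finset.sum_eq_zero fun j hj ↦ if_neg fun hlt ↦ hnear ?_).le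
      have hj : (j : ℝ) / M ≤ 1 :=
        div_le_one_of_le₀ (Nat.cast_le.2 (Finset.mem_range.1 hj).le) (Nat.cast_nonneg M)
      have hjd : |(j : ℝ) / M * d| ≤ R := by
        rw [abs_mul, abs_of_nonneg (by positivity)]
        exact (mul_le_of_le_one_left (abs_nonneg d) hj).trans hdR
      calc |a - p| = |(a - p + (j : ℝ) / M * d) - (j : ℝ) / M * d| := by ring_nf
        _ ≤ 2 * R := by linarith [abs_sub (a - p + (j : ℝ) / M * d) ((j : ℝ) / M * d)]
  calc ∑ j ∈ Finset.range M, (#{p ∈ S | |a - p + (j : ℝ) / M * d| < r} : ℝ)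
      = ∑ p ∈ S, ∑ j ∈ Finset.range M,
          if |a - p + (j : ℝ) / M * d| < r then (1 : ℝ) else 0 := by
        rw [Finset.sum_comm]
        simp only [Finset.sum_boole]
    _ ≤ ∑ p ∈ S, if |a - p| ≤ 2 * R then L + 1 else 0 := Finset.sum_le_sum hcount
    _ = #{p ∈ S | |a - p| ≤ 2 * R} * (L + 1) := by
        rw [← Finset.sum_filter, Finset.sum_const, nsmul_eq_mul]
    _ ≤ k * (L + 1) := by gcongr

theorem sum_card_filter_abs_add_lt_le_of_near (M : ℕ) {a d : ℝ} (hr : 0 < r)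
    (hS : Set.InjOn (fun y ↦ ⌊y / r⌋) (S : Set ℝ)) :
    ∑ j ∈ Finset.range M, (#{p ∈ S | |a - p + ((j : ℕ) : ℝ) / M * d| < r} : ℝ) ≤ 5 * M := by
  have hterm (j : ℕ) : (#{p ∈ S | |a - p + (j : ℝ) / M * d| < r} : ℝ) ≤ 5 := by
    convert card_filter_abs_sub_lt_le_five hr hS (a + (j : ℝ) / M * d) using 5 with p
    rw [abs_sub_comm]
    ring_nf
  calc _ ≤ ∑ _ ∈ Finset.range M, (5 : ℝ) := Finset.sum_le_sum fun j _ ↦ hterm j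
    _ = 5 * M := by rw [Finset.sum_const, Finset.card_range, nsmul_eq_mul, mul_comm]

/-- The index of the cell of length `r` containing the image of `p` under the projection
`(a, x) ↦ a + t * x`. -/
noncomputable def projectionCell (r t : ℝ) (p : ℝ × ℝ) : ℤ := ⌊(p.1 + t * p.2) / r⌋

theorem abs_sub_add_mul_sub_lt_of_projectionCell_eq {t : ℝ} {p p' : ℝ × ℝ} (hr : 0 < r)
    (h : projectionCell r t p' = projectionCell r t p) :
    |p.1 - p'.1 + t * (p.2 - p'.2)| < r := by
  convert abs_sub_lt_of_floor_div_eq hr h.symm using 2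
  ring

theorem card_image_projectionCell_le {t t' : ℝ} (hr : 0 < r) (hSA : S ⊆ A) (hTA : T ⊆ A)
    (hT : ∀ x ∈ T, ∀ x' ∈ T, |x - x'| ≤ R) (ht : |t - t'| * R ≤ 4 * r) :
    (#((S ×ˢ T).image (projectionCell r t)) : ℝ) ≤ 11 * cellCount r (A + t' • A) := by
  have hsub : (S ×ˢ T).image (projectionCell r t) ⊆ cellIndices r (S + t • T) := by
    refine Finset.image_subset_iff.2 fun p hp ↦ ?_
    obtain ⟨hp1, hp2⟩ := Finset.mem_product.1 hp
    exact floor_mem_cellIndices r (Finset.add_mem_add hp1 (Finset.smul_mem_smul_finset hp2))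
  refine (Nat.cast_le.2 (Finset.card_le_card hsub)).trans ?_
  rcases T.eq_empty_or_nonempty with rfl | ⟨x₀, hx₀⟩
  · simpa [cellIndices] using cellCount_nonneg r (A + t' • A)
  have hnear : ∀ y ∈ S + t • T, ∃ z ∈ A + t' • A, |y - (z + (t - t') * x₀)| ≤ 4 * r := by
    intro y hy
    obtain ⟨a, ha, u, hu, rfl⟩ := Finset.mem_add.1 hy
    obtain ⟨x, hx, rfl⟩ := Finset.mem_smul_finset.1 hu
    refine ⟨a + t' • x, Finset.add_mem_add (hSA ha) (Finset.smul_mem_smul_finset (hTA hx)), ?_⟩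
    calc |a + t • x - (a + t' • x + (t - t') * x₀)| = |t - t'| * |x - x₀| := by
          rw [← abs_mul, smul_eq_mul, smul_eq_mul]
          ring_nf
      _ ≤ |t - t'| * R := by gcongr; exact hT x hx x₀ hx₀
      _ ≤ 4 * r := ht
  refine (cellCount_le_of_near hr hr (by positivity) hnear).trans (le_of_eq ?_)
  congr 1
  field_simp
  norm_num

theorem sum_card_projectionCell_eq_le {M : ℕ} {L : ℝ} {p : ℝ × ℝ} (hA : A.Nonempty) (hM : 0 < M)
    (hr : 0 < r) (hrq : r ≤ q) (hqR : q ≤ R) (hL : 2 * r * M ≤ L * q)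
    (hK : cellCount r (A + A) ≤ K * cellCount r A) (hSA : S ⊆ A) (hTA : T ⊆ A)
    (hS : Set.InjOn (fun y ↦ ⌊y / r⌋) (S : Set ℝ)) (hT : Set.InjOn (fun y ↦ ⌊y / r⌋) (T : Set ℝ))
    (hTR : ∀ x ∈ T, ∀ x' ∈ T, |x - x'| ≤ R) (hp : p ∈ S ×ˢ T) :
    ∑ j ∈ Finset.range M, (#{p' ∈ S ×ˢ T |
        projectionCell r ((j : ℕ) / M) p' = projectionCell r ((j : ℕ) / M) p} : ℝ) ≤
      5 * M * (12 * (K * cellCount r A) / cellCount q A) +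
        #T * (18 * (K * cellCount r A) / cellCount R A * (L + 1)) := by
  have hq : 0 < q := hr.trans_le hrq
  have hR : 0 < R := hq.trans_le hqR
  have hL0 : 0 ≤ L := nonneg_of_mul_nonneg_left ((by positivity : 0 ≤ 2 * r * M).trans hL) hq
  let f (x' : ℝ) : ℝ :=
    ∑ j ∈ Finset.range M, (#{a ∈ S | |p.1 - a + ((j : ℕ) : ℝ) / M * (p.2 - x')| < r} : ℝ)
  have hfiber (j : ℕ) : (#{p' ∈ S ×ˢ T |
      projectionCell r ((j : ℕ) / M) p' = projectionCell r ((j : ℕ) / M) p} : ℝ) ≤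
      ∑ x' ∈ T, (#{a ∈ S | |p.1 - a + (j : ℝ) / M * (p.2 - x')| < r} : ℝ) := by
    refine (Nat.cast_le.2 (Finset.card_le_card (Finset.monotone_filter_right _ fun p' _ ↦
      abs_sub_add_mul_sub_lt_of_projectionCell_eq hr))).trans (le_of_eq ?_)
    simp only [Finset.card_filter, Nat.cast_sum, Finset.sum_product_right]
  have hnear : (#{x' ∈ T | |p.2 - x'| ≤ q} : ℝ) ≤ 12 * (K * cellCount r A) / cellCount q A := by
    rw [le_div_iff₀' (cellCount_pos hA)]
    exact (cellCount_mul_card_filter_abs_sub_le (l := q) (m := 4) hr hq hTA hT hK (by norm_num)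
      (by push_cast; linarith) p.2).trans (le_of_eq (by norm_num))
  have hfar : (#{a ∈ S | |p.1 - a| ≤ 2 * R} : ℝ) ≤ 18 * (K * cellCount r A) / cellCount R A := by
    rw [le_div_iff₀' (cellCount_pos hA)]
    exact (cellCount_mul_card_filter_abs_sub_le (l := 2 * R) (m := 6) hr hR hSA hS hK
      (by norm_num) (by push_cast; linarith) p.1).trans (le_of_eq (by norm_num))
  calc _ ≤ ∑ j ∈ Finset.range M, ∑ x' ∈ T,
          (#{a ∈ S | |p.1 - a + ((j : ℕ) : ℝ) / M * (p.2 - x')| < r} : ℝ) :=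
        Finset.sum_le_sum fun j _ ↦ hfiber j
    _ = ∑ x' ∈ T, f x' := Finset.sum_comm
    _ ≤ #{x' ∈ T | |p.2 - x'| ≤ q} * (5 * M) +
          #T * (18 * (K * cellCount r A) / cellCount R A * (L + 1)) :=
        sum_le_card_filter_mul_add_card_mul T _
          (mul_nonneg ((Nat.cast_nonneg _).trans hfar) (by linarith))
          (fun x' _ _ ↦ sum_card_filter_abs_add_lt_le_of_near M hr hS)
          fun x' hx' hlt ↦ sum_card_filter_abs_add_lt_le_of_far hM (hrq.trans hqR)
            (hq.trans (not_le.1 hlt)) (hTR _ (Finset.mem_product.1 hp).2 _ hx') hL0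
            (hL.trans (mul_le_mul_of_nonneg_left (not_le.1 hlt).le hL0)) hfar
    _ ≤ _ := by
        rw [mul_comm (5 * (M : ℝ))]
        gcongr

theorem le_of_collision_count {M X Q N NR Nq V : ℝ} (hM : 0 < M) (hX : 0 < X) (hQ : 0 ≤ Q)
    (hN : 0 < N) (hNR : 0 < NR) (hNq : 0 < Nq) (hK : 0 ≤ K) (hV : 1 ≤ V) (hNX : N ≤ NR * X)
    (h : M * (N * X) ^ 2 ≤ 11 * (Q * N) * (N * X *
      (5 * M * (12 * (K * N) / Nq) + X * (18 * (K * N) / NR * (2 * V + 1))))) :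
    M ≤ 11 * Q * (60 * M * K * (NR / Nq) + 54 * K * (N / NR) * V) := by
  have hnear : N / Nq ≤ NR / Nq * X := by
    rw [div_mul_eq_mul_div]
    gcongr
  have hcancel : M * X ≤
      11 * Q * (60 * M * K * (N / Nq) + 18 * K * (N / NR) * (2 * V + 1) * X) := by
    refine le_of_mul_le_mul_right ?_ (by positivity : 0 < N * X * N)
    linear_combination h
  refine le_of_mul_le_mul_right (hcancel.trans ?_) hX
  calc 11 * Q * (60 * M * K * (N / Nq) + 18 * K * (N / NR) * (2 * V + 1) * X)
      ≤ 11 * Q * (60 * M * K * (NR / Nq * X) + 18 * K * (N / NR) * (3 * V) * X) := by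
        gcongr
        linarith
    _ = 11 * Q * (60 * M * K * (NR / Nq) + 54 * K * (N / NR) * V) * X := by ring

-- Count collisions between the projections of `A × A₁` along the slopes `j / M`, where `A₁` is
-- the richest piece of `A` of diameter `R`: small projections force many of them, whereas a pair
-- of points at distance more than `R / V` collides for few slopes only.
theorem natCast_le_of_projections_small {M : ℕ} {Q V : ℝ} (hA : A.Nonempty) (hM : 0 < M)
    (hV : 1 ≤ V) (hVM : V ≤ M) (hR : 0 < R)
    (hK : cellCount (R * (M : ℝ)⁻¹) (A + A) ≤ K * cellCount (R * (M : ℝ)⁻¹) A)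
    (hQ : ∀ t ∈ Set.Icc (0 : ℝ) 1, ∃ t', |t - t'| ≤ 4 * (M : ℝ)⁻¹ ∧
      cellCount (R * (M : ℝ)⁻¹) (A + t' • A) ≤ Q * cellCount (R * (M : ℝ)⁻¹) A) :
    (M : ℝ) ≤ 11 * Q * (60 * M * K * (cellCount R A / cellCount (R * V⁻¹) A) +
      54 * K * (cellCount (R * (M : ℝ)⁻¹) A / cellCount R A) * V) := by
  have hM0 : (0 : ℝ) < M := Nat.cast_pos.2 hM
  set r := R * (M : ℝ)⁻¹
  have hr : 0 < r := by positivity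
  have hpos {s : ℝ} : 0 < cellCount s A := cellCount_pos hA
  have hK0 : 0 ≤ K := nonneg_of_mul_nonneg_left ((cellCount_nonneg _ _).trans hK) hpos
  have hQ0 : 0 ≤ Q := by
    obtain ⟨t', -, ht'⟩ := hQ 0 ⟨le_rfl, zero_le_one⟩
    exact nonneg_of_mul_nonneg_left ((cellCount_nonneg _ _).trans ht') hpos
  obtain ⟨A₁, hA₁A, -, hA₁R, hA₁⟩ := exists_subset_cell r hR hA
  obtain ⟨S, hSA, -, hScard, hS⟩ := exists_cell_transversal r A
  obtain ⟨T, hTA₁, -, hTcard, hT⟩ := exists_cell_transversal r A₁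
  have hTR : ∀ x ∈ T, ∀ x' ∈ T, |x - x'| ≤ R := fun x hx x' hx' ↦
    hA₁R x (hTA₁ hx) x' (hTA₁ hx')
  have himage : ∀ j ∈ Finset.range M,
      (#((S ×ˢ T).image (projectionCell r ((j : ℕ) / M))) : ℝ) ≤ 11 * (Q * cellCount r A) := by
    intro j hj
    obtain ⟨t', ht', hsmall⟩ := hQ (j / M) ⟨by positivity,
      div_le_one_of_le₀ (Nat.cast_le.2 (Finset.mem_range.1 hj).le) hM0.le⟩
    have htR : |(j : ℝ) / M - t'| * R ≤ 4 * r :=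
      (mul_le_mul_of_nonneg_right ht' hR.le).trans (le_of_eq (by ring))
    exact (card_image_projectionCell_le hr hSA (hTA₁.trans hA₁A) hTR htR).trans (by gcongr)
  have hcoll := fun p hp ↦ sum_card_projectionCell_eq_le (q := R * V⁻¹) (L := 2 * V) (p := p) hA hM
    hr (mul_le_mul_of_nonneg_left (inv_anti₀ (by linarith) hVM) hR.le)
    (mul_le_of_le_one_right hR.le (inv_le_one_of_one_le₀ hV))
    (le_of_eq (by simp only [r]; field_simp)) hK hSA (hTA₁.trans hA₁A) hS hT hTR hp
  have hsum := card_mul_sq_card_le_of_collisions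
    (mul_nonneg (by norm_num) (mul_nonneg hQ0 hpos.le)) himage hcoll
  rw [Finset.card_range, Finset.card_product, Nat.cast_mul, ← hScard] at hsum
  rw [hTcard] at hA₁
  have hT0 : (0 : ℝ) < #T := pos_of_mul_pos_right (hpos.trans_le hA₁) hpos.le
  exact le_of_collision_count hM0 hT0 hQ0 hpos hpos hpos hK0 hV hA₁ hsum

end ProjectionEnergy

section ScaleChain

variable {A : Finset ℝ} {R Q Δ t : ℝ}

theorem cellCount_mul_cellCount_le_of_add_smul {ρ : ℝ} (hA : A.Nonempty) (hΔ : 0 < Δ)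
    (ht : Δ ≤ t) (ht' : t ≤ 9 * Δ) (hρ : 0 < ρ) (hρR : ρ ≤ R)
    (hQ : cellCount (ρ * Δ) (A + t • A) ≤ Q * cellCount (ρ * Δ) A) :
    cellCount (R * Δ) A * cellCount ρ A ≤ 99 * Q * cellCount R A * cellCount (ρ * Δ) A := by
  have ht0 : 0 < t := hΔ.trans_le ht
  have hR : 0 < R := hρ.trans_le hρR
  obtain ⟨A', hA', -, hdiam, hpiece⟩ := exists_subset_cell ρ hR hA
  have hdiam' : ∀ z ∈ t • A', ∀ z' ∈ t • A', |z - z'| ≤ 9 * (R * Δ) := fun z hz z' hz' ↦ by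
    obtain ⟨a, ha, rfl⟩ := Finset.mem_smul_finset.1 hz
    obtain ⟨a', ha', rfl⟩ := Finset.mem_smul_finset.1 hz'
    rw [smul_eq_mul, smul_eq_mul, ← mul_sub, abs_mul, abs_of_pos ht0]
    calc t * |a - a'| ≤ 9 * Δ * R := by gcongr; exact hdiam a ha a' ha'
      _ = 9 * (R * Δ) := by ring
  have hscale : ρ * Δ ≤ R * Δ := by gcongr
  have hsum : cellCount (R * Δ) A * cellCount (ρ * Δ) (t • A') ≤
      33 * cellCount (ρ * Δ) (A + t • A') := by
    refine (cellCount_mul_cellCount_le (m := 11) (by positivity) (by positivity) A _ (by norm_num)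
      hdiam' (by push_cast; linarith)).trans (le_of_eq (by norm_num))
  have hsub : cellCount (ρ * Δ) (A + t • A') ≤ cellCount (ρ * Δ) (A + t • A) :=
    cellCount_mono (Finset.add_subset_add_left (Finset.smul_finset_subset_smul_finset hA'))
  have hdilate : cellCount ρ A' ≤ 3 * cellCount (ρ * Δ) (t • A') := by
    rw [show ρ * Δ = t * (ρ * Δ / t) by field_simp, cellCount_smul_of_pos ht0]
    refine cellCount_le_three_mul_of_le (by positivity) ?_ A'
    rw [div_le_iff₀ ht0]
    gcongr
  have hRΔ := cellCount_nonneg (R * Δ) A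
  have hRA := cellCount_nonneg R A
  calc cellCount (R * Δ) A * cellCount ρ A
      ≤ cellCount (R * Δ) A * (cellCount R A * (3 * cellCount (ρ * Δ) (t • A'))) := by
        gcongr
        exact hpiece.trans (by gcongr)
    _ = 3 * cellCount R A * (cellCount (R * Δ) A * cellCount (ρ * Δ) (t • A')) := by ring
    _ ≤ 3 * cellCount R A * (33 * (Q * cellCount (ρ * Δ) A)) := by
        exact mul_le_mul_of_nonneg_left (hsum.trans (by gcongr; exact hsub.trans hQ))
          (by positivity)
    _ = 99 * Q * cellCount R A * cellCount (ρ * Δ) A := by ring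

theorem cellCount_div_pow_le_of_add_smul {r₀ : ℝ} (hA : A.Nonempty) (hR : 0 < R) (hΔ : 0 < Δ)
    (hΔ1 : Δ ≤ 1) (ht : Δ ≤ t) (ht' : t ≤ 9 * Δ) (hQ0 : 0 ≤ Q)
    (hQ : ∀ r, r₀ ≤ r → cellCount r (A + t • A) ≤ Q * cellCount r A) (m : ℕ)
    (hm : r₀ ≤ R * Δ ^ m) :
    (cellCount (R * Δ) A / cellCount R A) ^ m ≤ (99 * Q) ^ m * cellCount (R * Δ ^ m) A := by
  set H := cellCount (R * Δ) A / cellCount R A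
  have hRA : 0 < cellCount R A := cellCount_pos hA
  have hH : 0 ≤ H := div_nonneg (cellCount_nonneg _ _) hRA.le
  suffices key : H ^ m * cellCount R A ≤ (99 * Q) ^ m * cellCount (R * Δ ^ m) A from
    (le_mul_of_one_le_right (by positivity) (one_le_cellCount hA)).trans key
  induction m with
  | zero => simp
  | succ m ih =>
    have hstep : H * cellCount (R * Δ ^ m) A ≤ 99 * Q * cellCount (R * Δ ^ (m + 1)) A := by
      have hmul := cellCount_mul_cellCount_le_of_add_smul (ρ := R * Δ ^ m) hA hΔ ht ht'
        (by positivity) (mul_le_of_le_one_right hR.le (pow_le_one₀ hΔ.le hΔ1))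
        (hQ _ (by rwa [mul_assoc, ← pow_succ]))
      rw [mul_assoc R, ← pow_succ] at hmul
      rw [div_mul_eq_mul_div, div_le_iff₀ hRA]
      linarith
    have hm' : r₀ ≤ R * Δ ^ m :=
      hm.trans (mul_le_mul_of_nonneg_left (pow_le_pow_of_le_one hΔ.le hΔ1 m.le_succ) hR.le)
    calc H ^ (m + 1) * cellCount R A = H * (H ^ m * cellCount R A) := by ring
      _ ≤ H * ((99 * Q) ^ m * cellCount (R * Δ ^ m) A) := mul_le_mul_of_nonneg_left (ih hm') hH
      _ = (99 * Q) ^ m * (H * cellCount (R * Δ ^ m) A) := by ring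
      _ ≤ (99 * Q) ^ m * (99 * Q * cellCount (R * Δ ^ (m + 1)) A) := by gcongr
      _ = (99 * Q) ^ (m + 1) * cellCount (R * Δ ^ (m + 1)) A := by ring

end ScaleChain

section DenseQuotients

variable {A X T : Finset ℝ} {δ K D B R : ℝ} {E : ℕ}

namespace MultiplierSystem

theorem cellCount_add_self_le (h : MultiplierSystem A δ K X) {r : ℝ} (hr : δ ≤ r) :
    cellCount r (A + A) ≤ K ^ 30 * cellCount r A := by
  simpa [Finset.singleton_zero] using h.cellCount_add_add_le r hr {0}

theorem cellCount_add_smul_div_le (h : MultiplierSystem A δ K X) {u s r : ℝ} (hD : 1 ≤ D)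
    (hu : IsMultiplier A (D * δ) (K ^ E) u) (hs : IsMultiplier A (D * δ) (K ^ E) s) (hB : 1 ≤ B)
    (hsB : B⁻¹ ≤ s) (hr : D * δ * B ≤ r) :
    cellCount r (A + (u / s) • A) ≤ 3 * K ^ (2 * E + 30) * B * cellCount r A := by
  have hδ := h.scale_pos
  have hK : 0 < K := by linarith [h.hundred_le]
  have hB0 : 0 < B := by linarith
  have hs0 : 0 < s := (inv_pos.2 hB0).trans_le hsB
  have hr0 : 0 < r := lt_of_lt_of_le (by positivity) hr
  have hsr : D * δ ≤ s * r :=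
    calc D * δ = B⁻¹ * (D * δ * B) := by field_simp
      _ ≤ s * r := mul_le_mul hsB hr (by positivity) hs0.le
  have hδsr : δ ≤ s * r := (le_mul_of_one_le_left hδ.le hD).trans hsr
  have hsplit : s • (A + (u / s) • A) = s • A + u • A := by
    rw [smul_add, smul_smul, mul_div_cancel₀ _ hs0.ne']
  have hfine : cellCount (s * r) A ≤ 3 * B * cellCount r A := by
    refine (cellCount_le_ratio_mul (by positivity) hr0 A).trans
      (mul_le_mul_of_nonneg_right ?_ (cellCount_nonneg _ _))
    have hratio : r / (s * r) ≤ B := by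
      rw [div_mul_cancel_right₀ hr0.ne']
      exact inv_le_of_inv_le₀ hB0 hsB
    linarith
  calc cellCount r (A + (u / s) • A)
      = cellCount (s * r) (s • A + u • A) := by rw [← cellCount_smul_of_pos hs0, hsplit]
    _ ≤ K ^ E * cellCount (s * r) (u • A + A) := by
        rw [add_comm (u • A)]
        exact hs (s * r) hsr (u • A)
    _ ≤ K ^ E * (K ^ E * cellCount (s * r) (A + A)) := by gcongr; exact hu (s * r) hsr A
    _ ≤ K ^ E * (K ^ E * (K ^ 30 * (3 * B * cellCount r A))) := by
        gcongr
        exact (h.cellCount_add_self_le hδsr).trans (by gcongr)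
    _ = 3 * K ^ (2 * E + 30) * B * cellCount r A := by ring

theorem exists_near_cellCount_add_smul_le (h : MultiplierSystem A δ K X) {η : ℝ} (hD : 1 ≤ D)
    (hT : ∀ x ∈ T, IsMultiplier A (D * δ) (K ^ E) x) (hB : 1 ≤ B)
    (hdense : ∀ t ∈ Set.Icc (0 : ℝ) 1, ∃ u ∈ T, ∃ s ∈ T, B⁻¹ ≤ s ∧ |u - t * s| ≤ η * s)
    (t : ℝ) (ht : t ∈ Set.Icc (0 : ℝ) 1) :
    ∃ t', |t - t'| ≤ η ∧ ∀ r, D * δ * B ≤ r →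
      cellCount r (A + t' • A) ≤ 3 * K ^ (2 * E + 30) * B * cellCount r A := by
  obtain ⟨u, hu, s, hs, hsB, hus⟩ := hdense t ht
  have hs0 : 0 < s := (inv_pos.2 (by linarith)).trans_le hsB
  refine ⟨u / s, ?_, fun r hr ↦ h.cellCount_add_smul_div_le hD (hT u hu) (hT s hs) hB hsB hr⟩
  rwa [← mul_le_mul_iff_left₀ hs0, ← abs_of_pos hs0, ← abs_mul, abs_of_pos hs0, sub_mul,
    div_mul_cancel₀ _ hs0.ne', abs_sub_comm]

end MultiplierSystem

theorem clustering_term_le {b ε N M : ℝ} {v w : ℕ} (hK : 1 ≤ K)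
    (hbK : 10 ^ 7 * K ^ (4 * E + 90) ≤ b) (hε : (w : ℝ) + 2 ≤ ε * v) (hM : 0 ≤ M)
    (hN : N ≤ (b ^ (ε * v))⁻¹) :
    11 * (3 * K ^ (2 * E + 30) * b ^ w) * (60 * M * K ^ 30 * N) ≤ M / 4 := by
  have hK90 : (1 : ℝ) ≤ K ^ (4 * E + 90) := one_le_pow₀ hK
  have hb1 : 1 ≤ b := by linarith
  have hb0 : 0 < b := by linarith
  have hNb : N * b ^ w ≤ b⁻¹ :=
    calc N * b ^ w ≤ (b ^ ((w : ℝ) + 1))⁻¹ * b ^ w := by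
          gcongr
          exact hN.trans (inv_anti₀ (by positivity)
            (Real.rpow_le_rpow_of_exponent_le hb1 (by linarith)))
      _ = b⁻¹ := by
          rw [Real.rpow_add hb0, Real.rpow_natCast, Real.rpow_one]
          field_simp
  have hKb : 10 ^ 7 * (K ^ (2 * E + 60) * (N * b ^ w)) ≤ 1 :=
    calc 10 ^ 7 * (K ^ (2 * E + 60) * (N * b ^ w)) ≤ 10 ^ 7 * (K ^ (2 * E + 60) * b⁻¹) := by gcongr
      _ ≤ 10 ^ 7 * (K ^ (4 * E + 90) * b⁻¹) := by
          gcongr <;> norm_num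
      _ ≤ b * b⁻¹ := by
          rw [← mul_assoc]
          gcongr
      _ = 1 := mul_inv_cancel₀ hb0.ne'
  calc 11 * (3 * K ^ (2 * E + 30) * b ^ w) * (60 * M * K ^ 30 * N)
      = 1980 * (K ^ (2 * E + 60) * (N * b ^ w)) * M := by ring
    _ ≤ 1 / 4 * M := by gcongr; linarith
    _ = M / 4 := by ring

theorem spreading_term_le {b σ H : ℝ} {v w z : ℕ} (hK : 1 ≤ K)
    (hbK : 10 ^ 7 * K ^ (4 * E + 90) ≤ b) (hexp : (v : ℝ) + 2 * w + 1 + σ * z ≤ z)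
    (hH : H ≤ 99 * (3 * K ^ (2 * E + 30) * b ^ w) * b ^ (σ * z)) :
    11 * (3 * K ^ (2 * E + 30) * b ^ w) * (54 * K ^ 30 * H * b ^ v) ≤ b ^ z / 4 := by
  have hK90 : (1 : ℝ) ≤ K ^ (4 * E + 90) := one_le_pow₀ hK
  have hb1 : 1 ≤ b := by linarith
  have hb0 : 0 < b := by linarith
  have hpow : b * (b ^ w * b ^ w * b ^ v * b ^ (σ * z)) ≤ b ^ z :=
    calc b * (b ^ w * b ^ w * b ^ v * b ^ (σ * z)) = b ^ ((v : ℝ) + 2 * w + 1 + σ * z) := by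
          rw [Real.rpow_add hb0, Real.rpow_add hb0, Real.rpow_add hb0, Real.rpow_one, two_mul,
            Real.rpow_add hb0, Real.rpow_natCast, Real.rpow_natCast]
          ring
      _ ≤ b ^ (z : ℝ) := Real.rpow_le_rpow_of_exponent_le hb1 hexp
      _ = b ^ z := Real.rpow_natCast b z
  calc 11 * (3 * K ^ (2 * E + 30) * b ^ w) * (54 * K ^ 30 * H * b ^ v)
      ≤ 11 * (3 * K ^ (2 * E + 30) * b ^ w) *
          (54 * K ^ 30 * (99 * (3 * K ^ (2 * E + 30) * b ^ w) * b ^ (σ * z)) * b ^ v) := by gcongr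
    _ = 529254 * K ^ (4 * E + 90) * (b ^ w * b ^ w * b ^ v * b ^ (σ * z)) := by ring
    _ ≤ b / 4 * (b ^ w * b ^ w * b ^ v * b ^ (σ * z)) := by gcongr; linarith
    _ ≤ b ^ z / 4 := by linarith

theorem MultiplierSystem.cellCount_div_le_of_chain (h : MultiplierSystem A δ K X) {Q Δ σ : ℝ}
    {b m z : ℕ} (hR : 0 < R) (hb : 5 ≤ b) (hz : 1 ≤ z) (hQ : 0 ≤ Q) (hΔ : Δ = ((b : ℝ) ^ z)⁻¹)
    (hmul : ∀ t ∈ Set.Icc (0 : ℝ) 1, ∃ t', |t - t'| ≤ 4 * Δ ∧ ∀ r, B ≤ r →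
      cellCount r (A + t' • A) ≤ Q * cellCount r A) (hm : m ≠ 0) (hmB : B ≤ R * Δ ^ m)
    (hcount : cellCount (R * Δ ^ m) A ≤ (b : ℝ) ^ (σ * z * m)) :
    cellCount (R * Δ) A / cellCount R A ≤ 99 * Q * (b : ℝ) ^ (σ * z) := by
  have hb5 : (5 : ℝ) ≤ b := by exact_mod_cast hb
  have hbz : (5 : ℝ) ≤ (b : ℝ) ^ z := hb5.trans (le_self_pow₀ (by linarith) (by lia))
  have hΔ0 : 0 < Δ := hΔ ▸ by positivity
  have hΔ5 : 5 * Δ ≤ 1 := by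
    rw [hΔ, ← div_eq_mul_inv]
    exact div_le_one_of_le₀ hbz (by positivity)
  obtain ⟨t', ht', hsmall⟩ := hmul (5 * Δ) ⟨by positivity, hΔ5⟩
  rw [abs_le] at ht'
  have hchain := cellCount_div_pow_le_of_add_smul h.nonempty hR hΔ0 (by linarith)
    (by linarith [ht'.2]) (by linarith [ht'.1]) hQ hsmall m hmB
  refine le_of_pow_le_pow_left₀ hm (by positivity) ?_
  rw [mul_pow, ← Real.rpow_natCast ((b : ℝ) ^ (σ * z)) m, ← Real.rpow_mul (by positivity)]
  exact hchain.trans (by gcongr)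

theorem MultiplierSystem.rpow_lt_cellCount_of_dense_quotients (h : MultiplierSystem A δ K X)
    {σ ε : ℝ} {b w v z m : ℕ} (hD : 1 ≤ D) (hT : ∀ x ∈ T, IsMultiplier A (D * δ) (K ^ E) x)
    (hbK : 10 ^ 7 * K ^ (4 * E + 90) ≤ b) (hR : 0 < R) (hz : 1 ≤ z) (hv : v ≤ z)
    (hdense : ∀ t ∈ Set.Icc (0 : ℝ) 1, ∃ u ∈ T, ∃ s ∈ T,
      ((b : ℝ) ^ w)⁻¹ ≤ s ∧ |u - t * s| ≤ 4 * ((b : ℝ) ^ z)⁻¹ * s)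
    (hε : (w : ℝ) + 2 ≤ ε * v) (hexp : (v : ℝ) + 2 * w + 1 + σ * z ≤ z)
    (hbranch : (b : ℝ) ^ (ε * v) * cellCount R A ≤ cellCount (R * ((b : ℝ) ^ v)⁻¹) A)
    (hm : m ≠ 0) (hmr : D * δ * (b : ℝ) ^ w ≤ R * ((b : ℝ) ^ z)⁻¹ ^ m) :
    (b : ℝ) ^ (σ * z * m) < cellCount (R * ((b : ℝ) ^ z)⁻¹ ^ m) A := by
  by_contra! hcount
  have hK1 : 1 ≤ K := by linarith [h.hundred_le]
  have hδ := h.scale_pos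
  have hb5 : (5 : ℝ) ≤ b := by linarith [one_le_pow₀ (n := 4 * E + 90) hK1]
  have hb1 : (1 : ℝ) ≤ b := by linarith
  have hbw : (1 : ℝ) ≤ (b : ℝ) ^ w := one_le_pow₀ hb1
  have hbz : (1 : ℝ) ≤ (b : ℝ) ^ z := one_le_pow₀ hb1
  have hmul := h.exists_near_cellCount_add_smul_le hD hT hbw hdense
  have hRΔ : D * δ * (b : ℝ) ^ w ≤ R * ((b : ℝ) ^ z)⁻¹ := hmr.trans
    (mul_le_mul_of_nonneg_left (pow_le_of_le_one (by positivity) (inv_le_one_of_one_le₀ hbz) hm)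
      hR.le)
  have hδR : δ ≤ R * ((b : ℝ) ^ z)⁻¹ := le_trans (by
    rw [mul_right_comm]
    exact le_mul_of_one_le_left hδ.le (one_le_mul_of_one_le_of_one_le hD hbw)) hRΔ
  have hchain := h.cellCount_div_le_of_chain hR (by exact_mod_cast hb5) hz (by positivity) rfl hmul
    hm hmr hcount
  have henergy := natCast_le_of_projections_small (M := b ^ z) (V := (b : ℝ) ^ v) (K := K ^ 30)
    (Q := 3 * K ^ (2 * E + 30) * (b : ℝ) ^ w) h.nonempty
    (Nat.pow_pos (by exact_mod_cast zero_lt_one.trans_le hb1)) (one_le_pow₀ hb1)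
    (by push_cast; exact pow_le_pow_right₀ hb1 hv) hR
    (by push_cast; exact h.cellCount_add_self_le hδR) fun t ht ↦ by
      obtain ⟨t', htt', hsmall⟩ := hmul t ht
      exact ⟨t', by exact_mod_cast htt', by push_cast; exact hsmall _ hRΔ⟩
  push_cast at henergy
  have hratio : cellCount R A / cellCount (R * ((b : ℝ) ^ v)⁻¹) A ≤ ((b : ℝ) ^ (ε * v))⁻¹ := by
    rw [div_le_iff₀ (cellCount_pos h.nonempty), inv_mul_eq_div, le_div_iff₀' (by positivity)]
    exact hbranch
  have hnear := clustering_term_le (M := (b : ℝ) ^ z) hK1 hbK hε (by positivity) hratio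
  have hfar := spreading_term_le hK1 hbK hexp hchain
  linarith

end DenseQuotients

section BranchingScale

variable {A : Finset ℝ} {δ ε : ℝ} {b : ℕ}

theorem exists_branching_scale (hδ : 0 < δ) (hb : 0 < b) (A : Finset ℝ) (ε : ℝ) (I : ℕ) :
    ∃ i : ℕ, cellCount (δ * (b : ℝ) ^ i) A * (δ * (b : ℝ) ^ i) ^ ε ≤
        cellCount (δ * (b : ℝ) ^ I) A * (δ * (b : ℝ) ^ I) ^ ε ∧
      ∀ v ≤ i, (b : ℝ) ^ (ε * v) * cellCount (δ * (b : ℝ) ^ i) A ≤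
        cellCount (δ * (b : ℝ) ^ i * ((b : ℝ) ^ v)⁻¹) A := by
  obtain ⟨i, hi, hmin⟩ := Finset.exists_min_image (Finset.range (I + 1))
    (fun j : ℕ ↦ cellCount (δ * (b : ℝ) ^ j) A * (δ * (b : ℝ) ^ j) ^ ε)
    Finset.nonempty_range_add_one
  have hb0 : (0 : ℝ) < b := by exact_mod_cast hb
  refine ⟨i, hmin I (Finset.self_mem_range_succ I), fun v hv ↦ ?_⟩
  set R := δ * (b : ℝ) ^ i with hR
  have hR0 : 0 < R := by positivity
  have hle := hmin (i - v) (Finset.mem_range.2 (by grind))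
  have hscale : δ * (b : ℝ) ^ (i - v) = R * ((b : ℝ) ^ v)⁻¹ := by
    rw [hR, mul_assoc, pow_sub₀ _ hb0.ne' hv]
  have hpow : (R * ((b : ℝ) ^ v)⁻¹) ^ ε = R ^ ε * ((b : ℝ) ^ (ε * v))⁻¹ := by
    rw [Real.mul_rpow hR0.le (by positivity), Real.inv_rpow (by positivity),
      ← Real.rpow_natCast (b : ℝ) v, ← Real.rpow_mul hb0.le, mul_comm (v : ℝ)]
  rw [hscale, hpow, mul_left_comm, mul_comm, mul_le_mul_iff_right₀ (by positivity),
    ← div_eq_mul_inv, le_div_iff₀ (by positivity)] at hle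
  rwa [mul_comm]

theorem exists_branching_scale_ge {L M C κ ξ : ℝ} (hδ : 0 < δ) (hδ1 : δ < 1) (hb : 2 ≤ b)
    (hL : 0 < L) (hC : 0 ≤ C) (hε : 0 ≤ ε) (hεκ : ε ≤ κ) (hξ : 0 ≤ ξ)
    (hA : ∀ r ∈ Set.Icc δ 1, L * r ^ (-κ) ≤ cellCount r A)
    (hfar : cellCount (δ ^ (-C)) A ≤ M)
    (hsmall : 3 * M * (δ ^ (-C) * b) ^ ε < L * δ ^ (-(ξ * (κ - ε)))) :
    ∃ i : ℕ, δ ^ ξ ≤ δ * (b : ℝ) ^ i ∧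
      ∀ v ≤ i, (b : ℝ) ^ (ε * v) * cellCount (δ * (b : ℝ) ^ i) A ≤
        cellCount (δ * (b : ℝ) ^ i * ((b : ℝ) ^ v)⁻¹) A := by
  have hb1 : (1 : ℝ) < b := by exact_mod_cast hb
  obtain ⟨n, hn, hn'⟩ := exists_nat_pow_near
    (Real.one_le_rpow_of_pos_of_le_one_of_nonpos hδ hδ1.le (by linarith : -C - 1 ≤ 0)) hb1
  rw [Real.rpow_sub_one hδ.ne', div_lt_iff₀' hδ] at hn'
  rw [Real.rpow_sub_one hδ.ne', le_div_iff₀' hδ] at hn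
  obtain ⟨i, hi, hbranch⟩ := exists_branching_scale hδ (by lia : 0 < b) A ε (n + 1)
  refine ⟨i, ?_, hbranch⟩
  set R := δ * (b : ℝ) ^ i
  have hR0 : 0 < R := by positivity
  by_contra! hRξ
  have hlower : L * δ ^ (-(ξ * (κ - ε))) ≤ cellCount R A * R ^ ε :=
    calc L * δ ^ (-(ξ * (κ - ε))) = L * (δ ^ ξ) ^ (ε - κ) := by
          rw [← Real.rpow_mul hδ.le]
          ring_nf
      _ ≤ L * R ^ (ε - κ) := mul_le_mul_of_nonneg_left
          (Real.rpow_le_rpow_of_nonpos hR0 hRξ.le (by linarith)) hL.le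
      _ = L * R ^ (-κ) * R ^ ε := by rw [mul_assoc, ← Real.rpow_add hR0, neg_add_eq_sub]
      _ ≤ cellCount R A * R ^ ε := by
          gcongr
          exact hA R ⟨le_mul_of_one_le_right hδ.le (one_le_pow₀ hb1.le),
            hRξ.le.trans (Real.rpow_le_one hδ.le hδ1.le hξ)⟩
  have hcount : cellCount (δ * (b : ℝ) ^ (n + 1)) A ≤ 3 * M :=
    (cellCount_le_three_mul_of_le (by positivity) hn'.le A).trans (by linarith)
  have htop : δ * (b : ℝ) ^ (n + 1) ≤ δ ^ (-C) * b := by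
    rw [pow_succ, ← mul_assoc]
    gcongr
  have hupper : cellCount (δ * (b : ℝ) ^ (n + 1)) A * (δ * (b : ℝ) ^ (n + 1)) ^ ε ≤
      3 * M * (δ ^ (-C) * b) ^ ε := by
    have := (cellCount_nonneg _ _).trans hcount
    gcongr
  linarith

end BranchingScale

section KeyEstimate

theorem exists_branching_exponent {ε σ : ℝ} (hε : 0 < ε) (hσ0 : 0 ≤ σ) (hσ : σ < 1) :
    ∃ J : ℕ, 2 ≤ J ∧ ∀ w z : ℕ, 1 ≤ w → J * w ≤ w + z →
      ∃ v ≤ z, (w : ℝ) + 2 ≤ ε * v ∧ (v : ℝ) + 2 * w + 1 + σ * z ≤ z := by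
  have hσ1 : 0 < 1 - σ := by linarith
  obtain ⟨J, hJ⟩ := exists_nat_ge ((3 / ε + 4) / (1 - σ))
  rw [div_le_iff₀ hσ1] at hJ
  have hJ0 : 1 ≤ J := by
    by_contra! h
    obtain rfl : J = 0 := by lia
    have : 0 < 3 / ε := by positivity
    simp only [CharP.cast_eq_zero, zero_mul] at hJ
    linarith
  refine ⟨J + 1, by lia, fun w z hw hJw ↦ ?_⟩
  have hw1 : (1 : ℝ) ≤ w := by exact_mod_cast hw
  have hJz : (J : ℝ) * w ≤ z := by exact_mod_cast (by grind : J * w ≤ z)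
  set v := ⌈((w : ℝ) + 2) / ε⌉₊
  have hv : ((w : ℝ) + 2) / ε ≤ v := Nat.le_ceil _
  have hv' : (v : ℝ) ≤ 3 / ε * w + w :=
    calc (v : ℝ) ≤ ((w : ℝ) + 2) / ε + 1 := (Nat.ceil_lt_add_one (by positivity)).le
      _ ≤ 3 / ε * w + w := by
        rw [div_mul_eq_mul_div]
        gcongr
        linarith
  have hexp : (v : ℝ) + 2 * w + 1 + σ * z ≤ z := by
    have h₁ : (3 / ε + 4) * w ≤ J * (1 - σ) * w := by gcongr
    have h₂ : (1 - σ) * (J * w) ≤ (1 - σ) * z := by gcongr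
    linarith
  refine ⟨v, ?_, (div_le_iff₀' hε).1 hv, hexp⟩
  have : (0 : ℝ) ≤ σ * z := by positivity
  exact_mod_cast (by linarith : (v : ℝ) ≤ z)

theorem exists_mul_add_le_le_mul_add {i U w z : ℕ} (hz : 1 ≤ z) (hwz : w + z ≤ U) (hU : U < i) :
    ∃ m ≠ 0, w + 1 + z * m ≤ i ∧ i ≤ z * m + U := by
  refine ⟨(i - w - 1) / z, (Nat.div_pos (by lia) hz).ne', ?_, ?_⟩
  · have := Nat.mul_div_le (i - w - 1) z
    lia
  · have := Nat.lt_mul_div_succ (i - w - 1) hz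
    grind

theorem MultiplierSystem.rpow_lt_three_mul_cellCount {A X T : Finset ℝ} {δ K D ε σ : ℝ}
    {E U b i v w z : ℕ} (h : MultiplierSystem A δ K X) (hD : 1 ≤ D)
    (hT : ∀ x ∈ T, IsMultiplier A (D * δ) (K ^ E) x) (hbK : 10 ^ 7 * K ^ (4 * E + 90) ≤ b)
    (hDb : D ≤ b) (hσ : 0 ≤ σ) (hz : 1 ≤ z) (hwz : w + z ≤ U) (hU : U < i) (hv : v ≤ z)
    (hdense : ∀ t ∈ Set.Icc (0 : ℝ) 1, ∃ u ∈ T, ∃ s ∈ T,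
      ((b : ℝ) ^ w)⁻¹ ≤ s ∧ |u - t * s| ≤ 4 * ((b : ℝ) ^ z)⁻¹ * s)
    (hε : (w : ℝ) + 2 ≤ ε * v) (hexp : (v : ℝ) + 2 * w + 1 + σ * z ≤ z)
    (hbranch : (b : ℝ) ^ (ε * v) * cellCount (δ * (b : ℝ) ^ i) A ≤
      cellCount (δ * (b : ℝ) ^ i * ((b : ℝ) ^ v)⁻¹) A) :
    (b : ℝ) ^ (σ * (i - U)) < 3 * cellCount δ A := by
  have hδ := h.scale_pos
  have hb1 : (1 : ℝ) ≤ b := hD.trans hDb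
  have hb0 : (0 : ℝ) < b := by linarith
  obtain ⟨m, hm, hmi, him⟩ := exists_mul_add_le_le_mul_add hz hwz hU
  have hscale : δ * (b : ℝ) ^ i * ((b : ℝ) ^ z)⁻¹ ^ m = δ * (b : ℝ) ^ (i - z * m) := by
    rw [inv_pow, ← pow_mul, mul_assoc, pow_sub₀ _ hb0.ne' (by lia)]
  have hmδ : D * δ * (b : ℝ) ^ w ≤ δ * (b : ℝ) ^ i * ((b : ℝ) ^ z)⁻¹ ^ m :=
    calc D * δ * (b : ℝ) ^ w ≤ b * δ * (b : ℝ) ^ w := by gcongr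
      _ = δ * (b : ℝ) ^ (w + 1) := by ring
      _ ≤ δ * (b : ℝ) ^ i * ((b : ℝ) ^ z)⁻¹ ^ m := by
        rw [hscale]
        exact mul_le_mul_of_nonneg_left (pow_le_pow_right₀ hb1 (by lia)) hδ.le
  have him' : (i : ℝ) - U ≤ z * m := sub_le_iff_le_add.2 (by exact_mod_cast him)
  calc (b : ℝ) ^ (σ * (i - U)) ≤ (b : ℝ) ^ (σ * z * m) := by
        rw [mul_assoc]
        exact Real.rpow_le_rpow_of_exponent_le hb1 (mul_le_mul_of_nonneg_left him' hσ)
    _ < cellCount (δ * (b : ℝ) ^ i * ((b : ℝ) ^ z)⁻¹ ^ m) A :=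
        h.rpow_lt_cellCount_of_dense_quotients hD hT hbK (by positivity) hz hv hdense hε hexp
          hbranch hm hmδ
    _ ≤ 3 * cellCount δ A := by
        rw [hscale]
        exact cellCount_le_three_mul_of_le hδ (le_mul_of_one_le_right hδ.le (one_le_pow₀ hb1)) A

theorem exists_rpow_lt_three_mul_cellCount {κ ε σ : ℝ} (hκ : 0 < κ) (hκ1 : κ ≤ 1) (hε : 0 < ε)
    (hσ0 : 0 ≤ σ) (hσ : σ < 1) :
    ∃ U E : ℕ, ∃ C : ℝ, 1 ≤ C ∧ ∀ (A X : Finset ℝ) (δ K : ℝ) (b i : ℕ),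
      MultiplierSystem A δ K X → C * K ^ (E + 1) ≤ b →
      (∀ n ≤ 2 * U, (b : ℝ) ^ (κ * n - 1) ≤ cellCount ((b : ℝ) ^ n)⁻¹ X) → U < i →
      (∀ v ≤ i, (b : ℝ) ^ (ε * v) * cellCount (δ * (b : ℝ) ^ i) A ≤
        cellCount (δ * (b : ℝ) ^ i * ((b : ℝ) ^ v)⁻¹) A) →
      (b : ℝ) ^ (σ * (i - U)) < 3 * cellCount δ A := by
  obtain ⟨J, hJ, hexponent⟩ := exists_branching_exponent hε hσ0 hσ
  obtain ⟨U, k, b₀, hquotients⟩ := exists_scale_quotients_dense hκ hκ1 hJ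
  obtain ⟨E, D, hD, hmultiplier⟩ := exists_isMultiplier_of_mem_ringIterate k
  have : (0 : ℝ) ≤ b₀ := b₀.cast_nonneg
  refine ⟨U, 4 * E + 89, 10 ^ 7 + b₀ + D, by linarith, fun A X δ K b i h hbK hX hUi hbranch ↦ ?_⟩
  have hKE : (1 : ℝ) ≤ K ^ (4 * E + 90) := one_le_pow₀ (by linarith [h.hundred_le])
  have hb : 10 ^ 7 + b₀ + D ≤ (b : ℝ) := (le_mul_of_one_le_right (by positivity) hKE).trans hbK
  obtain ⟨w, y, hw, hJw, hyU, hdense⟩ := hquotients b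
    (by exact_mod_cast (by linarith : (b₀ : ℝ) ≤ b)) X h.mem_Icc hX
  obtain ⟨z, rfl⟩ : ∃ z, y = w + z := Nat.exists_eq_add_of_le (by nlinarith)
  rw [Nat.add_sub_cancel_left] at hdense
  obtain ⟨v, hvz, hv, hvexp⟩ := hexponent w z hw hJw
  exact h.rpow_lt_three_mul_cellCount hD (hmultiplier A X δ K h)
    (le_trans (by gcongr; linarith) hbK) (by linarith) hσ0 (by nlinarith) hyU hUi hvz hdense hv
    hvexp (hbranch v (by lia))

end KeyEstimate

section DiscretisedTheorem

open Filter Topology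

theorem eventually_const_mul_rpow_lt_rpow (C : ℝ) {p q : ℝ} (h : q < p) :
    ∀ᶠ δ in 𝓝[>] (0 : ℝ), C * δ ^ p < δ ^ q := by
  have hlim : Tendsto (fun δ : ℝ ↦ C * δ ^ (p - q)) (𝓝[>] 0) (𝓝 0) := by
    have := ((Real.continuousAt_rpow_const 0 (p - q) (.inr (sub_nonneg.2 h.le))).tendsto.const_mul
      C).mono_left (nhdsWithin_le_nhds (s := Set.Ioi 0))
    rwa [Real.zero_rpow (sub_pos.2 h).ne', mul_zero] at this
  filter_upwards [hlim.eventually_lt_const one_pos, self_mem_nhdsWithin] with δ hlt hδ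
  have hδq : 0 < δ ^ q := Real.rpow_pos_of_pos hδ q
  rwa [Real.rpow_sub hδ, ← mul_div_assoc, div_lt_one hδq] at hlt

theorem eventually_exists_base (C : ℝ) {a e : ℝ} (ha : 0 ≤ a) (he : e < a) :
    ∀ᶠ δ in 𝓝[>] (0 : ℝ), ∃ b : ℕ, C * δ ^ (-e) ≤ b ∧ ∀ n : ℕ, (b : ℝ) ^ n ≤ δ ^ (-(a * n)) := by
  filter_upwards [eventually_const_mul_rpow_lt_rpow (2 * C) (neg_lt_neg he),
    Ioo_mem_nhdsGT one_pos] with δ hlarge ⟨hδ, hδ1⟩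
  have hone : 1 ≤ δ ^ (-a) :=
    Real.one_le_rpow_of_pos_of_le_one_of_nonpos hδ hδ1.le (neg_nonpos.2 ha)
  have hfloor : (1 : ℝ) ≤ ⌊δ ^ (-a)⌋₊ := by
    exact_mod_cast Nat.le_floor (by exact_mod_cast hone)
  refine ⟨⌊δ ^ (-a)⌋₊, by linarith [Nat.lt_floor_add_one (δ ^ (-a))], fun n ↦ ?_⟩
  calc (⌊δ ^ (-a)⌋₊ : ℝ) ^ n ≤ (δ ^ (-a)) ^ n := by
        gcongr
        exact Nat.floor_le (by positivity)
    _ = δ ^ (-(a * n)) := by rw [← Real.rpow_natCast, ← Real.rpow_mul hδ.le, neg_mul]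

theorem rpow_le_rpow_mul_sub {δ b σ p q : ℝ} {i U : ℕ} (hδ : 0 < δ) (hb : 0 < b) (hσ : 0 ≤ σ)
    (hi : δ ^ (-p) ≤ b ^ i) (hU : b ^ U ≤ δ ^ (-q)) :
    δ ^ (-(σ * (p - q))) ≤ b ^ (σ * (i - U)) :=
  calc δ ^ (-(σ * (p - q))) = (δ ^ (-p) / δ ^ (-q)) ^ σ := by
        rw [← Real.rpow_sub hδ, ← Real.rpow_mul hδ.le]
        ring_nf
    _ ≤ (b ^ i / b ^ U) ^ σ := by gcongr
    _ = b ^ (σ * (i - U)) := by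
        rw [← Real.rpow_natCast, ← Real.rpow_natCast, ← Real.rpow_sub hb, ← Real.rpow_mul hb.le]
        ring_nf

theorem exists_scale_exponents {κ σ C : ℝ} (hκ : 0 < κ) (hσ0 : 0 ≤ σ) (hσ : σ < 1)
    (hC : 0 ≤ C) :
    ∃ ξ ε σ' : ℝ, 0 < ξ ∧ 2 * ξ ≤ 1 ∧ 0 < ε ∧ ε ≤ κ ∧ 0 ≤ σ' ∧ σ' < 1 ∧
      (C + 1) * ε < ξ * (κ - ε) ∧ σ < σ' * (1 - ξ) := by
  have hξ : 0 < (1 - σ) / 4 := by linarith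
  have hε : 0 < (1 - σ) / 4 * κ / (C + 3) := by positivity
  have hεmul : (1 - σ) / 4 * κ / (C + 3) * (C + 3) = (1 - σ) / 4 * κ :=
    div_mul_cancel₀ _ (by positivity)
  refine ⟨(1 - σ) / 4, (1 - σ) / 4 * κ / (C + 3), (1 + σ) / 2, hξ, by linarith, hε, ?_,
    by linarith, by linarith, ?_, by nlinarith⟩
  · nlinarith
  · nlinarith

theorem rpow_le_cellCount_of_rpow_neg_le {η κ δ : ℝ} {X : Finset ℝ} {b n : ℕ} (hδ : 0 < δ)
    (hX : ∀ r ∈ Set.Icc δ 1, δ ^ η * r ^ (-κ) ≤ cellCount r X) (hb : 1 ≤ b)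
    (hηb : δ ^ (-η) ≤ b) (hbn : (b : ℝ) ^ n ≤ δ⁻¹) :
    (b : ℝ) ^ (κ * n - 1) ≤ cellCount ((b : ℝ) ^ n)⁻¹ X := by
  have hb1 : (1 : ℝ) ≤ b := by exact_mod_cast hb
  have hb0 : (0 : ℝ) < b := by linarith
  have hη : (b : ℝ)⁻¹ ≤ δ ^ η := by
    rw [Real.rpow_neg hδ.le] at hηb
    exact inv_le_of_inv_le₀ (by positivity) hηb
  calc (b : ℝ) ^ (κ * n - 1) = (b : ℝ)⁻¹ * ((b : ℝ) ^ n)⁻¹ ^ (-κ) := by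
        rw [Real.rpow_sub_one hb0.ne', Real.inv_rpow (by positivity),
          Real.rpow_neg (by positivity), inv_inv, ← Real.rpow_natCast, ← Real.rpow_mul hb0.le,
          mul_comm κ, div_eq_inv_mul]
    _ ≤ δ ^ η * ((b : ℝ) ^ n)⁻¹ ^ (-κ) := by gcongr
    _ ≤ cellCount ((b : ℝ) ^ n)⁻¹ X := hX _
        ⟨(le_inv_comm₀ hδ (by positivity)).2 hbn, inv_le_one_of_one_le₀ (one_le_pow₀ hb1)⟩

theorem exists_base_exponent {e g : ℝ} (he : 0 < e) (hg : 0 < g) (U E : ℕ) :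
    ∃ a η : ℝ, 0 < a ∧ 0 < η ∧ a * (2 * U + 1) < 1 ∧ η * (E + 1) < a ∧ 2 * η < e ∧
      a * U + η < g := by
  obtain ⟨a, ha, haU⟩ : ∃ a : ℝ, 0 < a ∧ a < min 1 g / (2 * U + 1) :=
    exists_between (div_pos (lt_min one_pos hg) (by positivity))
  rw [lt_div_iff₀ (by positivity), lt_min_iff] at haU
  have : 0 ≤ a * U := by positivity
  obtain ⟨η, hη, hηe⟩ : ∃ η : ℝ, 0 < η ∧ η < min a e / (E + 2) :=
    exists_between (div_pos (lt_min ha he) (by positivity))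
  rw [lt_div_iff₀ (by positivity), lt_min_iff] at hηe
  have : 0 ≤ η * E := by positivity
  exact ⟨a, η, ha, hη, by linarith, by linarith, by linarith, by linarith⟩

theorem three_mul_rpow_lt_of_le_inv {δ b ε η C g : ℝ} (hδ : 0 < δ) (hb : 0 ≤ b) (hbδ : b ≤ δ⁻¹)
    (hε : 0 ≤ ε) (h : 3 * δ ^ (-(η + (C + 1) * ε)) < δ ^ (η - g)) :
    3 * δ ^ (-η) * (δ ^ (-C) * b) ^ ε < δ ^ η * δ ^ (-g) :=
  calc 3 * δ ^ (-η) * (δ ^ (-C) * b) ^ ε ≤ 3 * δ ^ (-η) * (δ ^ (-C) * δ⁻¹) ^ ε := by gcongr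
    _ = 3 * δ ^ (-(η + (C + 1) * ε)) := by
        rw [← Real.rpow_neg_one, ← Real.rpow_add hδ, ← Real.rpow_mul hδ.le, mul_assoc,
          ← Real.rpow_add hδ]
        ring_nf
    _ < δ ^ (η - g) := h
    _ = δ ^ η * δ ^ (-g) := by rw [← Real.rpow_add hδ, sub_eq_add_neg]

theorem exists_mul_cellCount_lt_cellCount_add_smul {κ σ C : ℝ} (hκ : 0 < κ) (hκσ : κ ≤ σ)
    (hσ : σ < 1) (hC : 0 ≤ C) :
    ∃ η > 0, ∀ᶠ δ in 𝓝[>] (0 : ℝ), ∀ A X : Finset ℝ, A.Nonempty →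
      (∀ x ∈ X, x ∈ Set.Icc (0 : ℝ) 1) → (∃ x₀ ∈ X, δ ^ η ≤ x₀) →
      (∀ r ∈ Set.Icc δ 1, δ ^ η * r ^ (-κ) ≤ cellCount r X) →
      (∀ r ∈ Set.Icc δ 1, δ ^ η * r ^ (-κ) ≤ cellCount r A) →
      cellCount δ A ≤ δ ^ (-(σ + η)) → cellCount (δ ^ (-C)) A ≤ δ ^ (-η) →
      ∃ x ∈ X, δ ^ (-η) * cellCount δ A < cellCount δ (A + x • A) := by
  obtain ⟨ξ, ε, σ', hξ, hξ1, hε, hεκ, hσ'0, hσ', hεξ, hσξ⟩ :=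
    exists_scale_exponents hκ (hκ.le.trans hκσ) hσ hC
  obtain ⟨U, E, M, hM, hkey⟩ := exists_rpow_lt_three_mul_cellCount hκ (by linarith) hε hσ'0 hσ'
  obtain ⟨a, η, ha, hη, haU, hηE, hηξ, haη⟩ :=
    exists_base_exponent (sub_pos.2 hεξ) (sub_pos.2 hσξ) U E
  have hσ'U : σ' * (a * U) ≤ a * U := mul_le_of_le_one_left (by positivity) hσ'.le
  refine ⟨η, hη, ?_⟩
  filter_upwards [eventually_const_mul_rpow_lt_rpow 100 (neg_lt_zero.2 hη),
    eventually_const_mul_rpow_lt_rpow 3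
      (by linarith : η - ξ * (κ - ε) < -(η + (C + 1) * ε)),
    eventually_const_mul_rpow_lt_rpow 3
      (by linarith : -(σ' * (1 - ξ - a * U)) < -(σ + η)),
    eventually_exists_base M ha.le hηE, Ioo_mem_nhdsGT one_pos]
    with δ h100 hbranching hcount ⟨b, hMb, hbpow⟩ ⟨hδ, hδ1⟩
      A X hA hX ⟨x₀, hx₀, hx₀δ⟩ hXκ hAκ hAσ hAC
  by_contra! hsmall
  rw [Real.rpow_zero, mul_one] at h100
  have hsystem := MultiplierSystem.of_cellCount_add_smul_le hA hδ h100.le hX hx₀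
    (by rwa [Real.rpow_neg hδ.le, one_div, inv_inv]) hsmall
  rw [← neg_mul, ← Nat.cast_add_one, Real.rpow_mul_natCast hδ.le] at hMb
  have hKb : δ ^ (-η) ≤ b := le_trans (le_trans (le_self_pow₀ (by linarith) (by lia))
    (le_mul_of_one_le_left (by positivity) hM)) hMb
  have hb : 100 ≤ b := by exact_mod_cast h100.le.trans hKb
  have hbδ {n : ℕ} (hn : n ≤ 2 * U + 1) : (b : ℝ) ^ n ≤ δ⁻¹ := by
    rw [← Real.rpow_neg_one]
    refine (hbpow n).trans (Real.rpow_le_rpow_of_exponent_ge hδ hδ1.le (neg_le_neg ?_))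
    exact le_trans (mul_le_mul_of_nonneg_left (by exact_mod_cast hn) ha.le) haU.le
  obtain ⟨i, hi, hbranch⟩ := exists_branching_scale_ge hδ hδ1 (by lia : 2 ≤ b)
    (Real.rpow_pos_of_pos hδ η) hC hε.le hεκ hξ.le hAκ hAC (three_mul_rpow_lt_of_le_inv hδ
      b.cast_nonneg (by simpa only [pow_one] using hbδ (n := 1) (by lia)) hε.le hbranching)
  rw [← div_le_iff₀' hδ, ← Real.rpow_sub_one hδ.ne', ← neg_sub 1 ξ] at hi
  have hUi : U < i := by
    refine (pow_lt_pow_iff_right₀ (by exact_mod_cast (by lia : 1 < b) : 1 < (b : ℝ))).1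
      (lt_of_le_of_lt (hbpow U) (lt_of_lt_of_le ?_ hi))
    exact Real.rpow_lt_rpow_of_exponent_gt hδ hδ1 (by linarith)
  have hlower := hkey A X δ _ b i hsystem hMb
    (fun n hn ↦ rpow_le_cellCount_of_rpow_neg_le hδ hXκ (by lia) hKb (hbδ (by lia))) hUi hbranch
  have hupper := rpow_le_rpow_mul_sub (σ := σ') hδ (by positivity) hσ'0 hi (hbpow U)
  linarith

end DiscretisedTheorem

section Support

variable {X : Type*} [TopologicalSpace X] [MeasurableSpace X] {μ : Measure X}

theorem msupport_eq_support (μ : Measure X) : msupport μ = μ.support := by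
  ext x
  rw [Measure.support_eq_forall_isOpen]
  exact forall_congr' fun _ ↦ forall_comm

theorem exists_mem_support_notMem [HereditarilyLindelofSpace X] {s : Set X}
    (h : μ s < μ Set.univ) : ∃ x ∈ μ.support, x ∉ s := by
  by_contra! hs
  refine h.not_ge ?_
  calc μ Set.univ = μ (μ.support ∪ μ.supportᶜ) := by rw [Set.union_compl_self]
    _ ≤ μ μ.support + μ μ.supportᶜ := measure_union_le _ _
    _ ≤ μ s := by rw [Measure.measure_compl_support, add_zero]; exact measure_mono hs

end Support

section Volume

open scoped Finset

variable {δ : ℝ} {Y : Finset ℝ} {T : Set ℝ}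

theorem measure_le_cellCount_mul {ν : Measure ℝ} {r : ℝ} {B : ℝ≥0∞} (hr : 0 < r) (hδr : δ ≤ r)
    (hT : T ⊆ ⋃ y ∈ Y, Metric.closedBall y δ)
    (hB : ∀ y ∈ Y, ν (T ∩ Metric.closedBall y (2 * r)) ≤ B) :
    ν T ≤ ENNReal.ofReal (cellCount r Y) * B := by
  have hrepr (k : ℤ) (hk : k ∈ cellIndices r Y) : ∃ y ∈ Y, ⌊y / r⌋ = k := Finset.mem_image.1 hk
  choose! g hgY hg using hrepr
  have hcover : T ⊆ ⋃ k ∈ cellIndices r Y, T ∩ Metric.closedBall (g k) (2 * r) := by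
    intro t ht
    obtain ⟨y, hy, hty⟩ := Set.mem_iUnion₂.1 (hT ht)
    have hk := floor_mem_cellIndices r hy
    refine Set.mem_iUnion₂.2 ⟨⌊y / r⌋, hk, ht, (dist_triangle t y _).trans ?_⟩
    linarith [Metric.mem_closedBall.1 hty, abs_sub_lt_of_floor_div_eq hr (hg _ hk).symm,
      Real.dist_eq y (g ⌊y / r⌋)]
  calc ν T ≤ ∑ k ∈ cellIndices r Y, ν (T ∩ Metric.closedBall (g k) (2 * r)) :=
        (measure_mono hcover).trans (measure_biUnion_finset_le _ _)
    _ ≤ ∑ _k ∈ cellIndices r Y, B := Finset.sum_le_sum fun k hk ↦ hB _ (hgY k hk)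
    _ = ENNReal.ofReal (cellCount r Y) * B := by
        rw [Finset.sum_const, nsmul_eq_mul, cellCount, ENNReal.ofReal_natCast]

theorem volume_biUnion_closedBall_le (hδ : 0 < δ) (Y : Finset ℝ) :
    volume (⋃ y ∈ Y, Metric.closedBall y δ) ≤ ENNReal.ofReal (4 * δ * cellCount δ Y) := by
  rw [mul_comm, ENNReal.ofReal_mul (cellCount_nonneg _ _)]
  refine measure_le_cellCount_mul hδ le_rfl subset_rfl fun y _ ↦
    (measure_mono Set.inter_subset_right).trans ?_
  rw [Real.volume_closedBall]
  exact ENNReal.ofReal_le_ofReal (by linarith)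

theorem volume_biUnion_closedBall_ne_zero (hδ : 0 < δ) (hY : Y.Nonempty) :
    volume (⋃ y ∈ Y, Metric.closedBall y δ) ≠ 0 := by
  obtain ⟨y, hy⟩ := hY
  exact ((Metric.measure_closedBall_pos volume y hδ).trans_le (measure_mono
    (Set.subset_biUnion_of_mem (u := fun y ↦ Metric.closedBall y δ) hy))).ne'

theorem mul_cellCount_le_of_volume_le {V : ℝ} (hδ : 0 < δ) (hV : 0 ≤ V)
    (hT : ∀ y ∈ Y, Metric.closedBall y δ ⊆ T) (h : volume T ≤ ENNReal.ofReal V) :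
    δ * cellCount δ Y ≤ 2 * V := by
  obtain ⟨P, hPY, hcard, hsep⟩ := exists_separated_subset hδ Y (m := 4) (by norm_num)
  push_cast at hcard hsep
  have hdisj : (P : Set ℝ).PairwiseDisjoint fun y ↦ Metric.closedBall y δ := by
    intro p hp p' hp' hne
    apply Metric.closedBall_disjoint_closedBall
    rw [Real.dist_eq]
    linarith [hsep p hp p' hp' hne]
  have hP : ENNReal.ofReal (#P * (2 * δ)) ≤ ENNReal.ofReal V :=
    calc ENNReal.ofReal (#P * (2 * δ)) = volume (⋃ y ∈ P, Metric.closedBall y δ) := by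
          rw [measure_biUnion_finset hdisj fun _ _ ↦ Metric.isClosed_closedBall.measurableSet]
          simp only [Real.volume_closedBall, Finset.sum_const, nsmul_eq_mul]
          rw [ENNReal.ofReal_mul (by positivity), ENNReal.ofReal_natCast]
      _ ≤ volume T := measure_mono (Set.iUnion₂_subset fun y hy ↦ hT y (hPY hy))
      _ ≤ ENNReal.ofReal V := h
  rw [ENNReal.ofReal_le_ofReal_iff hV] at hP
  nlinarith

theorem cellCount_add_smul_le_of_volume_le {S : Finset ℝ} {K x : ℝ} (hδ : 0 < δ) (hK : 0 ≤ K)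
    (h : volume ((⋃ s ∈ S, Metric.closedBall s δ) + x • ⋃ s ∈ S, Metric.closedBall s δ) ≤
      ENNReal.ofReal K * volume (⋃ s ∈ S, Metric.closedBall s δ)) :
    cellCount δ (S + x • S) ≤ 8 * K * cellCount δ S := by
  have hS := cellCount_nonneg δ S
  have hball {s : ℝ} (hs : s ∈ S) :
      Metric.closedBall s δ ⊆ ⋃ s ∈ S, Metric.closedBall s δ :=
    Set.subset_biUnion_of_mem (u := fun s ↦ Metric.closedBall s δ) hs
  have hsum := mul_cellCount_le_of_volume_le (Y := S + x • S) hδ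
    (V := K * (4 * δ * cellCount δ S)) (by positivity) (fun y hy z hz ↦ ?_) (h.trans ?_)
  · refine le_of_mul_le_mul_left ?_ hδ
    linarith
  · obtain ⟨s, hs, u, hu, rfl⟩ := Finset.mem_add.1 hy
    obtain ⟨s', hs', rfl⟩ := Finset.mem_smul_finset.1 hu
    refine Set.mem_add.2 ⟨z - x • s', hball hs ?_, x • s',
      Set.smul_mem_smul_set (hball hs' (Metric.mem_closedBall_self hδ.le)), sub_add_cancel _ _⟩
    rwa [Metric.mem_closedBall, Real.dist_eq, sub_sub, add_comm (x • s'), ← Real.dist_eq]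
  · rw [ENNReal.ofReal_mul hK]
    gcongr
    exact volume_biUnion_closedBall_le hδ S

theorem inv_mul_rpow_le_cellCount {ν : Measure ℝ} {D κ r : ℝ} (hδ : 0 < δ) (hD : 0 < D)
    (hκ : κ ≤ 1) (hT : T ⊆ ⋃ y ∈ Y, Metric.closedBall y δ) (hT0 : ν T ≠ 0) (hT1 : ν T ≠ ⊤)
    (h : ∀ y ∈ Y, ∀ r, δ ≤ r →
      ν (T ∩ Metric.closedBall y r) ≤ ENNReal.ofReal (D * r ^ κ) * ν T) (hr : δ ≤ r) :
    (2 * D)⁻¹ * r ^ (-κ) ≤ cellCount r Y := by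
  have hr0 : 0 < r := hδ.trans_le hr
  have hcover := measure_le_cellCount_mul hr0 hr hT fun y hy ↦ h y hy (2 * r) (by linarith)
  rw [← mul_assoc, ← ENNReal.ofReal_mul (cellCount_nonneg _ _)] at hcover
  have hone : 1 ≤ cellCount r Y * (D * (2 * r) ^ κ) := by
    by_contra! hlt
    refine hcover.not_gt ?_
    calc ENNReal.ofReal (cellCount r Y * (D * (2 * r) ^ κ)) * ν T < 1 * ν T :=
          ENNReal.mul_lt_mul_left hT0 hT1 (by rwa [ENNReal.ofReal_lt_one])
      _ = ν T := one_mul _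
  rw [Real.rpow_neg hr0.le, ← mul_inv, inv_le_iff_one_le_mul₀ (by positivity)]
  calc 1 ≤ cellCount r Y * (D * (2 * r) ^ κ) := hone
    _ ≤ cellCount r Y * (D * (2 * r ^ κ)) := by
        have := cellCount_nonneg r Y
        rw [Real.mul_rpow zero_le_two hr0.le]
        gcongr
        simpa only [Real.rpow_one] using Real.rpow_le_rpow_of_exponent_le one_le_two hκ
    _ = cellCount r Y * (2 * D * r ^ κ) := by ring

theorem rpow_le_inv_two_mul_rpow_neg {η θ : ℝ} (hδ : 0 < δ) (h : 2 * δ ^ θ ≤ δ ^ η) :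
    δ ^ θ ≤ (2 * δ ^ (-η))⁻¹ := by
  rwa [Real.rpow_neg hδ.le, ← div_eq_mul_inv, inv_div, le_div_iff₀ two_pos, mul_comm]

theorem rpow_mul_rpow_neg_le_cellCount {ε η κ r : ℝ} (hδ : 0 < δ) (hY : Y.Nonempty) (hκ : κ ≤ 1)
    (hηε : 2 * δ ^ η ≤ δ ^ ε)
    (h : ∀ x ∈ ⋃ y ∈ Y, Metric.closedBall y δ, ∀ r, δ ≤ r →
      volume ((⋃ y ∈ Y, Metric.closedBall y δ) ∩ Metric.closedBall x r) ≤
        ENNReal.ofReal (δ ^ (-ε) * r ^ κ) * volume (⋃ y ∈ Y, Metric.closedBall y δ))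
    (hr : δ ≤ r) : δ ^ η * r ^ (-κ) ≤ cellCount r Y := by
  have hr0 : 0 < r := hδ.trans_le hr
  have hfin := ((volume_biUnion_closedBall_le hδ Y).trans_lt ENNReal.ofReal_lt_top).ne
  refine (mul_le_mul_of_nonneg_right (rpow_le_inv_two_mul_rpow_neg hδ hηε) (by positivity)).trans <|
    inv_mul_rpow_le_cellCount hδ (by positivity) hκ subset_rfl
      (volume_biUnion_closedBall_ne_zero hδ hY) hfin (fun y hy ↦ h y ?_) hr
  exact Set.mem_biUnion hy (Metric.mem_closedBall_self hδ.le)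

theorem cellCount_le_two_mul_rpow_of_volume_le {σ : ℝ} (hδ : 0 < δ)
    (h : volume (⋃ y ∈ Y, Metric.closedBall y δ) ≤ ENNReal.ofReal (δ ^ (1 - σ))) :
    cellCount δ Y ≤ 2 * δ ^ (-σ) := by
  have hcount := mul_cellCount_le_of_volume_le hδ (by positivity)
    (fun y hy ↦ Set.subset_biUnion_of_mem (u := fun y ↦ Metric.closedBall y δ) hy) h
  rw [sub_eq_add_neg, Real.rpow_add hδ, Real.rpow_one, mul_left_comm] at hcount
  exact le_of_mul_le_mul_left hcount hδ

end Volume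

section SeparatingDilation

open scoped Finset

variable {μ : Measure ℝ} [IsProbabilityMeasure μ] {δ R B : ℝ} {P Q S : Finset ℝ}

theorem le_abs_sub_of_notMem_closedBall {x p p' z z' : ℝ} (hδ : 0 ≤ δ) (hR : 0 < R)
    (hp : R ≤ |p - p'|) (hx : x ∉ Metric.closedBall (-(z - z') / (p - p')) (δ / R)) :
    δ ≤ |x * p + z - (x * p' + z')| := by
  contrapose! hx
  have hne : p - p' ≠ 0 := abs_pos.1 (hR.trans_le hp)
  have hdist : x - -(z - z') / (p - p') = (x * p + z - (x * p' + z')) / (p - p') := by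
    field_simp
    ring
  rw [Metric.mem_closedBall, Real.dist_eq, hdist, abs_div]
  exact div_le_div₀ hδ hx.le hR hp

theorem exists_mem_support_separated (hδ : 0 ≤ δ) (hR : 0 < R)
    (hμ : ∀ x, μ (Metric.closedBall x (δ / R)) ≤ ENNReal.ofReal B) (hB : #P ^ 4 * B < 1) :
    ∃ x ∈ μ.support, ∀ p ∈ P, ∀ p' ∈ P, R ≤ |p - p'| → ∀ z ∈ P, ∀ z' ∈ P,
      δ ≤ |x * p + z - (x * p' + z')| := by
  let quadruples := (P ×ˢ P) ×ˢ (P ×ˢ P)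
  let bad (q : (ℝ × ℝ) × (ℝ × ℝ)) : Set ℝ :=
    Metric.closedBall (-(q.1.1 - q.1.2) / (q.2.1 - q.2.2)) (δ / R)
  have hbad : μ (⋃ q ∈ quadruples, bad q) < μ Set.univ :=
    calc μ (⋃ q ∈ quadruples, bad q) ≤ ∑ q ∈ quadruples, μ (bad q) := measure_biUnion_finset_le _ _
      _ ≤ ∑ _q ∈ quadruples, ENNReal.ofReal B := Finset.sum_le_sum fun _ _ ↦ hμ _
      _ = ENNReal.ofReal (#P ^ 4 * B) := by
          rw [Finset.sum_const, nsmul_eq_mul, ENNReal.ofReal_mul (by positivity), ← Nat.cast_pow,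
            ENNReal.ofReal_natCast, Finset.card_product, Finset.card_product]
          ring_nf
      _ < μ Set.univ := by rwa [measure_univ, ENNReal.ofReal_lt_one]
  obtain ⟨x, hx, hxbad⟩ := exists_mem_support_notMem hbad
  simp only [Set.mem_iUnion₂, not_exists] at hxbad
  refine ⟨x, hx, fun p hp p' hp' hpp z hz z' hz' ↦ ?_⟩
  exact le_abs_sub_of_notMem_closedBall hδ hR hpp <| hxbad ((z, z'), (p, p')) <|
    Finset.mk_mem_product (Finset.mk_mem_product hz hz') (Finset.mk_mem_product hp hp')

theorem card_mul_cellCount_le_of_smul_separated {x : ℝ} (hδ : 0 < δ) (hP : P.Nonempty)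
    (h : ∀ p ∈ Q, ∀ p' ∈ Q, p ≠ p' → ∀ z ∈ P, ∀ z' ∈ P, δ ≤ |x * p + z - (x * p' + z')|) :
    #Q * cellCount δ P ≤ 3 * cellCount δ (x • Q + P) := by
  obtain ⟨z, hz⟩ := hP
  have hinj : Set.InjOn (x • ·) (Q : Set ℝ) := by
    intro p hp p' hp' heq
    by_contra hne
    have := h p hp p' hp' hne z hz z hz
    rw [← smul_eq_mul, ← smul_eq_mul, show x • p = x • p' from heq, sub_self, abs_zero] at this
    exact this.not_gt hδ
  rw [← Finset.card_image_of_injOn hinj]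
  refine card_mul_cellCount_le_of_separated hδ _ P fun u hu u' hu' hne ↦ ?_
  obtain ⟨p, hp, rfl⟩ := Finset.mem_image.1 hu
  obtain ⟨p', hp', rfl⟩ := Finset.mem_image.1 hu'
  exact h p hp p' hp' fun heq ↦ hne (by rw [heq])

theorem cellCount_le_five_mul_of_cellIndices_eq (hδ : 0 < δ) (hR : δ ≤ R)
    (h : cellIndices δ P = cellIndices δ S) : cellCount R S ≤ 5 * cellCount R P := by
  have hR0 : 0 < R := hδ.trans_le hR
  have hnear := cellCount_le_of_near (c := 0) (Y := S) (Z := P) hR0 hR0 hδ.le fun y hy ↦ by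
    obtain ⟨p, hp, hpy⟩ := Finset.mem_image.1 (h ▸ floor_mem_cellIndices δ hy)
    exact ⟨p, hp, by rw [add_zero]; exact (abs_sub_lt_of_floor_div_eq hδ hpy.symm).le⟩
  refine hnear.trans (mul_le_mul_of_nonneg_right ?_ (cellCount_nonneg _ _))
  have : (R + 2 * δ) / R ≤ 3 := by rw [div_le_iff₀ hR0]; linarith
  linarith

-- A dilation by `x` that keeps distinct pairs apart makes `S + x • S` as large as a product of
-- `S` at scale `δ` with `S` at scale `R`, so a small sumset forces `S` into few intervals of
-- length `R`.
theorem exists_mem_support_cellCount_le (hS : S.Nonempty) (hδ : 0 < δ) (hR : δ ≤ R)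
    (hμ : ∀ x, μ (Metric.closedBall x (δ / R)) ≤ ENNReal.ofReal B)
    (hB : cellCount δ S ^ 4 * B < 1) :
    ∃ x ∈ μ.support, ∀ M, cellCount δ (S + x • S) ≤ M * cellCount δ S →
      cellCount R S ≤ 30 * M := by
  have hR0 : 0 < R := hδ.trans_le hR
  obtain ⟨P, hPS, hcells, hcard, -⟩ := exists_cell_transversal δ S
  have hPcount : cellCount δ P = cellCount δ S := by rw [cellCount, cellCount, hcells]
  obtain ⟨Q, hQP, hQcard, hQ⟩ := exists_separated_subset hR0 P (m := 2) (by norm_num)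
  push_cast at hQcard hQ
  obtain ⟨x, hx, hsep⟩ := exists_mem_support_separated (P := P) hδ.le hR0 hμ (hcard ▸ hB)
  refine ⟨x, hx, fun M hM ↦ ?_⟩
  have hpos := cellCount_pos hS (r := δ)
  have hP : P.Nonempty := by
    rw [← Finset.card_pos]
    exact_mod_cast hcard ▸ hpos
  have hQcount : #Q * cellCount δ S ≤ 3 * M * cellCount δ S :=
    calc #Q * cellCount δ S ≤ 3 * cellCount δ (x • Q + P) := by
          rw [← hPcount]
          exact card_mul_cellCount_le_of_smul_separated hδ hP fun p hp p' hp' hne ↦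
            hsep p (hQP hp) p' (hQP hp') (by linarith [hQ p hp p' hp' hne])
      _ ≤ 3 * cellCount δ (S + x • S) := by
          rw [add_comm]
          exact mul_le_mul_of_nonneg_left (cellCount_mono (Finset.add_subset_add hPS
            (Finset.smul_finset_subset_smul_finset (hQP.trans hPS)))) zero_le_three
      _ ≤ 3 * M * cellCount δ S := by linarith
  linarith [le_of_mul_le_mul_right hQcount hpos,
    cellCount_le_five_mul_of_cellIndices_eq hδ hR hcells]

end SeparatingDilation

section FrostmanMeasure

open Filter Topology

variable {μ : Measure ℝ} [IsProbabilityMeasure μ]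

theorem exists_finset_support_inv_mul_rpow_le {D κ δ : ℝ} (hδ : 0 < δ) (hD : 0 < D) (hκ : κ ≤ 1)
    (hsupp : μ.support ⊆ Set.Icc 0 1)
    (hμ : ∀ x r, 0 < r → μ (Metric.closedBall x r) ≤ ENNReal.ofReal (D * r ^ κ))
    {x₀ : ℝ} (hx₀ : x₀ ∈ μ.support) :
    ∃ X : Finset ℝ, x₀ ∈ X ∧ ↑X ⊆ μ.support ∧
      ∀ r, δ ≤ r → (2 * D)⁻¹ * r ^ (-κ) ≤ cellCount r X := by
  obtain ⟨t, ht, htfin, htcover⟩ := Metric.finite_approx_of_totallyBounded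
    (isCompact_Icc.totallyBounded.subset hsupp) δ hδ
  lift t to Finset ℝ using htfin
  refine ⟨insert x₀ t, Finset.mem_insert_self _ _, by simp [Set.insert_subset_iff, hx₀, ht],
    fun r hr ↦ ?_⟩
  have hcover : μ.support ⊆ ⋃ y ∈ insert x₀ t, Metric.closedBall y δ :=
    htcover.trans (Set.iUnion₂_subset fun y hy ↦ Metric.ball_subset_closedBall.trans
      (Set.subset_biUnion_of_mem (u := fun y ↦ Metric.closedBall y δ)
        (Finset.mem_insert_of_mem hy)))
  have hone : μ μ.support = 1 := prob_compl_eq_zero_iff₀ Measure.nullMeasurableSet_support |>.1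
    Measure.measure_compl_support
  refine inv_mul_rpow_le_cellCount (ν := μ) hδ hD hκ hcover (by rw [hone]; exact one_ne_zero)
    (measure_ne_top _ _) (fun y _ s hs ↦ ?_) hr
  rw [hone, mul_one]
  exact (measure_mono Set.inter_subset_right).trans (hμ y s (hδ.trans_le hs))

theorem exists_mem_support_rpow_le {η θ κ δ : ℝ} (hδ : 0 < δ) (hδ1 : δ < 1) (hη : η < θ * κ)
    (hsupp : μ.support ⊆ Set.Icc 0 1)
    (hμ : ∀ x r, 0 < r → μ (Metric.closedBall x r) ≤ ENNReal.ofReal (δ ^ (-η) * r ^ κ)) :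
    ∃ x ∈ μ.support, δ ^ θ ≤ x := by
  have hsmall : μ (Metric.closedBall 0 (δ ^ θ)) < μ Set.univ := by
    refine (hμ 0 _ (by positivity)).trans_lt ?_
    rw [measure_univ, ENNReal.ofReal_lt_one, ← Real.rpow_mul hδ.le, ← Real.rpow_add hδ]
    exact Real.rpow_lt_one hδ.le hδ1 (by linarith)
  obtain ⟨x, hx, hxball⟩ := exists_mem_support_notMem hsmall
  rw [Metric.mem_closedBall, Real.dist_eq, sub_zero, abs_of_nonneg (hsupp hx).1, not_le] at hxball
  exact ⟨x, hx, hxball.le⟩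

theorem exists_mem_support_cellCount_rpow_le {η σ κ δ : ℝ} {S : Finset ℝ} (hS : S.Nonempty)
    (hδ : 0 < δ) (hδ1 : δ < 1) (hκ : 0 < κ) (hσ : σ < 1) (hη : η ≤ 1)
    (hμ : ∀ x r, 0 < r → μ (Metric.closedBall x r) ≤ ENNReal.ofReal (δ ^ (-η) * r ^ κ))
    (hSσ : cellCount δ S ≤ δ ^ (-(σ + η))) :
    ∃ x ∈ μ.support, ∀ M, cellCount δ (S + x • S) ≤ M * cellCount δ S →
      cellCount (δ ^ (-(9 / κ))) S ≤ 30 * M := by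
  have hR : δ ≤ δ ^ (-(9 / κ)) := hδ1.le.trans <|
    Real.one_le_rpow_of_pos_of_le_one_of_nonpos hδ hδ1.le (neg_nonpos.2 (by positivity))
  refine exists_mem_support_cellCount_le hS hδ hR (fun x ↦ hμ x _ (by positivity)) ?_
  have := cellCount_nonneg δ S
  calc cellCount δ S ^ 4 * (δ ^ (-η) * (δ / δ ^ (-(9 / κ))) ^ κ)
      ≤ (δ ^ (-(σ + η))) ^ 4 * (δ ^ (-η) * (δ / δ ^ (-(9 / κ))) ^ κ) := by gcongr
    _ = δ ^ (κ + 9 - 4 * σ - 5 * η) := by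
        rw [← Real.rpow_one_sub' hδ.le (by rw [sub_neg_eq_add]; positivity), ← Real.rpow_mul hδ.le,
          ← Real.rpow_mul_natCast hδ.le, ← Real.rpow_add hδ, ← Real.rpow_add hδ]
        congr 1
        push_cast
        field_simp
        ring
    _ < 1 := Real.rpow_lt_one hδ.le hδ1 (by linarith)

theorem exists_mem_support_mul_cellCount_lt {κ σ : ℝ} (hκ : 0 < κ) (hκσ : κ ≤ σ) (hσ : σ < 1) :
    ∃ η ∈ Set.Ioc (0 : ℝ) 1, ∀ᶠ δ in 𝓝[>] (0 : ℝ), ∀ S : Finset ℝ, S.Nonempty →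
      (∀ r ∈ Set.Icc δ 1, δ ^ η * r ^ (-κ) ≤ cellCount r S) →
      cellCount δ S ≤ δ ^ (-(σ + η)) →
      ∀ (μ : Measure ℝ) [IsProbabilityMeasure μ], μ.support ⊆ Set.Icc 0 1 →
      (∀ x r, 0 < r → μ (Metric.closedBall x r) ≤ ENNReal.ofReal (δ ^ (-η) * r ^ κ)) →
      ∃ x ∈ μ.support, δ ^ (-η) * cellCount δ S < cellCount δ (S + x • S) := by
  obtain ⟨θ, hθ, hθδ⟩ := exists_mul_cellCount_lt_cellCount_add_smul hκ hκσ hσ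
    (by positivity : 0 ≤ 9 / κ)
  obtain ⟨η, hη, hηθ⟩ : ∃ η, 0 < η ∧ η < min 1 (θ * κ) :=
    exists_between (lt_min one_pos (mul_pos hθ hκ))
  obtain ⟨hη1, hηθκ⟩ := lt_min_iff.1 hηθ
  have hηθ : η < θ := hηθκ.trans_le (mul_le_of_le_one_right hθ.le (hκσ.trans hσ.le))
  refine ⟨η, ⟨hη, hη1.le⟩, ?_⟩
  filter_upwards [hθδ, eventually_const_mul_rpow_lt_rpow 2 hηθ,
    eventually_const_mul_rpow_lt_rpow 30 (neg_lt_neg hηθ), Ioo_mem_nhdsGT one_pos]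
    with δ hdisc h2 h30 ⟨hδ, hδ1⟩ S hS hSκ hSσ μ _ hsupp hμ
  by_contra! hsmall
  have hpow {p q : ℝ} (h : p ≤ q) : δ ^ q ≤ δ ^ p :=
    Real.rpow_le_rpow_of_exponent_ge hδ hδ1.le h
  obtain ⟨x₀, hx₀, hx₀θ⟩ := exists_mem_support_rpow_le hδ hδ1 hηθκ hsupp hμ
  obtain ⟨x₁, hx₁, hfar⟩ :=
    exists_mem_support_cellCount_rpow_le hS hδ hδ1 hκ hσ hη1.le hμ hSσ
  obtain ⟨X, hx₀X, hX, hXκ⟩ := exists_finset_support_inv_mul_rpow_le hδ (by positivity)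
    (hκσ.trans hσ.le) hsupp hμ hx₀
  have hXθ (r : ℝ) (hr : r ∈ Set.Icc δ 1) : δ ^ θ * r ^ (-κ) ≤ cellCount r X := by
    have := hδ.trans_le hr.1
    refine le_trans ?_ (hXκ r hr.1)
    gcongr
    exact rpow_le_inv_two_mul_rpow_neg hδ h2.le
  have hSθ (r : ℝ) (hr : r ∈ Set.Icc δ 1) : δ ^ θ * r ^ (-κ) ≤ cellCount r S := by
    have := hδ.trans_le hr.1
    exact le_trans (mul_le_mul_of_nonneg_right (hpow hηθ.le) (by positivity)) (hSκ r hr)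
  obtain ⟨x, hx, hlarge⟩ := hdisc S X hS (fun x hx ↦ hsupp (hX hx)) ⟨x₀, hx₀X, hx₀θ⟩ hXθ hSθ
    (hSσ.trans (hpow (by linarith))) ((hfar _ (hsmall x₁ hx₁)).trans h30.le)
  refine hlarge.not_ge ((hsmall x (hX hx)).trans ?_)
  exact mul_le_mul_of_nonneg_right (hpow (by linarith)) (cellCount_nonneg _ _)

end FrostmanMeasure

/-- Bourgain's discretised sum-product/projection hybrid theorem: for `0 < κ ≤ σ < 1` there
are `c, ε, δ₀ ∈ (0,1]` depending only on `κ, σ` such that for `0 < δ < δ₀`, any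
`(δ, κ, δ^{−ε})`-set `A ⊆ ℝ` of measure at most `δ^{1−σ}` and any `(κ, δ^{−ε})`-Frostman
probability measure `μ` on `[0,1]`, there is `x ∈ supp μ` with
`vol(A + xA) > δ^{−c} vol(A)`. -/
theorem bourgain_ring (κ σ : ℝ) (hκ : 0 < κ) (hκσ : κ ≤ σ) (hσ : σ < 1) :
    ∃ c ε δ₀ : ℝ, c ∈ Set.Ioc (0:ℝ) 1 ∧ ε ∈ Set.Ioc (0:ℝ) 1 ∧ δ₀ ∈ Set.Ioc (0:ℝ) 1 ∧
      ∀ δ : ℝ, 0 < δ → δ < δ₀ →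
      ∀ A : Set ℝ,
        (∃ S : Finset ℝ, S.Nonempty ∧ A = ⋃ x ∈ S, Metric.closedBall x δ) →
        volume A ≤ ENNReal.ofReal (δ ^ (1 - σ)) →
        (∀ x ∈ A, ∀ r : ℝ, δ ≤ r →
          volume (A ∩ Metric.closedBall x r) ≤
            ENNReal.ofReal (δ ^ (-ε) * r ^ κ) * volume A) →
      ∀ μ : Measure ℝ, IsProbabilityMeasure μ → μ (Set.Icc (0:ℝ) 1)ᶜ = 0 →
        (∀ x r : ℝ, 0 < r →
          μ (Metric.closedBall x r) ≤ ENNReal.ofReal (δ ^ (-ε) * r ^ κ)) →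
      ∃ x ∈ msupport μ,
        ENNReal.ofReal (δ ^ (-c)) * volume A < volume (A + x • A) := by
  obtain ⟨η, ⟨hη, hη1⟩, hcount⟩ := exists_mem_support_mul_cellCount_lt hκ hκσ hσ
  obtain ⟨δ₀, hδ₀, hsub⟩ := (mem_nhdsGT_iff_exists_mem_Ioc_Ioo_subset one_pos).1 <|
    hcount.and <| (eventually_const_mul_rpow_lt_rpow 8 (by linarith : -η < -(η / 2))).and <|
      (eventually_const_mul_rpow_lt_rpow 2 (by linarith : η / 2 < η)).and
        (eventually_const_mul_rpow_lt_rpow 2 (by linarith : -(σ + η) < -σ))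
  refine ⟨η / 2, η / 2, δ₀, ⟨by linarith, by linarith⟩, ⟨by linarith, by linarith⟩, hδ₀, ?_⟩
  rintro δ hδ hδδ₀ _ ⟨S, hS, rfl⟩ hvol hAκ μ hμ hμ01 hμκ
  obtain ⟨hcount, hsum, hconc, hsize⟩ := hsub ⟨hδ, hδδ₀⟩
  have hsupp : μ.support ⊆ Set.Icc 0 1 :=
    Measure.support_subset_of_isClosed isClosed_Icc (mem_ae_iff.2 hμ01)
  have hSσ : cellCount δ S ≤ δ ^ (-(σ + η)) :=
    (cellCount_le_two_mul_rpow_of_volume_le hδ hvol).trans hsize.le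
  have hSκ (r : ℝ) (hr : r ∈ Set.Icc δ 1) : δ ^ η * r ^ (-κ) ≤ cellCount r S :=
    rpow_mul_rpow_neg_le_cellCount hδ hS (hκσ.trans hσ.le) hconc.le hAκ hr.1
  have hμη (x r : ℝ) (hr : 0 < r) :
      μ (Metric.closedBall x r) ≤ ENNReal.ofReal (δ ^ (-η) * r ^ κ) :=
    (hμκ x r hr).trans <| ENNReal.ofReal_le_ofReal <| mul_le_mul_of_nonneg_right
      (Real.rpow_le_rpow_of_exponent_ge hδ (hδδ₀.le.trans hδ₀.2) (by linarith)) (by positivity)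
  obtain ⟨x, hx, hlarge⟩ := hcount S hS hSκ hSσ μ hsupp hμη
  refine ⟨x, msupport_eq_support μ ▸ hx, ?_⟩
  by_contra! hsmall
  refine hlarge.not_ge ((cellCount_add_smul_le_of_volume_le hδ (by positivity) hsmall).trans ?_)
  exact mul_le_mul_of_nonneg_right hsum.le (cellCount_nonneg _ _)
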